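/- Let n ≥ 4 and let V ∈ L^∞(ℝⁿ) be real-valued with |V(x)| ≤ C₀⟨x⟩^{-δ} for all x ∈ ℝⁿ, for some constants C₀ > 0 and δ > (n+2)/2. Let ψ ∈ C₀^∞((0,+∞)) be real-valued. Then for every s > 1/2 there exists a constant C > 0, independent of h and f, such that for all 0 < h ≤ 1 and all f ∈ L²(ℝⁿ), ∫_{-∞}^{∞} ‖⟨x⟩^{-s} e^{itG} ψ(h²G) f‖²_{L²(ℝⁿ)} dt ≤ C h ‖f‖²_{L²(ℝⁿ)}. -/

import Mathlib

/-!
Write `G` for the operator `T`, `R(z) = (G - z)⁻¹`. Two facts carry the proof: a weighted resolvent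
estimate which is uniform up to the spectrum, and Kato's theory of smooth perturbations, which turns
it into an estimate in time.

**Resolvent estimate** (`lap_bound`). For `s = (1+γ)/2`, `0 < γ ≤ 1/2`, `λ ≥ λ₀ > 0` and `|ε| ≤ 1`,
a solution of `(G - λ - iε)u = ⟨x⟩^{-s}k` satisfies `λ‖⟨x⟩^{-s}u‖² ≤ C‖k‖²`. It is obtained by a
Carleman estimate: `u` is replaced by `v = e^{φ(|x|²)}u` with a bounded radial phase `φ`, and the
conjugated equation is paired with `2a(|x|²)Y`, `Y = x·∇v + (n-1)/2 v`. After integration by parts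
(`carleman_real`) the result is governed by the pointwise positivity of a quadratic form in `Y` and
`v` (`WRel.key`, `exists_weights`): a large parameter `τ` in the phase absorbs the potential, at any
energy `λ ≥ λ₀`, and a small parameter `ρ` pushes the error terms of the phase below the main term
`λω|v|²`, where `ω = a + 2qa'` (`q = |x|²`) is at least a multiple of `⟨x⟩^{-2s}`. The terms
containing `ε` are absorbed with the help of the real and imaginary parts of `⟨(G-λ-iε)u, u⟩`
(`energy`, `absorb`, `apriori_real`). All this is done for `u ∈ C_c^∞`, and extends to the domain of
`G` because `C_c^∞` is a core (`exists_core`).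

**From the resolvent to the propagator.** The resolvent estimate and the identity
`|ε|‖R(z)w‖² = |Im ⟨w, R(z)w⟩|`, `z = λ ± iε`, give
`|ε|‖⟨x⟩^{-s}R(λ±iε)w‖² ≤ B‖w‖²` with `B` of size `λ^{-1/2}` (`kato_bound`).
The Fourier transform in `t` of `e^{-ε|t|}e^{itG}ψ(h²G)f` is `K(λ)ψ(h²G)f` with
`K(λ) = 2εR(λ+iε)R(λ-iε)`. Since `ψ(h²·)` vanishes below some `b` of size `h^{-2}`, the norm of
`⟨x⟩^{-s}K(λ)ψ(h²G)f` is controlled by Kato's bound with `B` of size `h` when `λ ≥ b/2`, and by the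
distance to the support when `λ < b/2` (`kSym_pointwise`). By Plancherel, the damped time integral is
then at most a constant times `h‖f‖²` (`damped_smoothing`), and the
damping is removed by Fatou's lemma (`undamp`).
-/

open MeasureTheory Filter Topology Real Set

noncomputable section

abbrev Euc (n : ℕ) := EuclideanSpace ℝ (Fin n)

abbrev L2 (n : ℕ) := Lp ℂ 2 (volume : Measure (Euc n))

/-- Japanese bracket `⟨x⟩ = (1+|x|²)^{1/2}`. -/
def jb {n : ℕ} (x : Euc n) : ℝ := Real.sqrt (1 + ‖x‖ ^ 2)

/-- `⟨r⟩ = (1+r²)^{1/2}` for a real number `r`. -/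
def jbR (r : ℝ) : ℝ := Real.sqrt (1 + r ^ 2)

/-- The Euclidean Laplacian of a function. -/
def lapl {n : ℕ} (f : Euc n → ℂ) (x : Euc n) : ℂ :=
  ∑ i : Fin n,
    iteratedFDeriv ℝ 2 f x ![EuclideanSpace.single i (1 : ℝ), EuclideanSpace.single i (1 : ℝ)]

/-- `T` is the (unique) self-adjoint realization of the Schrödinger operator `-Δ + V`
on `L²(ℝⁿ)`: `T` is self-adjoint and acts as `-Δ + V` on Schwartz functions. -/
structure IsSchrodingerOp {n : ℕ} (V : Euc n → ℝ) (T : L2 n →ₗ.[ℂ] L2 n) : Prop where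
  selfAdjoint : IsSelfAdjoint T
  eq_on_schwartz : ∀ f : SchwartzMap (Euc n) ℂ,
    ∃ u : T.domain, ((u : L2 n) : Euc n → ℂ) =ᵐ[volume] ⇑f ∧
      ((T u : L2 n) : Euc n → ℂ) =ᵐ[volume] fun x => -lapl (⇑f) x + (V x : ℂ) * f x

/-- `fc` is the Borel functional calculus of the self-adjoint operator `T`:
a bounded-pointwise-continuous algebra homomorphism on bounded Borel functions
whose value on `(· - z)⁻¹` is the resolvent `(T - z)⁻¹`. -/
structure IsBorelFunctionalCalculus {n : ℕ} (T : L2 n →ₗ.[ℂ] L2 n)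
    (fc : (ℝ → ℂ) → (L2 n →L[ℂ] L2 n)) : Prop where
  map_one : fc (fun _ => 1) = ContinuousLinearMap.id ℂ (L2 n)
  map_add : ∀ f g : ℝ → ℂ, Measurable f → Measurable g → (∃ M, ∀ x, ‖f x‖ ≤ M) →
    (∃ M, ∀ x, ‖g x‖ ≤ M) → fc (fun x => f x + g x) = fc f + fc g
  map_mul : ∀ f g : ℝ → ℂ, Measurable f → Measurable g → (∃ M, ∀ x, ‖f x‖ ≤ M) →
    (∃ M, ∀ x, ‖g x‖ ≤ M) → fc (fun x => f x * g x) = (fc f).comp (fc g)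
  norm_le : ∀ (f : ℝ → ℂ) (M : ℝ), Measurable f → (∀ x, ‖f x‖ ≤ M) → ‖fc f‖ ≤ M
  tendsto_of_ptwise : ∀ (F : ℕ → ℝ → ℂ) (f : ℝ → ℂ) (M : ℝ),
    (∀ k, Measurable (F k)) → Measurable f → (∀ k x, ‖F k x‖ ≤ M) →
    (∀ x, Tendsto (fun k => F k x) atTop (𝓝 (f x))) →
    ∀ u : L2 n, Tendsto (fun k => fc (F k) u) atTop (𝓝 (fc f u))
  resolvent : ∀ z : ℂ, z.im ≠ 0 → ∀ u : L2 n,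
    ∃ v : T.domain, (v : L2 n) = fc (fun x => ((x : ℂ) - z)⁻¹) u ∧
      T v = z • (v : L2 n) + u

/-- A real-valued function of class `C₀^∞((0,+∞))`. -/
def IsCutoff (ψ : ℝ → ℝ) : Prop :=
  ContDiff ℝ (⊤ : ℕ∞) ψ ∧ HasCompactSupport ψ ∧ tsupport ψ ⊆ Set.Ioi 0

/-- A real-valued `C^∞(ℝ)` function supported in `[a,+∞)` which equals `1` on `[2a,+∞)`. -/
def IsChi (a : ℝ) (χ : ℝ → ℝ) : Prop :=
  ContDiff ℝ (⊤ : ℕ∞) χ ∧ Function.support χ ⊆ Set.Ici a ∧ ∀ x, 2 * a ≤ x → χ x = 1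

/-! ### Partial derivatives and integration by parts -/

/-- The `i`-th partial derivative of a real function on `ℝⁿ`. -/
def pd {n : ℕ} (i : Fin n) (f : Euc n → ℝ) (x : Euc n) : ℝ :=
  fderiv ℝ f x (EuclideanSpace.single i (1 : ℝ))

/-- The Euler (radial) derivative `x · ∇f`. -/
def eul {n : ℕ} (f : Euc n → ℝ) (x : Euc n) : ℝ := ∑ i, x i * pd i f x

/-- `|∇f|²`. -/
def gsq {n : ℕ} (f : Euc n → ℝ) (x : Euc n) : ℝ := ∑ i, pd i f x ^ 2

/-- The Laplacian of a real function as the sum of second partial derivatives. -/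
def lapR {n : ℕ} (f : Euc n → ℝ) (x : Euc n) : ℝ := ∑ i, pd i (pd i f) x

section PD
variable {n : ℕ}

lemma pd_add {f g : Euc n → ℝ} (i : Fin n) (x : Euc n) (hf : DifferentiableAt ℝ f x)
    (hg : DifferentiableAt ℝ g x) : pd i (fun y => f y + g y) x = pd i f x + pd i g x := by
  unfold pd
  have := (hf.hasFDerivAt.add hg.hasFDerivAt).fderiv
  erw [this]; simp

lemma pd_mul {f g : Euc n → ℝ} (i : Fin n) (x : Euc n) (hf : DifferentiableAt ℝ f x)
    (hg : DifferentiableAt ℝ g x) :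
    pd i (fun y => f y * g y) x = f x * pd i g x + pd i f x * g x := by
  unfold pd
  have := (hf.hasFDerivAt.mul hg.hasFDerivAt).fderiv
  erw [this]; simp [mul_comm]

lemma pd_const_mul {f : Euc n → ℝ} (c : ℝ) (i : Fin n) (x : Euc n)
    (hf : DifferentiableAt ℝ f x) :
    pd i (fun y => c * f y) x = c * pd i f x := by
  unfold pd
  have := (hf.hasFDerivAt.const_mul c).fderiv
  erw [this]; simp

lemma pd_sum {ι : Type*} (s : Finset ι) {f : ι → Euc n → ℝ} (i : Fin n) (x : Euc n)
    (hf : ∀ j ∈ s, DifferentiableAt ℝ (f j) x) :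
    pd i (fun y => ∑ j ∈ s, f j y) x = ∑ j ∈ s, pd i (f j) x := by
  unfold pd
  have := (HasFDerivAt.fun_sum (fun j hj => (hf j hj).hasFDerivAt)).fderiv
  rw [this]; simp

lemma contDiff_coord (j : Fin n) {m : WithTop ℕ∞} : ContDiff ℝ m (fun y : Euc n => y j) :=
  (EuclideanSpace.proj j : EuclideanSpace ℝ (Fin n) →L[ℝ] ℝ).contDiff

lemma pd_coord (i j : Fin n) (x : Euc n) :
    pd i (fun y : Euc n => y j) x = if i = j then 1 else 0 := by
  unfold pd
  have := (EuclideanSpace.proj j : EuclideanSpace ℝ (Fin n) →L[ℝ] ℝ).hasFDerivAt (x := x)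
  erw [this.fderiv]
  simp [eq_comm]

lemma contDiff_radial {c : ℝ → ℝ} {m : WithTop ℕ∞} (hc : ∀ q, 0 ≤ q → ContDiffAt ℝ m c q) :
    ContDiff ℝ m (fun x : Euc n => c (‖x‖ ^ 2)) := by
  rw [contDiff_iff_contDiffAt]
  intro x
  have h1 : ContDiffAt ℝ m c (‖x‖ ^ 2) :=
    hc _ (sq_nonneg _)
  exact ContDiffAt.comp x h1 (contDiff_norm_sq ℝ).contDiffAt

lemma norm_sq_eq_sum (x : Euc n) : ‖x‖ ^ 2 = ∑ i, x i ^ 2 := by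
  rw [EuclideanSpace.norm_sq_eq]; simp

lemma pd_radial {c : ℝ → ℝ} {c' : ℝ} (i : Fin n) (x : Euc n)
    (hc : HasDerivAt c c' (‖x‖ ^ 2)) :
    pd i (fun x : Euc n => c (‖x‖ ^ 2)) x = 2 * x i * c' := by
  unfold pd
  have h2 := (hasStrictFDerivAt_norm_sq x).hasFDerivAt
  have := (hc.comp_hasFDerivAt x h2).fderiv
  erw [this]
  simp [EuclideanSpace.inner_single_right]
  ring

lemma contDiff_pd {f : Euc n → ℝ} {m k : WithTop ℕ∞} (hf : ContDiff ℝ m f) (h : k + 1 ≤ m)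
    (i : Fin n) : ContDiff ℝ k (pd i f) := by
  unfold pd
  exact (hf.fderiv_right h).clm_apply contDiff_const

lemma hcs_pd {f : Euc n → ℝ} (hf : HasCompactSupport f) (i : Fin n) :
    HasCompactSupport (pd i f) := hf.fderiv_apply (𝕜 := ℝ) _

lemma pd_comm {f : Euc n → ℝ} (hf : ContDiff ℝ 2 f) (i j : Fin n) (x : Euc n) :
    pd i (pd j f) x = pd j (pd i f) x := by
  have hd : DifferentiableAt ℝ (fderiv ℝ f) x :=
    (hf.fderiv_right (m := 1) (by norm_num)).differentiable (by norm_num) x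
  have key : ∀ a b : Fin n, pd a (pd b f) x = fderiv ℝ (fderiv ℝ f) x
      (EuclideanSpace.single a 1) (EuclideanSpace.single b 1) := by
    intro a b
    unfold pd
    rw [fderiv_clm_apply hd (differentiableAt_const _)]
    simp
  rw [key, key]
  have := (hf.contDiffAt (x := x)).isSymmSndFDerivAt (by simp)
  exact this _ _

/-- Integration by parts for `C¹` functions one of which has compact support. -/
lemma ibp {f g : Euc n → ℝ} (hf : ContDiff ℝ 1 f) (hg : ContDiff ℝ 1 g)
    (hs : HasCompactSupport g) (i : Fin n) :
    ∫ x, f x * pd i g x = - ∫ x, pd i f x * g x := by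
  have c1 : Continuous (pd i f) := (contDiff_pd (k := 0) hf (by norm_num) i).continuous
  have c2 : Continuous (pd i g) := (contDiff_pd (k := 0) hg (by norm_num) i).continuous
  apply integral_mul_fderiv_eq_neg_fderiv_mul_of_integrable
  · exact (c1.mul hg.continuous).integrable_of_hasCompactSupport hs.mul_left
  · exact (hf.continuous.mul c2).integrable_of_hasCompactSupport (hcs_pd hs i).mul_left
  · exact (hf.continuous.mul hg.continuous).integrable_of_hasCompactSupport hs.mul_left
  · intro x _; exact hf.differentiable (by norm_num) x
  · intro x _; exact hg.differentiable (by norm_num) x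

lemma cont_pd {f : Euc n → ℝ} (hf : ContDiff ℝ 1 f) (i : Fin n) : Continuous (pd i f) :=
  (contDiff_pd (k := 0) hf (by norm_num) i).continuous

lemma contDiff_eul {f : Euc n → ℝ} {m k : WithTop ℕ∞} (hf : ContDiff ℝ m f) (h : k + 1 ≤ m) :
    ContDiff ℝ k (eul f) := by
  unfold eul
  exact ContDiff.sum fun i _ => (contDiff_coord i).mul (contDiff_pd hf h i)

lemma contDiff_gsq {f : Euc n → ℝ} {m k : WithTop ℕ∞} (hf : ContDiff ℝ m f) (h : k + 1 ≤ m) :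
    ContDiff ℝ k (gsq f) := by
  unfold gsq
  exact ContDiff.sum fun i _ => (contDiff_pd hf h i).pow 2

lemma pd_eq_zero {f : Euc n → ℝ} {x : Euc n} (hx : x ∉ tsupport f) (i : Fin n) :
    pd i f x = 0 := by
  unfold pd
  rw [fderiv_of_notMem_tsupport ℝ hx]; simp

lemma hcs_gsq {f : Euc n → ℝ} (hf : HasCompactSupport f) : HasCompactSupport (gsq f) :=
  HasCompactSupport.intro hf fun x hx => by simp [gsq, pd_eq_zero hx]

lemma hcs_eul {f : Euc n → ℝ} (hf : HasCompactSupport f) : HasCompactSupport (eul f) :=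
  HasCompactSupport.intro hf fun x hx => by simp [eul, pd_eq_zero hx]

lemma hcs_lapR {f : Euc n → ℝ} (hf : HasCompactSupport f) : HasCompactSupport (lapR f) := by
  refine HasCompactSupport.intro hf fun x hx => ?_
  unfold lapR
  refine Finset.sum_eq_zero fun i _ => pd_eq_zero (fun h => hx ?_) i
  exact (tsupport_fderiv_apply_subset ℝ _) h

lemma cont_lapR {f : Euc n → ℝ} (hf : ContDiff ℝ 2 f) : Continuous (lapR f) := by
  unfold lapR
  exact continuous_finsetSum _ fun i _ =>
    cont_pd (contDiff_pd hf (by norm_num) i) i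

/-- The divergence theorem for the radial vector field `c(|x|²) x`. -/
lemma ibp_radial {c c' : ℝ → ℝ} (hc : ∀ q, 0 ≤ q → ContDiffAt ℝ 1 c q)
    (hc' : ∀ q, 0 ≤ q → HasDerivAt c (c' q) q) {g : Euc n → ℝ} (hg : ContDiff ℝ 1 g)
    (hs : HasCompactSupport g) :
    ∫ x, c (‖x‖ ^ 2) * eul g x
      = - ∫ x, (n * c (‖x‖ ^ 2) + 2 * ‖x‖ ^ 2 * c' (‖x‖ ^ 2)) * g x := by
  have hcr := contDiff_radial (n := n) hc
  have hci : ∀ i, ContDiff ℝ 1 (fun x : Euc n => c (‖x‖ ^ 2) * x i) := fun i =>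
    hcr.mul (contDiff_coord i)
  have h1 : ∀ i (x : Euc n), pd i (fun x : Euc n => c (‖x‖ ^ 2) * x i) x
      = c (‖x‖ ^ 2) + 2 * x i ^ 2 * c' (‖x‖ ^ 2) := by
    intro i x
    rw [pd_mul i x (hcr.differentiable (by norm_num) x)
      ((contDiff_coord i (m := 1)).differentiable (by norm_num) x), pd_coord,
      pd_radial i x (hc' _ (sq_nonneg _))]
    simp; ring
  calc ∫ x, c (‖x‖ ^ 2) * eul g x
      = ∫ x, ∑ i, (c (‖x‖ ^ 2) * x i) * pd i g x := by
        congr 1; ext x; simp [eul, Finset.mul_sum, mul_assoc]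
    _ = ∑ i, ∫ x, (c (‖x‖ ^ 2) * x i) * pd i g x := by
        apply integral_finsetSum
        intro i _
        exact ((hci i).continuous.mul (cont_pd hg i)).integrable_of_hasCompactSupport
          (hcs_pd hs i).mul_left
    _ = ∑ i, - ∫ x, (pd i (fun x : Euc n => c (‖x‖ ^ 2) * x i) x) * g x := by
        congr 1; ext i; exact ibp (hci i) hg hs i
    _ = - ∫ x, ∑ i, (pd i (fun x : Euc n => c (‖x‖ ^ 2) * x i) x) * g x := by
        rw [Finset.sum_neg_distrib, integral_finsetSum]
        intro i _
        exact ((cont_pd (hci i) i).mul hg.continuous).integrable_of_hasCompactSupport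
          hs.mul_left
    _ = _ := by
        congr 2; ext x
        simp_rw [h1]
        rw [← Finset.sum_mul, Finset.sum_add_distrib]
        simp_rw [mul_assoc, mul_comm _ (c' _)]
        rw [← Finset.mul_sum, norm_sq_eq_sum x]
        simp [Finset.mul_sum, Finset.sum_mul, mul_comm]

/-- Green's formula. -/
lemma green {v W : Euc n → ℝ} (hv : ContDiff ℝ 2 v) (hs : HasCompactSupport W)
    (hW : ContDiff ℝ 1 W) :
    ∫ x, -lapR v x * W x = ∫ x, ∑ i, pd i v x * pd i W x := by
  have hvi : ∀ i, ContDiff ℝ 1 (pd i v) := fun i => contDiff_pd hv (by norm_num) i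
  rw [integral_finsetSum]
  swap
  · intro i _
    exact ((hvi i).continuous.mul (cont_pd hW i)).integrable_of_hasCompactSupport
      (hcs_pd hs i).mul_left
  simp_rw [ibp (hvi _) hW hs]
  rw [Finset.sum_neg_distrib, ← integral_finsetSum, ← integral_neg]
  · congr 1; ext x; simp [lapR, Finset.sum_mul]
  · intro i _
    exact ((cont_pd (hvi i) i).mul hW.continuous).integrable_of_hasCompactSupport hs.mul_left

lemma eul_sq {v : Euc n → ℝ} (hv : ContDiff ℝ 1 v) (x : Euc n) :
    eul (fun y => v y ^ 2) x = 2 * v x * eul v x := by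
  have hd := hv.differentiable (by norm_num) x
  unfold eul
  simp_rw [pow_two]
  simp_rw [pd_mul _ x hd hd, Finset.mul_sum]
  exact Finset.sum_congr rfl fun i _ => by ring

end PD

/-! ### Multiplier identities -/

/-- Radial weights `a(|x|²)`, `p(|x|²)`, `θ(|x|²)`, `ω(|x|²)`, given as functions of `q = |x|²`
together with the derivatives entering the Carleman identity, and the sign conditions used there. -/
structure Weights (a a1 a2 p p1 θ θ1 ω : ℝ → ℝ) : Prop where
  ca : ∀ q, 0 ≤ q → ContDiffAt ℝ 1 a q
  ca1 : ∀ q, 0 ≤ q → ContDiffAt ℝ 1 a1 q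
  cp : ∀ q, 0 ≤ q → ContDiffAt ℝ 1 p q
  cp1 : ∀ q, 0 ≤ q → ContDiffAt ℝ 0 p1 q
  ca2 : ∀ q, 0 ≤ q → ContDiffAt ℝ 0 a2 q
  cθ : ∀ q, 0 ≤ q → ContDiffAt ℝ 1 θ q
  cθ1 : ∀ q, 0 ≤ q → ContDiffAt ℝ 0 θ1 q
  cω : ∀ q, 0 ≤ q → ContDiffAt ℝ 0 ω q
  da : ∀ q, 0 ≤ q → HasDerivAt a (a1 q) q
  da1 : ∀ q, 0 ≤ q → HasDerivAt a1 (a2 q) q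
  dp : ∀ q, 0 ≤ q → HasDerivAt p (p1 q) q
  dθ : ∀ q, 0 ≤ q → HasDerivAt θ (θ1 q) q
  a1_nonpos : ∀ q, 0 ≤ q → a1 q ≤ 0
  θ_nonneg : ∀ q, 0 ≤ q → 0 ≤ θ q
  θ_le : ∀ q, 0 ≤ q → θ q * q ≤ a q + 2 * q * a1 q

lemma isub {X : Type*} [MeasurableSpace X] {μ : Measure X} {f g : X → ℝ} (hf : Integrable f μ)
    (hg : Integrable g μ) : Integrable (fun x => f x - g x) μ := hf.sub hg

section Carl
variable {n : ℕ} {a a1 a2 p p1 θ θ1 ω : ℝ → ℝ}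

lemma contRad {c : ℝ → ℝ} (hc : ∀ q, 0 ≤ q → ContDiffAt ℝ 0 c q) :
    Continuous (fun x : Euc n => c (‖x‖ ^ 2)) := (contDiff_radial hc).continuous

lemma contRad1 {c : ℝ → ℝ} (hc : ∀ q, 0 ≤ q → ContDiffAt ℝ 1 c q) :
    Continuous (fun x : Euc n => c (‖x‖ ^ 2)) := (contDiff_radial hc).continuous

lemma eul_sq_le (v : Euc n → ℝ) (x : Euc n) : eul v x ^ 2 ≤ ‖x‖ ^ 2 * gsq v x := by
  unfold eul gsq
  rw [norm_sq_eq_sum]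
  exact Finset.sum_mul_sq_le_sq_mul_sq _ _ _

/-- `∇v · ∇(x·∇v + b v) = (1 + b)|∇v|² + ½ x·∇|∇v|²`. -/
lemma grad_eul {v : Euc n → ℝ} (hv : ContDiff ℝ 2 v) (b : ℝ) (x : Euc n) :
    ∑ i, pd i v x * pd i (fun y => eul v y + b * v y) x
      = (1 + b) * gsq v x + eul (gsq v) x / 2 := by
  have hv1 : ∀ i, ContDiff ℝ 1 (pd i v) := fun i => contDiff_pd hv (by norm_num) i
  have hd : ∀ i, DifferentiableAt ℝ (pd i v) x := fun i => (hv1 i).differentiable (by norm_num) x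
  have hdv : DifferentiableAt ℝ v x := hv.differentiable (by norm_num) x
  have hco : ∀ i : Fin n, DifferentiableAt ℝ (fun y : Euc n => y i) x := fun i =>
    (contDiff_coord i (m := 1)).differentiable (by norm_num) x
  have h1 : ∀ i, pd i (fun y => eul v y + b * v y) x
      = (∑ j, x j * pd j (pd i v) x) + (1 + b) * pd i v x := by
    intro i
    rw [pd_add i x ((contDiff_eul hv (k := 1) (by norm_num)).differentiable (by norm_num) x)
      (hdv.const_mul b), pd_const_mul b i x hdv]
    have : pd i (eul v) x = ∑ j, pd i (fun y => y j * pd j v y) x := by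
      unfold eul
      exact pd_sum _ i x fun j _ => (hco j).mul (hd j)
    rw [this]
    simp_rw [pd_mul i x (hco _) (hd _), pd_coord, pd_comm hv i]
    rw [Finset.sum_add_distrib]
    simp
    ring
  have h2 : ∀ j, pd j (gsq v) x = ∑ i, 2 * (pd i v x * pd j (pd i v) x) := by
    intro j
    have : pd j (gsq v) x = ∑ i, pd j (fun y => pd i v y ^ 2) x := by
      unfold gsq
      exact pd_sum _ j x fun i _ => (hd i).pow 2
    rw [this]
    refine Finset.sum_congr rfl fun i _ => ?_
    simp_rw [pow_two]
    rw [pd_mul j x (hd i) (hd i)]; ring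
  simp_rw [h1]
  unfold eul
  simp_rw [h2]
  unfold gsq
  simp_rw [mul_add, Finset.sum_add_distrib, Finset.mul_sum]
  rw [Finset.sum_comm, add_comm]
  congr 1
  · exact Finset.sum_congr rfl fun i _ => by ring
  · rw [Finset.sum_div]
    refine Finset.sum_congr rfl fun i _ => ?_
    rw [Finset.sum_div]
    exact Finset.sum_congr rfl fun j _ => by ring

/-- The multiplier identity for the Laplacian. -/
lemma ident_lap (hw : Weights a a1 a2 p p1 θ θ1 ω) {b : ℝ} (hb : b = ((n : ℝ) - 1) / 2)
    {v : Euc n → ℝ} (hv : ContDiff ℝ 2 v) (hs : HasCompactSupport v) :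
    ∫ x, 2 * a (‖x‖ ^ 2) * (eul v x + b * v x) * (-lapR v x)
      = ∫ x, ((a (‖x‖ ^ 2) - 2 * ‖x‖ ^ 2 * a1 (‖x‖ ^ 2)) * gsq v x
          + 4 * a1 (‖x‖ ^ 2) * eul v x ^ 2
          - b * (2 * n * a1 (‖x‖ ^ 2) + 4 * ‖x‖ ^ 2 * a2 (‖x‖ ^ 2)) * v x ^ 2) := by
  have hv1 : ContDiff ℝ 1 v := hv.of_le (by norm_num)
  have hY : ContDiff ℝ 1 (fun y => eul v y + b * v y) :=
    (contDiff_eul hv (by norm_num)).add (contDiff_const.mul hv1)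
  have hYs : HasCompactSupport (fun y => eul v y + b * v y) :=
    (hcs_eul hs).add hs.mul_left
  have ha := contDiff_radial (n := n) hw.ca
  have cq : Continuous (fun x : Euc n => ‖x‖ ^ 2) := by fun_prop
  have ca := contRad1 (n := n) hw.ca
  have ca1 := contRad1 (n := n) hw.ca1
  have ca2 := contRad (n := n) hw.ca2
  have cv := hv.continuous
  have ce : Continuous (eul v) := (contDiff_eul hv (k := 1) (by norm_num)).continuous
  have hg1 : ContDiff ℝ 1 (gsq v) := contDiff_gsq hv (by norm_num)
  have cg := hg1.continuous
  have ceg : Continuous (eul (gsq v)) := (contDiff_eul hg1 (k := 0) (by norm_num)).continuous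
  have hA : ContDiff ℝ 1 (fun y : Euc n => 2 * a (‖y‖ ^ 2)) := contDiff_const.mul ha
  have hW : ContDiff ℝ 1 (fun y => 2 * a (‖y‖ ^ 2) * (eul v y + b * v y)) := hA.mul hY
  have hWs : HasCompactSupport (fun y => 2 * a (‖y‖ ^ 2) * (eul v y + b * v y)) := hYs.mul_left
  have g := green hv hWs hW
  have hpt : ∀ x : Euc n, ∑ i, pd i v x * pd i (fun y => 2 * a (‖y‖ ^ 2) * (eul v y + b * v y)) x
      = 2 * (1 + b) * a (‖x‖ ^ 2) * gsq v x + a (‖x‖ ^ 2) * eul (gsq v) x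
        + 4 * a1 (‖x‖ ^ 2) * eul v x ^ 2
        + 2 * b * a1 (‖x‖ ^ 2) * eul (fun y => v y ^ 2) x := by
    intro x
    have : ∀ i, pd i (fun y => 2 * a (‖y‖ ^ 2) * (eul v y + b * v y)) x
      = 2 * a (‖x‖ ^ 2) * pd i (fun y => eul v y + b * v y) x
        + 4 * x i * a1 (‖x‖ ^ 2) * (eul v x + b * v x) := by
      intro i
      rw [pd_mul i x (hA.differentiable (by norm_num) x) (hY.differentiable (by norm_num) x),
        pd_const_mul 2 i x (ha.differentiable (by norm_num) x),
        pd_radial i x (hw.da _ (sq_nonneg _))]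
      ring
    simp_rw [this, mul_add, Finset.sum_add_distrib]
    have e1 : ∑ i, pd i v x * (2 * a (‖x‖ ^ 2) * pd i (fun y => eul v y + b * v y) x)
        = 2 * a (‖x‖ ^ 2) * ((1 + b) * gsq v x + eul (gsq v) x / 2) := by
      rw [← grad_eul hv b x, Finset.mul_sum]
      exact Finset.sum_congr rfl fun i _ => by ring
    have e2 : ∀ z : ℝ, ∑ i, pd i v x * (4 * x i * a1 (‖x‖ ^ 2) * z)
        = 4 * a1 (‖x‖ ^ 2) * eul v x * z := by
      intro z
      unfold eul
      rw [Finset.mul_sum, Finset.sum_mul]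
      exact Finset.sum_congr rfl fun i _ => by ring
    rw [e1, e2, e2, eul_sq hv1]; ring
  have hv2 : ContDiff ℝ 1 (fun y => v y ^ 2) := hv1.pow 2
  have hv2s : HasCompactSupport (fun y => v y ^ 2) := by
    simp_rw [pow_two]; exact hs.mul_left
  have cev2 : Continuous (eul fun y => v y ^ 2) :=
    (contDiff_eul hv2 (k := 0) (by norm_num)).continuous
  have i1 := ibp_radial (n := n) hw.ca hw.da hg1 (hcs_gsq hs)
  have i2 := ibp_radial (n := n) hw.ca1 hw.da1 hv2 hv2s
  have I1 : Integrable (fun x : Euc n => 2 * (1 + b) * a (‖x‖ ^ 2) * gsq v x) :=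
    ((continuous_const.mul ca).mul cg).integrable_of_hasCompactSupport (hcs_gsq hs).mul_left
  have I2 : Integrable (fun x : Euc n => a (‖x‖ ^ 2) * eul (gsq v) x) :=
    (ca.mul ceg).integrable_of_hasCompactSupport (hcs_eul (hcs_gsq hs)).mul_left
  have hes : HasCompactSupport fun x => eul v x ^ 2 := by
    simp_rw [pow_two]; exact (hcs_eul hs).mul_left
  have I3 : Integrable (fun x : Euc n => 4 * a1 (‖x‖ ^ 2) * eul v x ^ 2) :=
    ((continuous_const.mul ca1).mul (ce.pow 2)).integrable_of_hasCompactSupport hes.mul_left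
  have I4 : Integrable (fun x : Euc n => 2 * b * a1 (‖x‖ ^ 2) * eul (fun y => v y ^ 2) x) :=
    ((continuous_const.mul ca1).mul cev2).integrable_of_hasCompactSupport (hcs_eul hv2s).mul_left
  have J2 : Integrable (fun x : Euc n =>
      (n * a (‖x‖ ^ 2) + 2 * ‖x‖ ^ 2 * a1 (‖x‖ ^ 2)) * gsq v x) :=
    (((continuous_const.mul ca).add ((continuous_const.mul cq).mul ca1)).mul cg).integrable_of_hasCompactSupport (hcs_gsq hs).mul_left
  have J4 : Integrable (fun x : Euc n =>
      2 * b * ((n * a1 (‖x‖ ^ 2) + 2 * ‖x‖ ^ 2 * a2 (‖x‖ ^ 2)) * v x ^ 2)) :=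
    (continuous_const.mul (((continuous_const.mul ca1).add ((continuous_const.mul cq).mul ca2)).mul
      (cv.pow 2))).integrable_of_hasCompactSupport hv2s.mul_left.mul_left
  calc _ = ∫ x, -lapR v x * (2 * a (‖x‖ ^ 2) * (eul v x + b * v x)) := by
        congr 1; ext x; ring
    _ = ∫ x, (2 * (1 + b) * a (‖x‖ ^ 2) * gsq v x + a (‖x‖ ^ 2) * eul (gsq v) x
        + 4 * a1 (‖x‖ ^ 2) * eul v x ^ 2
        + 2 * b * a1 (‖x‖ ^ 2) * eul (fun y => v y ^ 2) x) := by
        rw [g]; congr 1; ext x; exact hpt x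
    _ = (∫ x, 2 * (1 + b) * a (‖x‖ ^ 2) * gsq v x) + (∫ x, a (‖x‖ ^ 2) * eul (gsq v) x)
        + (∫ x, 4 * a1 (‖x‖ ^ 2) * eul v x ^ 2)
        + ∫ x, 2 * b * a1 (‖x‖ ^ 2) * eul (fun y => v y ^ 2) x := by
        rw [← integral_add I1 I2, ← integral_add (I1.fun_add I2) I3,
          ← integral_add ((I1.fun_add I2).fun_add I3) I4]
    _ = (∫ x, 2 * (1 + b) * a (‖x‖ ^ 2) * gsq v x)
        - (∫ x, (n * a (‖x‖ ^ 2) + 2 * ‖x‖ ^ 2 * a1 (‖x‖ ^ 2)) * gsq v x)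
        + (∫ x, 4 * a1 (‖x‖ ^ 2) * eul v x ^ 2)
        - ∫ x, 2 * b * ((n * a1 (‖x‖ ^ 2) + 2 * ‖x‖ ^ 2 * a2 (‖x‖ ^ 2)) * v x ^ 2) := by
        rw [i1, integral_const_mul (2 * b)]
        simp_rw [mul_assoc (2 * b)]
        rw [integral_const_mul (2 * b), i2]; ring
    _ = _ := by
        rw [← integral_sub I1 J2, ← integral_add (isub I1 J2) I3,
          ← integral_sub ((isub I1 J2).fun_add I3) J4]
        congr 1; ext x
        subst hb
        ring

/-- The multiplier identity for a radial zeroth-order term. -/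
lemma ident_zero {c c1 : ℝ → ℝ} (hc : ∀ q, 0 ≤ q → ContDiffAt ℝ 1 c q)
    (hc1 : ∀ q, 0 ≤ q → ContDiffAt ℝ 0 c1 q)
    (hd : ∀ q, 0 ≤ q → HasDerivAt c (c1 q) q) {b : ℝ}
    {v : Euc n → ℝ} (hv : ContDiff ℝ 2 v) (hs : HasCompactSupport v) :
    ∫ x : Euc n, 2 * c (‖x‖ ^ 2) * (eul v x + b * v x) * v x
      = - ∫ x, ((n - 2 * b) * c (‖x‖ ^ 2) + 2 * ‖x‖ ^ 2 * c1 (‖x‖ ^ 2)) * v x ^ 2 := by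
  have hv1 : ContDiff ℝ 1 v := hv.of_le (by norm_num)
  have hv2 : ContDiff ℝ 1 (fun y => v y ^ 2) := hv1.pow 2
  have hv2s : HasCompactSupport (fun y => v y ^ 2) := by
    simp_rw [pow_two]; exact hs.mul_left
  have cq : Continuous (fun x : Euc n => ‖x‖ ^ 2) := by fun_prop
  have cc := contRad1 (n := n) hc
  have cc1 := contRad (n := n) hc1
  have cv := hv.continuous
  have cev2 : Continuous (eul fun y => v y ^ 2) :=
    (contDiff_eul hv2 (k := 0) (by norm_num)).continuous
  have i := ibp_radial (n := n) hc hd hv2 hv2s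
  have I1 : Integrable (fun x : Euc n => c (‖x‖ ^ 2) * eul (fun y => v y ^ 2) x) :=
    (cc.mul cev2).integrable_of_hasCompactSupport (hcs_eul hv2s).mul_left
  have I2 : Integrable (fun x : Euc n => 2 * b * c (‖x‖ ^ 2) * v x ^ 2) :=
    ((continuous_const.mul cc).mul (cv.pow 2)).integrable_of_hasCompactSupport hv2s.mul_left
  have I3 : Integrable (fun x : Euc n =>
      (n * c (‖x‖ ^ 2) + 2 * ‖x‖ ^ 2 * c1 (‖x‖ ^ 2)) * v x ^ 2) :=
    (((continuous_const.mul cc).add ((continuous_const.mul cq).mul cc1)).mul (cv.pow 2)).integrable_of_hasCompactSupport hv2s.mul_left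
  calc _ = ∫ x, (c (‖x‖ ^ 2) * eul (fun y => v y ^ 2) x + 2 * b * c (‖x‖ ^ 2) * v x ^ 2) := by
        congr 1; ext x; rw [eul_sq hv1]; ring
    _ = _ := by
        rw [integral_add I1 I2, i, ← integral_neg, ← integral_add I3.fun_neg I2, ← integral_neg]
        congr 1; ext x; ring

end Carl

/-! ### The Carleman inequality -/

section Carl2
variable {n : ℕ} {a a1 a2 p p1 θ θ1 ω : ℝ → ℝ}

/-- The Carleman inequality for real functions, reduced to a pointwise inequality between
quadratic forms in `Y = x·∇v + b v` and `v`. -/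
lemma carleman_real (hw : Weights a a1 a2 p p1 θ θ1 ω) {b : ℝ} (hb : b = ((n : ℝ) - 1) / 2)
    {V : Euc n → ℝ} (hVm : Measurable V) {CV : ℝ} (hVb : ∀ x, |V x| ≤ CV) (lam : ℝ)
    (key : ∀ (x : Euc n) (Y w : ℝ),
      θ (‖x‖ ^ 2) / 2 * Y ^ 2 + lam / 2 * ω (‖x‖ ^ 2) * w ^ 2 ≤
        θ (‖x‖ ^ 2) * Y ^ 2
        + b * ((b + 1) * θ (‖x‖ ^ 2) + 2 * ‖x‖ ^ 2 * θ1 (‖x‖ ^ 2)) * w ^ 2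
        + 4 * p (‖x‖ ^ 2) * a (‖x‖ ^ 2) * Y ^ 2
        + 2 * a (‖x‖ ^ 2) * (p (‖x‖ ^ 2) + 2 * ‖x‖ ^ 2 * p1 (‖x‖ ^ 2) + V x) * w * Y
        + (lam * (a (‖x‖ ^ 2) + 2 * ‖x‖ ^ 2 * a1 (‖x‖ ^ 2))
          + (‖x‖ ^ 2 * p (‖x‖ ^ 2) ^ 2 * a (‖x‖ ^ 2)
            + 2 * ‖x‖ ^ 2 * ((p (‖x‖ ^ 2) ^ 2 + 2 * ‖x‖ ^ 2 * p (‖x‖ ^ 2) * p1 (‖x‖ ^ 2))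
              * a (‖x‖ ^ 2) + ‖x‖ ^ 2 * p (‖x‖ ^ 2) ^ 2 * a1 (‖x‖ ^ 2)))
          - b * (2 * n * a1 (‖x‖ ^ 2) + 4 * ‖x‖ ^ 2 * a2 (‖x‖ ^ 2))) * w ^ 2)
    {v : Euc n → ℝ} (hv : ContDiff ℝ 2 v) (hs : HasCompactSupport v) :
    ∫ x, (θ (‖x‖ ^ 2) / 2 * (eul v x + b * v x) ^ 2 + lam / 2 * ω (‖x‖ ^ 2) * v x ^ 2)
      ≤ ∫ x, 2 * a (‖x‖ ^ 2) * (eul v x + b * v x) *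
        (-lapR v x + 2 * p (‖x‖ ^ 2) * eul v x
          + (n * p (‖x‖ ^ 2) + 2 * ‖x‖ ^ 2 * p1 (‖x‖ ^ 2)) * v x
          - ‖x‖ ^ 2 * p (‖x‖ ^ 2) ^ 2 * v x + V x * v x - lam * v x) := by
  have cq : Continuous (fun x : Euc n => ‖x‖ ^ 2) := by fun_prop
  have ca := contRad1 (n := n) hw.ca
  have ca1 := contRad1 (n := n) hw.ca1
  have ca2 := contRad (n := n) hw.ca2
  have cp := contRad1 (n := n) hw.cp
  have cp1 := contRad (n := n) hw.cp1
  have cθ := contRad1 (n := n) hw.cθ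
  have cθ1 := contRad (n := n) hw.cθ1
  have cω := contRad (n := n) hw.cω
  have cv := hv.continuous
  have ce : Continuous (eul v) := (contDiff_eul hv (k := 1) (by norm_num)).continuous
  have cg : Continuous (gsq v) := (contDiff_gsq hv (k := 1) (by norm_num)).continuous
  have cl := cont_lapR hv
  have i0 := ident_lap hw hb hv hs
  have hcc : ∀ q, 0 ≤ q → ContDiffAt ℝ 1 (fun q => (lam + q * p q ^ 2) * a q) q := fun q hq =>
    (contDiffAt_const.add (contDiffAt_id.mul ((hw.cp q hq).pow 2))).mul (hw.ca q hq)
  have hcc1 : ∀ q, 0 ≤ q → ContDiffAt ℝ 0 (fun q => (p q ^ 2 + 2 * q * p q * p1 q) * a q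
      + (lam + q * p q ^ 2) * a1 q) q := fun q hq => by
    have h1 := (hw.cp q hq).of_le (m := 0) (by norm_num)
    have h2 := (hw.ca q hq).of_le (m := 0) (by norm_num)
    have h3 := (hw.ca1 q hq).of_le (m := 0) (by norm_num)
    have h4 := hw.cp1 q hq
    fun_prop
  have hdd : ∀ q, 0 ≤ q → HasDerivAt (fun q => (lam + q * p q ^ 2) * a q)
      ((p q ^ 2 + 2 * q * p q * p1 q) * a q + (lam + q * p q ^ 2) * a1 q) q := fun q hq => by
    have := (((hasDerivAt_id q).mul ((hw.dp q hq).pow 2)).const_add lam).mul (hw.da q hq)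
    refine this.congr_deriv ?_
    simp only [id, Pi.pow_apply, Pi.mul_apply]; push_cast; ring
  have i1 := ident_zero (n := n) hcc hcc1 hdd (b := b) hv hs
  have hc2 : ∀ q, 0 ≤ q → ContDiffAt ℝ 1 (fun q => b * θ q) q := fun q hq =>
    contDiffAt_const.mul (hw.cθ q hq)
  have hc21 : ∀ q, 0 ≤ q → ContDiffAt ℝ 0 (fun q => b * θ1 q) q := fun q hq =>
    contDiffAt_const.mul (hw.cθ1 q hq)
  have i2 := ident_zero (n := n) hc2 hc21 (fun q hq => (hw.dθ q hq).const_mul b) (b := b) hv hs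
  -- everything below is expressed through continuous functions on `ℝⁿ`
  obtain ⟨A, hA⟩ : ∃ A : Euc n → ℝ, ∀ x, a (‖x‖ ^ 2) = A x := ⟨_, fun _ => rfl⟩
  obtain ⟨A1, hA1⟩ : ∃ A : Euc n → ℝ, ∀ x, a1 (‖x‖ ^ 2) = A x := ⟨_, fun _ => rfl⟩
  obtain ⟨A2, hA2⟩ : ∃ A : Euc n → ℝ, ∀ x, a2 (‖x‖ ^ 2) = A x := ⟨_, fun _ => rfl⟩
  obtain ⟨P, hP⟩ : ∃ A : Euc n → ℝ, ∀ x, p (‖x‖ ^ 2) = A x := ⟨_, fun _ => rfl⟩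
  obtain ⟨P1, hP1⟩ : ∃ A : Euc n → ℝ, ∀ x, p1 (‖x‖ ^ 2) = A x := ⟨_, fun _ => rfl⟩
  obtain ⟨Θ, hΘ⟩ : ∃ A : Euc n → ℝ, ∀ x, θ (‖x‖ ^ 2) = A x := ⟨_, fun _ => rfl⟩
  obtain ⟨Θ1, hΘ1⟩ : ∃ A : Euc n → ℝ, ∀ x, θ1 (‖x‖ ^ 2) = A x := ⟨_, fun _ => rfl⟩
  obtain ⟨Ω, hΩ⟩ : ∃ A : Euc n → ℝ, ∀ x, ω (‖x‖ ^ 2) = A x := ⟨_, fun _ => rfl⟩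
  have g1 : ∀ x, A1 x ≤ 0 := fun x => hA1 x ▸ hw.a1_nonpos _ (sq_nonneg _)
  have g2 : ∀ x, 0 ≤ Θ x := fun x => hΘ x ▸ hw.θ_nonneg _ (sq_nonneg _)
  have g3 : ∀ x, Θ x * ‖x‖ ^ 2 ≤ A x + 2 * ‖x‖ ^ 2 * A1 x := fun x => by
    rw [← hA x, ← hA1 x, ← hΘ x]; exact hw.θ_le _ (sq_nonneg _)
  simp only [hA, hA1, hA2, hP, hP1, hΘ, hΘ1, hΩ] at *
  have cF0 : Continuous fun x => 2 * A x * (eul v x + b * v x) * (-lapR v x) := by fun_prop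
  have I0 := cF0.integrable_of_hasCompactSupport (μ := volume)
    (HasCompactSupport.mul_left (f := fun x => 2 * A x * (eul v x + b * v x))
      (f' := fun x => -lapR v x) (hcs_lapR hs).neg)
  have hz : ∀ x, x ∉ tsupport v → v x = 0 ∧ eul v x = 0 ∧ gsq v x = 0 := fun x hx =>
    ⟨image_eq_zero_of_notMem_tsupport hx, by simp [eul, pd_eq_zero hx],
      by simp [gsq, pd_eq_zero hx]⟩
  have mk : ∀ {F : Euc n → ℝ}, Continuous F → (∀ x, v x = 0 → eul v x = 0 → gsq v x = 0 → F x = 0) →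
      Integrable F := fun {F} hF h => hF.integrable_of_hasCompactSupport
    (HasCompactSupport.intro hs fun x hx => h x (hz x hx).1 (hz x hx).2.1 (hz x hx).2.2)
  have I0' : Integrable (fun x => (A x - 2 * ‖x‖ ^ 2 * A1 x) * gsq v x + 4 * A1 x * eul v x ^ 2
      - b * (2 * n * A1 x + 4 * ‖x‖ ^ 2 * A2 x) * v x ^ 2) :=
    mk (by fun_prop) (fun x h1 h2 h3 => by simp [h1, h2, h3])
  have I1 : Integrable (fun x => 2 * ((lam + ‖x‖ ^ 2 * P x ^ 2) * A x) * (eul v x + b * v x) * v x) :=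
    mk (by fun_prop) (fun x h1 h2 h3 => by simp [h1, h2])
  have I1' : Integrable (fun x => ((n - 2 * b) * ((lam + ‖x‖ ^ 2 * P x ^ 2) * A x) + 2 * ‖x‖ ^ 2 *
      ((P x ^ 2 + 2 * ‖x‖ ^ 2 * P x * P1 x) * A x + (lam + ‖x‖ ^ 2 * P x ^ 2) * A1 x)) * v x ^ 2) :=
    mk (by fun_prop) (fun x h1 h2 h3 => by simp [h1])
  have I2 : Integrable (fun x => 2 * (b * Θ x) * (eul v x + b * v x) * v x) :=
    mk (by fun_prop) (fun x h1 h2 h3 => by simp [h1, h2])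
  have I2' : Integrable (fun x => ((n - 2 * b) * (b * Θ x) + 2 * ‖x‖ ^ 2 * (b * Θ1 x)) * v x ^ 2) :=
    mk (by fun_prop) (fun x h1 h2 h3 => by simp [h1])
  have I3 : Integrable (fun x => 4 * P x * A x * (eul v x + b * v x) ^ 2
      + 2 * A x * (P x + 2 * ‖x‖ ^ 2 * P1 x) * v x * (eul v x + b * v x)) :=
    mk (by fun_prop) (fun x h1 h2 h3 => by simp [h1, h2])
  have I4 : Integrable (fun x => V x * (2 * A x * v x * (eul v x + b * v x))) := by
    refine Integrable.bdd_mul (c := CV) ?_ hVm.aestronglyMeasurable (ae_of_all _ hVb)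
    exact mk (by fun_prop) (fun x h1 h2 h3 => by simp [h1])
  have IL : Integrable (fun x => Θ x / 2 * (eul v x + b * v x) ^ 2 + lam / 2 * Ω x * v x ^ 2) :=
    mk (by fun_prop) (fun x h1 h2 h3 => by simp [h1, h2])
  have e1 := integral_add (((I0'.fun_add I3).fun_add I4).fun_add I1') (I2.fun_add I2')
  have e2 := integral_add ((I0'.fun_add I3).fun_add I4) I1'
  have e3 := integral_add (I0'.fun_add I3) I4
  have e4 := integral_add I0' I3
  have e5 := integral_add I2 I2'
  have f1 := integral_sub ((I0.fun_add I3).fun_add I4) I1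
  have f2 := integral_add (I0.fun_add I3) I4
  have f3 := integral_add I0 I3
  have hR : ∫ x, 2 * A x * (eul v x + b * v x) *
        (-lapR v x + 2 * P x * eul v x
          + (n * P x + 2 * ‖x‖ ^ 2 * P1 x) * v x
          - ‖x‖ ^ 2 * P x ^ 2 * v x + V x * v x - lam * v x)
      = ∫ x, (2 * A x * (eul v x + b * v x) * (-lapR v x) +
          (4 * P x * A x * (eul v x + b * v x) ^ 2
      + 2 * A x * (P x + 2 * ‖x‖ ^ 2 * P1 x) * v x * (eul v x + b * v x)) +
      V x * (2 * A x * v x * (eul v x + b * v x)) -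
      2 * ((lam + ‖x‖ ^ 2 * P x ^ 2) * A x) * (eul v x + b * v x) * v x) := by
    congr 1; ext x
    have : (n : ℝ) = 2 * b + 1 := by rw [hb]; ring
    rw [this]; ring
  rw [hR, f1, f2, f3, i0, i1]
  have mono := integral_mono IL ((((I0'.fun_add I3).fun_add I4).fun_add I1').fun_add
    (I2.fun_add I2')) (fun x => by
      have hk := key x (eul v x + b * v x) (v x)
      have h1 := eul_sq_le v x
      have h2 : Θ x * eul v x ^ 2 ≤
        (A x - 2 * ‖x‖ ^ 2 * A1 x) * gsq v x + 4 * A1 x * eul v x ^ 2 := by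
        have hg : 0 ≤ gsq v x := Finset.sum_nonneg fun i _ => sq_nonneg _
        have := mul_le_mul_of_nonpos_left h1 (g1 x)
        have := mul_le_mul_of_nonneg_left h1 (g2 x)
        have := mul_le_mul_of_nonneg_right (g3 x) hg
        nlinarith
      have hnb : (n : ℝ) = 2 * b + 1 := by rw [hb]; ring
      simp only [hnb] at hk ⊢
      linarith)
  linarith

end Carl2

/-! ### Algebraic inequalities for the weights -/

section Alg

/-- The relations between `E = (1+ρq)^{-1/2}`, `T = (1+ρq)^{-γ/2}` and `W = (1+q)^{-1/8}` used in
the weight inequalities. -/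
structure WRel (q ρ γ E T W : ℝ) : Prop where
  hq : 0 ≤ q
  hρ0 : 0 < ρ
  hρ1 : ρ ≤ 1 / 256
  hγ0 : 0 < γ
  hγ1 : γ ≤ 1 / 2
  hE : 0 < E
  hE1 : E ≤ 1
  hES : ρ * q * E ^ 2 = 1 - E ^ 2
  hT : E ≤ T
  hT1 : T ≤ 1
  hW : 0 < W
  hW1 : W ≤ 1
  hWQ : q * W ^ 8 = 1 - W ^ 8

variable {q ρ γ E T W : ℝ}

lemma WRel.hT0 (h : WRel q ρ γ E T W) : 0 < T := h.hE.trans_le h.hT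

lemma WRel.a_le (h : WRel q ρ γ E T W) : E * (2 - T) ≤ 2 * E := by
  nlinarith [h.hE, h.hT0]

lemma WRel.le_a (h : WRel q ρ γ E T W) : E ≤ E * (2 - T) := by
  nlinarith [h.hE, h.hT1]

lemma WRel.om_ge (h : WRel q ρ γ E T W) : E ^ 3 ≤ γ * (E * T) + (1 - γ) * E ^ 3 := by
  have h1 : E ^ 3 ≤ E * T := by
    have : E * E * E ≤ 1 * E * T := by
      have := h.hE; have := h.hE1; have := h.hT
      gcongr
    nlinarith
  nlinarith [h.hγ0]

lemma WRel.om_ge' (h : WRel q ρ γ E T W) : γ * (E * T) ≤ γ * (E * T) + (1 - γ) * E ^ 3 := by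
  have := h.hE; have := h.hγ1
  have : 0 ≤ (1 - γ) * E ^ 3 := by
    apply mul_nonneg <;> [linarith; positivity]
  linarith

lemma WRel.wp (h : WRel q ρ γ E T W) :
    E * (2 - T) + 2 * q * (ρ * (-E ^ 3 + (1 + γ) / 2 * (E ^ 3 * T)))
      = γ * E * T + 2 * E ^ 3 - (1 + γ) * E ^ 3 * T := by
  linear_combination (2 * E * (-1 + (1 + γ) / 2 * T)) * h.hES

lemma WRel.wp_ge (h : WRel q ρ γ E T W) :
    γ * (E * T) + (1 - γ) * E ^ 3 ≤
    E * (2 - T) + 2 * q * (ρ * (-E ^ 3 + (1 + γ) / 2 * (E ^ 3 * T))) := by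
  rw [h.wp]
  have : 0 ≤ E ^ 3 * (1 + γ) * (1 - T) := by
    have := h.hE; have := h.hγ0; have := h.hT1
    apply mul_nonneg <;> [positivity; linarith]
  linarith

lemma WRel.wp_ge' (h : WRel q ρ γ E T W) :
    E ^ 2 * (E * (2 - T)) ≤
    E * (2 - T) + 2 * q * (ρ * (-E ^ 3 + (1 + γ) / 2 * (E ^ 3 * T))) := by
  rw [h.wp]
  have h1 := h.hE; have h2 := h.hγ0; have := h.hT0; have := h.hE1
  have : 0 ≤ γ * (E * T) * (1 - E ^ 2) := by
    apply mul_nonneg; positivity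
    nlinarith
  nlinarith

lemma WRel.lap_nonneg (h : WRel q ρ γ E T W) {N : ℝ} (hN : 4 ≤ N) :
    0 ≤ -(2 * N * (ρ * (-E ^ 3 + (1 + γ) / 2 * (E ^ 3 * T)))
      + 4 * q * (ρ ^ 2 * (3 / 2 * E ^ 5 - (1 + γ) * (3 + γ) / 4 * (E ^ 5 * T)))) := by
  have e : -(2 * N * (ρ * (-E ^ 3 + (1 + γ) / 2 * (E ^ 3 * T)))
      + 4 * q * (ρ ^ 2 * (3 / 2 * E ^ 5 - (1 + γ) * (3 + γ) / 4 * (E ^ 5 * T))))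
      = ρ * E ^ 3 * ((2 * N - 6) - (1 + γ) * T * (N - 3 - γ)
        + E ^ 2 * (6 - (1 + γ) * (3 + γ) * T)) := by
    linear_combination (-(4 * ρ * E ^ 3 * (3 / 2 - (1 + γ) * (3 + γ) / 4 * T))) * h.hES
  rw [e]
  have h1 := h.hE; have h2 := h.hγ0; have h3 := h.hγ1; have h4 := h.hρ0; have h5 := h.hT0
  have h6 := h.hT1
  have k1 : (1 + γ) * (3 + γ) * T ≤ 3 / 2 * (7 / 2) * 1 := by gcongr <;> linarith
  have k2 : (1 + γ) * T * (N - 3 - γ) ≤ 3 / 2 * (N - 3) := by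
    have : (1 + γ) * T ≤ 3 / 2 := by nlinarith
    have := mul_le_mul_of_nonneg_right this (by linarith : 0 ≤ N - 3 - γ)
    linarith
  have k3 : 0 ≤ E ^ 2 * (6 - (1 + γ) * (3 + γ) * T) :=
    mul_nonneg (by positivity) (by linarith)
  exact mul_nonneg (by positivity) (by linarith)

/-- The contribution of `|∇φ|² = q p²`. -/
lemma WRel.sigma (h : WRel q ρ γ E T W) {τ μ : ℝ} (hτ : 0 < τ) (hμ : 0 < μ) (hμρ : ρ = μ ^ 4) :
    q * (τ * W ^ 5 * E) ^ 2 * (E * (2 - T)) * (1 / 2 + 5 / 2 * W ^ 8) - 6 * τ ^ 2 * μ * E ^ 3 ≤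
    q * (τ * W ^ 5 * E) ^ 2 * (E * (2 - T)) + 2 * q * (((τ * W ^ 5 * E) ^ 2 +
      2 * q * (τ * W ^ 5 * E) * (τ * (-(5 / 8) * W ^ 13 * E - ρ / 2 * W ^ 5 * E ^ 3)))
        * (E * (2 - T)) + q * (τ * W ^ 5 * E) ^ 2 * (ρ * (-E ^ 3 + (1 + γ) / 2 * (E ^ 3 * T)))) := by
  set p := τ * W ^ 5 * E with hp
  set a := E * (2 - T) with ha
  set a1 := ρ * (-E ^ 3 + (1 + γ) / 2 * (E ^ 3 * T)) with ha1
  have hE := h.hE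
  have hW := h.hW
  have ha0 : 0 ≤ a := by have := h.le_a; linarith
  have e : q * p ^ 2 * a + 2 * q * ((p ^ 2 +
      2 * q * p * (τ * (-(5 / 8) * W ^ 13 * E - ρ / 2 * W ^ 5 * E ^ 3))) * a + q * p ^ 2 * a1)
      = q * p ^ 2 * ((a + 2 * q * a1) + 2 * a * (1 - 5 / 4 * (1 - W ^ 8) - (1 - E ^ 2))) := by
    have e1 : q * (τ * (-(5 / 8) * W ^ 13 * E - ρ / 2 * W ^ 5 * E ^ 3))
        = p * (-(5 / 8) * (1 - W ^ 8) - 1 / 2 * (1 - E ^ 2)) := by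
      rw [hp]
      linear_combination (-(5 / 8) * τ * W ^ 5 * E) * h.hWQ - (1 / 2 * τ * W ^ 5 * E) * h.hES
    linear_combination (4 * q * p * a) * e1
  rw [e]
  have h1 : E ^ 2 * a ≤ a + 2 * q * a1 := h.wp_ge'
  have hqp : 0 ≤ q * p ^ 2 := mul_nonneg h.hq (sq_nonneg _)
  have h2 := mul_le_mul_of_nonneg_left h1 hqp
  -- the negative part `3 β q p² a` with `β = 1 - E² = ρ q E²`
  have h3 : 3 * (1 - E ^ 2) * (q * p ^ 2) * a ≤ 6 * τ ^ 2 * μ * E ^ 3 := by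
    rw [← h.hES]
    have h4 : ρ * q * (q * W ^ 10) ≤ μ * (1 / E ^ 2) := by
      -- `m = μ W⁻²` satisfies `m⁴ = ρ(1+q) ≤ E⁻²`
      set m := μ / W ^ 2 with hm
      have hm0 : 0 < m := by positivity
      have hWi : 1 / W ^ 8 = 1 + q := by
        have := h.hWQ; field_simp; linarith
      have hEi : 1 / E ^ 2 = 1 + ρ * q := by
        have := h.hES; field_simp; linarith
      have m4 : m ^ 4 ≤ 1 / E ^ 2 := by
        have : m ^ 4 = ρ * (1 / W ^ 8) := by rw [hm, hμρ]; field_simp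
        rw [this, hWi, hEi]; nlinarith [h.hρ1]
      have m3 : m ^ 3 ≤ 1 / E ^ 2 := by
        rcases le_total m 1 with hm1 | hm1
        · have : m ^ 3 ≤ 1 := pow_le_one₀ hm0.le hm1
          have : 1 ≤ 1 / E ^ 2 := by rw [hEi]; nlinarith [mul_nonneg h.hρ0.le h.hq]
          linarith
        · exact (pow_le_pow_right₀ hm1 (by norm_num)).trans m4
      have q2 : q * W ^ 8 ≤ 1 := by rw [h.hWQ]; have := pow_pos hW 8; linarith
      have : ρ * q * (q * W ^ 10) = (q * W ^ 8) ^ 2 * (μ * m ^ 3) := by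
        rw [hm, hμρ]; field_simp
      rw [this]
      have q3 : (q * W ^ 8) ^ 2 ≤ 1 := pow_le_one₀ (mul_nonneg h.hq (by positivity)) q2
      calc _ ≤ 1 * (μ * (1 / E ^ 2)) := by gcongr
        _ = _ := one_mul _
    have h5 : 3 * (ρ * q * E ^ 2) * (q * p ^ 2) * a = 3 * (ρ * q * (q * W ^ 10)) * τ ^ 2 * E ^ 4 * a := by
      rw [hp]; ring
    rw [h5]
    calc _ ≤ 3 * (μ * (1 / E ^ 2)) * τ ^ 2 * E ^ 4 * (2 * E) := by
          have := h.a_le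
          gcongr
      _ = _ := by field_simp; ring
  nlinarith

/-- The cross term with the potential. -/
lemma WRel.crossV (h : WRel q ρ γ E T W) {τ lam0 CV V η : ℝ} (hτ : 5 ≤ τ) (hl : 0 < lam0)
    (hη : η = 1 / τ) (hV : V ^ 2 ≤ CV ^ 2 * W ^ 24) (h1 : 32 * CV ^ 2 ≤ lam0 * τ)
    (h2 : 256 * CV ^ 2 * ρ ≤ lam0 * γ ^ 2) :
    2 * (E * (2 - T)) ^ 2 * V ^ 2 ≤ lam0 / 8 * (γ * (E * T) + (1 - γ) * E ^ 3) *
      ((γ * (E * T) + (1 - γ) * E ^ 3) / (q + η) / 2 + 4 * (τ * W ^ 5 * E) * (E * (2 - T))) := by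
  have hE := h.hE
  have hW := h.hW
  have hT0 := h.hT0
  have hη0 : 0 < η := by rw [hη]; positivity
  have hη1 : η ≤ 1 := by rw [hη, div_le_one (by linarith)]; linarith
  have hq := h.hq
  have hγ := h.hγ0
  have ha0 : 0 ≤ E * (2 - T) := by have := h.le_a; linarith
  have ha2 := h.a_le
  have hom := h.om_ge
  have hom' := h.om_ge'
  set ω := γ * (E * T) + (1 - γ) * E ^ 3
  set a := E * (2 - T)
  have hω0 : 0 < ω := by have : 0 < E ^ 3 := by positivity
                         linarith
  have hqη : 0 < q + η := by linarith
  have hτ0 : 0 < τ := by linarith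
  rcases le_total (ρ * q) 1 with hc | hc
  · have hE2 : 1 / 2 ≤ E ^ 2 := by nlinarith [h.hES, sq_nonneg E]
    have hEh : 1 / 2 ≤ E := by nlinarith [h.hE1]
    have hW24 : W ^ 24 ≤ W ^ 5 := pow_le_pow_of_le_one hW.le h.hW1 (by norm_num)
    have k : 2 * a * V ^ 2 ≤ lam0 / 8 * ω * (4 * (τ * W ^ 5 * E)) := by
      have k1 : 2 * a * V ^ 2 ≤ 2 * (2 * E) * (CV ^ 2 * W ^ 5) := by
        have : CV ^ 2 * W ^ 24 ≤ CV ^ 2 * W ^ 5 := by gcongr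
        gcongr; linarith
      have k2 : lam0 / 8 * (E * (1 / 2)) * (4 * (τ * W ^ 5 * (1 / 2))) ≤
          lam0 / 8 * ω * (4 * (τ * W ^ 5 * E)) := by
        have : E * (1 / 2) ≤ ω := by nlinarith
        gcongr
      have k3 : 2 * (2 * E) * (CV ^ 2 * W ^ 5) ≤
          lam0 / 8 * (E * (1 / 2)) * (4 * (τ * W ^ 5 * (1 / 2))) := by
        have : 0 < E * W ^ 5 := by positivity
        nlinarith
      linarith
    calc 2 * a ^ 2 * V ^ 2 = a * (2 * a * V ^ 2) := by ring
      _ ≤ a * (lam0 / 8 * ω * (4 * (τ * W ^ 5 * E))) := by gcongr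
      _ = lam0 / 8 * ω * (0 + 4 * (τ * W ^ 5 * E) * a) := by ring
      _ ≤ _ := by gcongr; positivity
  · have k0 : 2 * a ^ 2 * V ^ 2 ≤ 8 * E ^ 2 * (CV ^ 2 * W ^ 24) := by
      have : a ^ 2 ≤ (2 * E) ^ 2 := by gcongr
      calc _ ≤ 2 * (2 * E) ^ 2 * (CV ^ 2 * W ^ 24) := by gcongr
        _ = _ := by ring
    have k1 : lam0 / 16 * ((γ * (E * E)) ^ 2 * W ^ 8) ≤ lam0 / 8 * ω * (ω / (q + η) / 2) := by
      have : W ^ 8 ≤ 1 / (q + η) := by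
        rw [le_div_iff₀ hqη]
        have := h.hWQ; have : 0 < W ^ 8 := by positivity
        nlinarith
      have hh : γ * (E * E) ≤ ω := by
        have : γ * (E * E) ≤ γ * (E * T) := by have := h.hT; gcongr
        linarith
      calc lam0 / 16 * ((γ * (E * E)) ^ 2 * W ^ 8) ≤ lam0 / 16 * (ω ^ 2 * (1 / (q + η))) := by
            gcongr
        _ = _ := by ring
    -- `1 ≤ 2 ρ q E²` and `q W⁸ ≤ 1`
    have k2 : W ^ 8 ≤ 2 * ρ * E ^ 2 := by
      have e1 : 1 / 2 ≤ ρ * q * E ^ 2 := by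
        have : 0 < E ^ 2 := by positivity
        nlinarith [h.hES]
      have e2 : q * W ^ 8 ≤ 1 := by rw [h.hWQ]; have := pow_pos hW 8; linarith
      have q0 : 0 < q := by
        rcases hq.eq_or_lt with h0 | h0
        · rw [← h0] at hc; simp at hc; linarith
        · exact h0
      have : q * W ^ 8 ≤ q * (2 * ρ * E ^ 2) := by nlinarith
      exact le_of_mul_le_mul_left this q0
    have k3 : 8 * E ^ 2 * (CV ^ 2 * W ^ 24) ≤ lam0 / 16 * ((γ * (E * E)) ^ 2 * W ^ 8) := by
      have w16 : W ^ 16 ≤ W ^ 8 := pow_le_pow_of_le_one hW.le h.hW1 (by norm_num)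
      have : 8 * E ^ 2 * (CV ^ 2 * W ^ 24) ≤ 8 * E ^ 2 * (CV ^ 2 * (2 * ρ * E ^ 2)) * W ^ 8 := by
        calc _ = 8 * E ^ 2 * (CV ^ 2 * W ^ 16) * W ^ 8 := by ring
          _ ≤ _ := by gcongr; exact w16.trans k2
      have hh : 0 < E ^ 4 * W ^ 8 := by positivity
      nlinarith
    calc _ ≤ lam0 / 8 * ω * (ω / (q + η) / 2) := by linarith
      _ ≤ _ := by gcongr; simp; positivity

set_option maxHeartbeats 1000000 in
/-- The cross term produced by commuting with the weight `e^φ`. -/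
lemma WRel.crossP (h : WRel q ρ γ E T W) {τ lam0 μ b η P : ℝ} (hτ : 5 ≤ τ) (hl : 0 < lam0)
    (hμ : 0 < μ) (hμρ : ρ = μ ^ 4) (hb : 3 / 2 ≤ b) (hη : η = 1 / τ)
    (h1 : 25 / 2 * τ * μ ^ 2 ≤ lam0 * γ)
    (hP : P = τ * W ^ 5 * E * (1 - 5 / 4 * (1 - W ^ 8) - (1 - E ^ 2))) :
    2 * (E * (2 - T)) ^ 2 * P ^ 2 ≤ (lam0 / 8 * (γ * (E * T) + (1 - γ) * E ^ 3)
        + q * (τ * W ^ 5 * E) ^ 2 * (E * (2 - T)) * (1 / 2 + 5 / 2 * W ^ 8)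
        + b * ((γ * (E * T) + (1 - γ) * E ^ 3) / (q + η)) * (1 / 2 + 2 * (η / (q + η)))) *
      ((γ * (E * T) + (1 - γ) * E ^ 3) / (q + η) / 2 + 4 * (τ * W ^ 5 * E) * (E * (2 - T))) := by
  have hE := h.hE
  have hW := h.hW
  have hT0 := h.hT0
  have hτ0 : 0 < τ := by linarith
  have hη0 : 0 < η := by rw [hη]; positivity
  have hq := h.hq
  have hγ := h.hγ0
  have ha1 := h.le_a
  have ha2 := h.a_le
  have ha0 : 0 < E * (2 - T) := by linarith
  have hom := h.om_ge
  have hom' := h.om_ge'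
  set ω := γ * (E * T) + (1 - γ) * E ^ 3
  set a := E * (2 - T)
  have hω0 : 0 < ω := by have : 0 < E ^ 3 := by positivity
                         linarith
  have hqη : 0 < q + η := by linarith
  have hp0 : 0 < τ * W ^ 5 * E := by positivity
  have W8 : 0 < W ^ 8 := by positivity
  have W81 : W ^ 8 ≤ 1 := pow_le_one₀ hW.le h.hW1
  have E21 : E ^ 2 ≤ 1 := pow_le_one₀ hE.le h.hE1
  have E20 : 0 < E ^ 2 := by positivity
  set N := lam0 / 8 * ω + q * (τ * W ^ 5 * E) ^ 2 * a * (1 / 2 + 5 / 2 * W ^ 8)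
        + b * (ω / (q + η)) * (1 / 2 + 2 * (η / (q + η))) with hN
  have t1 : 0 ≤ lam0 / 8 * ω := by positivity
  have t2 : 0 ≤ q * (τ * W ^ 5 * E) ^ 2 * a * (1 / 2 + 5 / 2 * W ^ 8) := by positivity
  have t3 : 0 ≤ b * (ω / (q + η)) * (1 / 2 + 2 * (η / (q + η))) := by positivity
  have hN0 : 0 ≤ N := by linarith
  -- it suffices to bound `N` from below by a multiple of `a p`
  have fin : ∀ k : ℝ, P ^ 2 ≤ (2 * k) * (τ * W ^ 5 * E) ^ 2 → k * (a * (τ * W ^ 5 * E)) ≤ N →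
      2 * a ^ 2 * P ^ 2 ≤ N * (ω / (q + η) / 2 + 4 * (τ * W ^ 5 * E) * a) := by
    intro k hk hkN
    calc 2 * a ^ 2 * P ^ 2 ≤ 2 * a ^ 2 * ((2 * k) * (τ * W ^ 5 * E) ^ 2) := by gcongr
      _ = k * (a * (τ * W ^ 5 * E)) * (0 + 4 * (τ * W ^ 5 * E) * a) := by ring
      _ ≤ N * (0 + 4 * (τ * W ^ 5 * E) * a) := by gcongr
      _ ≤ _ := by gcongr; positivity
  have big : P ^ 2 ≤ (2 * (25 / 32)) * (τ * W ^ 5 * E) ^ 2 := by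
    have : (1 - 5 / 4 * (1 - W ^ 8) - (1 - E ^ 2)) ^ 2 ≤ (5 / 4) ^ 2 :=
      sq_le_sq' (by linarith) (by linarith)
    rw [hP, mul_pow, mul_comm (2 * (25 / 32) : ℝ)]
    gcongr
    linarith
  rcases le_total q 1 with hc | hc
  · have w8 : 1 / 2 ≤ W ^ 8 := by
      have := mul_le_mul_of_nonneg_right hc W8.le
      linarith [h.hWQ]
    have small : P ^ 2 ≤ (2 * (1 / 2)) * (τ * W ^ 5 * E) ^ 2 := by
      have : (1 - 5 / 4 * (1 - W ^ 8) - (1 - E ^ 2)) ^ 2 ≤ 1 ^ 2 :=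
        sq_le_sq' (by linarith) (by linarith)
      rw [hP, mul_pow, mul_comm (2 * (1 / 2) : ℝ)]
      gcongr
      linarith
    refine fin _ small ?_
    by_cases hqp : 2 / 7 ≤ q * (τ * W ^ 5 * E)
    · have : 1 / 2 * (a * (τ * W ^ 5 * E)) ≤
          q * (τ * W ^ 5 * E) ^ 2 * a * (1 / 2 + 5 / 2 * W ^ 8) := by
        calc 1 / 2 * (a * (τ * W ^ 5 * E)) = (2 / 7) * (τ * W ^ 5 * E) * a * (7 / 4) := by ring
          _ ≤ (q * (τ * W ^ 5 * E)) * (τ * W ^ 5 * E) * a * (1 / 2 + 5 / 2 * W ^ 8) := by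
            gcongr; linarith
          _ = _ := by ring
      linarith
    · push Not at hqp
      have E9 : 81 / 100 ≤ E ^ 2 := by
        have hρq : ρ * q ≤ 1 / 256 * 1 := mul_le_mul h.hρ1 hc hq (by norm_num)
        have := mul_le_mul_of_nonneg_right hρq E20.le
        linarith [h.hES]
      have E9' : 9 / 10 ≤ E := by
        refine (pow_le_pow_iff_left₀ (by norm_num) hE.le two_ne_zero).1 ?_
        linarith
      have W9 : 9 / 10 ≤ W := by
        by_contra hh
        push Not at hh
        have : W ^ 8 < (9 / 10) ^ 8 := by gcongr
        norm_num at this; linarith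
      have W5 : 59 / 100 ≤ W ^ 5 := by
        calc (59 / 100 : ℝ) ≤ (9 / 10) ^ 5 := by norm_num
          _ ≤ _ := by gcongr
      have hp : 53 / 100 * τ ≤ τ * W ^ 5 * E := by
        calc 53 / 100 * τ ≤ τ * (59 / 100) * (9 / 10) := by linarith
          _ ≤ _ := by gcongr
      have hq' : q * τ ≤ 54 / 100 := by
        have := mul_le_mul_of_nonneg_left hp hq
        linarith
      have hητ : η * τ = 1 := by rw [hη]; field_simp
      have u : 1 / (q + η) ≥ τ * (100 / 154) := by
        rw [ge_iff_le, le_div_iff₀ hqη]; linarith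
      have u2 : η / (q + η) ≥ 100 / 154 := by
        rw [ge_iff_le, le_div_iff₀ hqη]
        have : q + η ≤ 154 / 100 * η := by
          have : τ * (q + η) ≤ τ * (154 / 100 * η) := by linarith
          exact le_of_mul_le_mul_left this hτ0
        linarith
      have t4 : τ * E ^ 2 ≤ b * (ω / (q + η)) * (1 / 2 + 2 * (η / (q + η))) := by
        have : b * (ω / (q + η)) * (1 / 2 + 2 * (η / (q + η)))
            = b * (ω * (1 / (q + η))) * (1 / 2 + 2 * (η / (q + η))) := by ring
        rw [this]
        have hω9 : E ^ 2 * (9 / 10) ≤ ω := by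
          have := mul_le_mul_of_nonneg_left E9' E20.le
          linarith
        calc τ * E ^ 2 ≤ 3 / 2 * ((E ^ 2 * (9 / 10)) * (τ * (100 / 154))) *
              (1 / 2 + 2 * (100 / 154)) := by
              have : 0 < τ * E ^ 2 := by positivity
              linarith
          _ ≤ _ := by gcongr
      have t5 : 1 / 2 * (a * (τ * W ^ 5 * E)) ≤ τ * E ^ 2 := by
        have : W ^ 5 ≤ 1 := pow_le_one₀ hW.le h.hW1
        calc 1 / 2 * (a * (τ * W ^ 5 * E)) ≤ 1 / 2 * ((2 * E) * (τ * 1 * E)) := by gcongr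
          _ = _ := by ring
      linarith
  · refine fin _ big ?_
    rcases le_total (ρ * q) 1 with hd | hd
    · have hE2 : 1 / 2 ≤ E ^ 2 := by
        have := mul_le_mul_of_nonneg_right hd E20.le
        linarith [h.hES]
      have hEh : 7 / 10 ≤ E := by
        refine (pow_le_pow_iff_left₀ (by norm_num) hE.le two_ne_zero).1 ?_
        linarith
      have hqp : 25 / 16 ≤ q * (τ * W ^ 5 * E) := by
        have w : 1 / 2 ≤ q * W ^ 8 := by
          have := mul_le_mul_of_nonneg_right hc W8.le
          linarith [h.hWQ]
        have w5 : q * W ^ 8 ≤ q * W ^ 5 := by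
          have : W ^ 8 ≤ W ^ 5 := pow_le_pow_of_le_one hW.le h.hW1 (by norm_num)
          gcongr
        calc (25 / 16 : ℝ) ≤ (1 / 2) * (5 * (7 / 10)) := by norm_num
          _ ≤ (q * W ^ 5) * (τ * E) := by gcongr; linarith
          _ = _ := by ring
      have : 25 / 32 * (a * (τ * W ^ 5 * E)) ≤
          q * (τ * W ^ 5 * E) ^ 2 * a * (1 / 2 + 5 / 2 * W ^ 8) := by
        calc 25 / 32 * (a * (τ * W ^ 5 * E)) = (25 / 16) * (τ * W ^ 5 * E) * a * (1 / 2) := by ring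
          _ ≤ (q * (τ * W ^ 5 * E)) * (τ * W ^ 5 * E) * a * (1 / 2 + 5 / 2 * W ^ 8) := by
            gcongr; linarith
          _ = _ := by ring
      linarith
    · have : 25 / 32 * (a * (τ * W ^ 5 * E)) ≤ lam0 / 8 * ω := by
        have w8 : W ^ 8 ≤ ρ := by
          have k1 : q * W ^ 8 ≤ 1 := by linarith [h.hWQ]
          have k2 := mul_le_mul_of_nonneg_left k1 h.hρ0.le
          have k3 := mul_le_mul_of_nonneg_right hd W8.le
          linarith
        have w4 : W ^ 4 ≤ μ ^ 2 := by
          have : (W ^ 4) ^ 2 ≤ (μ ^ 2) ^ 2 := by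
            rw [← pow_mul, ← pow_mul]; rw [hμρ] at w8; norm_num; exact w8
          exact (pow_le_pow_iff_left₀ (by positivity) (by positivity) two_ne_zero).1 this
        have w5 : W ^ 5 ≤ μ ^ 2 := (pow_le_pow_of_le_one hW.le h.hW1 (by norm_num)).trans w4
        calc 25 / 32 * (a * (τ * W ^ 5 * E)) ≤ 25 / 32 * ((2 * E) * (τ * μ ^ 2 * E)) := by gcongr
          _ = (25 / 2 * τ * μ ^ 2) / 8 * (E * E) := by ring
          _ ≤ (lam0 * γ) / 8 * (E * T) := by have := h.hT; gcongr
          _ = lam0 / 8 * (γ * (E * T)) := by ring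
          _ ≤ _ := by gcongr
      linarith

end Alg

section Alg2

variable {q ρ γ E T W : ℝ}

/-- The zeroth-order term coming from the Hardy-type inequality. -/
lemma WRel.theta (h : WRel q ρ γ E T W) {b η : ℝ} (hb : 3 / 2 ≤ b) (hη : 0 < η) :
    b * ((γ * (E * T) + (1 - γ) * E ^ 3) / (q + η)) * (1 / 2 + 2 * (η / (q + η)))
      - 3 * b * ρ * (γ * (E * T) + (1 - γ) * E ^ 3) ≤
    b * ((b + 1) * ((γ * (E * T) + (1 - γ) * E ^ 3) / (q + η)) + 2 * q *
      ((γ * (-(ρ / 2) * (1 + γ) * (E ^ 3 * T)) - (1 - γ) * (3 * ρ / 2 * E ^ 5)) / (q + η)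
        - (γ * (E * T) + (1 - γ) * E ^ 3) / (q + η) ^ 2)) := by
  have hE := h.hE
  have hT0 := h.hT0
  have hq := h.hq
  have hγ := h.hγ0
  have hγ1 := h.hγ1
  have hom := h.om_ge
  have hqη : 0 < q + η := by linarith
  have hb0 : 0 < b := by linarith
  have E20 : 0 < E ^ 2 := by positivity
  have E21 : E ^ 2 ≤ 1 := pow_le_one₀ hE.le h.hE1
  have e1 : 2 * q * (γ * (-(ρ / 2) * (1 + γ) * (E ^ 3 * T)) - (1 - γ) * (3 * ρ / 2 * E ^ 5))
      = -(1 - E ^ 2) * (γ * (1 + γ) * (E * T) + 3 * (1 - γ) * E ^ 3) := by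
    linear_combination (-(γ * (1 + γ) * (E * T) + 3 * (1 - γ) * E ^ 3)) * h.hES
  have e2 : γ * (1 + γ) * (E * T) + 3 * (1 - γ) * E ^ 3 ≤
      3 * (γ * (E * T) + (1 - γ) * E ^ 3) := by
    have : 0 ≤ γ * (E * T) := by positivity
    nlinarith
  set ω := γ * (E * T) + (1 - γ) * E ^ 3 with hω
  have hω0 : 0 < ω := by have : 0 < E ^ 3 := by positivity
                         linarith
  set ω1 := (γ * (-(ρ / 2) * (1 + γ) * (E ^ 3 * T)) - (1 - γ) * (3 * ρ / 2 * E ^ 5))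
  have e3 : -(3 * (1 - E ^ 2) * ω) ≤ 2 * q * ω1 := by
    rw [e1]; nlinarith
  have e4 : (1 - E ^ 2) / (q + η) ≤ ρ := by
    rw [div_le_iff₀ hqη, ← h.hES]
    have : ρ * q * E ^ 2 ≤ ρ * q * 1 := by
      have := h.hρ0; gcongr
    nlinarith [h.hρ0]
  have e5 : 2 * q * (ω1 / (q + η) - ω / (q + η) ^ 2)
      = (2 * q * ω1) / (q + η) - 2 * (1 - η / (q + η)) * (ω / (q + η)) := by
    field_simp; ring
  have e6 : -(3 * ρ * ω) ≤ (2 * q * ω1) / (q + η) := by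
    calc -(3 * ρ * ω) ≤ -(3 * ((1 - E ^ 2) / (q + η)) * ω) := by gcongr
      _ = -(3 * (1 - E ^ 2) * ω) / (q + η) := by ring
      _ ≤ _ := by gcongr
  rw [e5]
  have hθ : 0 < ω / (q + η) := by positivity
  have : b * (-(3 * ρ * ω)) ≤ b * ((2 * q * ω1) / (q + η)) := by gcongr
  have h7 : b * (ω / (q + η)) * (3 / 2) ≤ b * (ω / (q + η)) * b := by gcongr
  nlinarith

lemma quad_nonneg {D N c Y w : ℝ} (hD : 0 < D) (h : 2 * c ^ 2 ≤ N * D) :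
    0 ≤ D / 2 * Y ^ 2 + 2 * c * w * Y + N * w ^ 2 := by
  have : 0 ≤ D * (D / 2 * Y ^ 2 + 2 * c * w * Y + N * w ^ 2) := by
    have e : D * (D / 2 * Y ^ 2 + 2 * c * w * Y + N * w ^ 2)
      = (D * Y + 2 * c * w) ^ 2 / 2 + (N * D - 2 * c ^ 2) * w ^ 2 := by ring
    rw [e]
    have := mul_nonneg (sub_nonneg.2 h) (sq_nonneg w)
    positivity
  exact nonneg_of_mul_nonneg_right this hD

set_option maxHeartbeats 1000000 in
/-- The pointwise positivity of the quadratic form in `Y` and `v`. -/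
lemma WRel.key (h : WRel q ρ γ E T W) {τ lam0 lam μ b η CV V N : ℝ} (hτ : 5 ≤ τ) (hl : 0 < lam0)
    (hlam : lam0 ≤ lam) (hμ : 0 < μ) (hμρ : ρ = μ ^ 4) (hb : 3 / 2 ≤ b) (hN : 4 ≤ N)
    (hη : η = 1 / τ) (hV : V ^ 2 ≤ CV ^ 2 * W ^ 24) (h1 : 32 * CV ^ 2 ≤ lam0 * τ)
    (h2 : 256 * CV ^ 2 * ρ ≤ lam0 * γ ^ 2)
    (h3 : 25 / 2 * τ * μ ^ 2 ≤ lam0 * γ) (h4 : 6 * τ ^ 2 * μ ≤ lam0 / 8)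
    (h5 : 3 * b * ρ ≤ lam0 / 8) {a a1 a2 p p1 θ θ1 ω : ℝ}
    (ha : a = E * (2 - T))
    (ha1 : a1 = ρ * (-E ^ 3 + (1 + γ) / 2 * (E ^ 3 * T)))
    (ha2 : a2 = ρ ^ 2 * (3 / 2 * E ^ 5 - (1 + γ) * (3 + γ) / 4 * (E ^ 5 * T)))
    (hp : p = τ * W ^ 5 * E)
    (hp1 : p1 = τ * (-(5 / 8) * W ^ 13 * E - ρ / 2 * W ^ 5 * E ^ 3))
    (hω : ω = γ * (E * T) + (1 - γ) * E ^ 3) (hθ : θ = ω / (q + η))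
    (hθ1 : θ1 = (γ * (-(ρ / 2) * (1 + γ) * (E ^ 3 * T)) - (1 - γ) * (3 * ρ / 2 * E ^ 5)) / (q + η)
        - ω / (q + η) ^ 2) (Y w : ℝ) :
      θ / 2 * Y ^ 2 + lam / 2 * ω * w ^ 2 ≤
        θ * Y ^ 2 + b * ((b + 1) * θ + 2 * q * θ1) * w ^ 2 + 4 * p * a * Y ^ 2
        + 2 * a * (p + 2 * q * p1 + V) * w * Y
        + (lam * (a + 2 * q * a1) + (q * p ^ 2 * a
            + 2 * q * ((p ^ 2 + 2 * q * p * p1) * a + q * p ^ 2 * a1))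
          - b * (2 * N * a1 + 4 * q * a2)) * w ^ 2 := by
  have hE := h.hE
  have hW := h.hW
  have hT0 := h.hT0
  have hq := h.hq
  have hη0 : 0 < η := by rw [hη]; positivity
  have hqη : 0 < q + η := by linarith
  have hom := h.om_ge
  have g1 := h.sigma (τ := τ) (by linarith) hμ hμρ
  have g2 := h.theta (b := b) (η := η) hb hη0
  have g3 := h.lap_nonneg hN
  have g4 := h.wp_ge
  have g5 := h.crossV hτ hl hη hV h1 h2
  have hP : p + 2 * q * p1 = τ * W ^ 5 * E * (1 - 5 / 4 * (1 - W ^ 8) - (1 - E ^ 2)) := by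
    rw [hp, hp1]
    linear_combination (-(5 / 4) * τ * W ^ 5 * E) * h.hWQ - (τ * W ^ 5 * E) * h.hES
  have g6 := h.crossP hτ hl hμ hμρ hb hη h3 hP
  have ha0 : 0 < a := by rw [ha]; have := h.le_a; linarith
  have hp0 : 0 < p := by rw [hp]; positivity
  rw [← hω] at g2 g4 g5 g6 hom
  rw [← hθ] at g2 g5 g6
  rw [← hθ1] at g2
  rw [← ha1, ← ha] at g4
  rw [← ha1, ← ha2] at g3
  rw [← hp, ← hp1, ← ha1, ← ha] at g1
  rw [← hp, ← ha] at g5 g6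
  have hω0 : 0 < ω := by have : 0 < E ^ 3 := by positivity
                         linarith
  have hθ0 : 0 < θ := by rw [hθ]; positivity
  have hD : 0 < θ / 2 + 4 * p * a := by positivity
  have k1 := quad_nonneg (Y := Y) (w := w) (c := a * V) (N := lam0 / 8 * ω) hD (by rw [mul_pow]; linarith)
  have k2 := quad_nonneg (Y := Y) (w := w) (c := a * (p + 2 * q * p1))
    (N := lam0 / 8 * ω + q * p ^ 2 * a * (1 / 2 + 5 / 2 * W ^ 8)
      + b * θ * (1 / 2 + 2 * (η / (q + η)))) hD
    (by rw [mul_pow]; linarith)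
  have m1 : 6 * τ ^ 2 * μ * E ^ 3 ≤ lam0 / 8 * ω := by
    calc _ ≤ lam0 / 8 * E ^ 3 := by gcongr
      _ ≤ _ := by gcongr
  have m2 : 3 * b * ρ * ω ≤ lam0 / 8 * ω := by gcongr
  have m3 : lam * ω ≤ lam * (a + 2 * q * a1) := by
    have : 0 < lam := by linarith
    gcongr
  have m4 : lam0 * ω ≤ lam * ω := by gcongr
  have m5 : 0 ≤ b * -(2 * N * a1 + 4 * q * a2) := mul_nonneg (by linarith) g3
  have tot : lam0 / 8 * ω + (lam0 / 8 * ω + q * p ^ 2 * a * (1 / 2 + 5 / 2 * W ^ 8)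
      + b * θ * (1 / 2 + 2 * (η / (q + η)))) + lam / 2 * ω ≤
      b * ((b + 1) * θ + 2 * q * θ1) + (lam * (a + 2 * q * a1) + (q * p ^ 2 * a
            + 2 * q * ((p ^ 2 + 2 * q * p * p1) * a + q * p ^ 2 * a1))
          - b * (2 * N * a1 + 4 * q * a2)) := by
    linarith
  have tot' := mul_le_mul_of_nonneg_right tot (sq_nonneg w)
  linarith

end Alg2

/-! ### Choice of the weights -/

section Wts

/-- The power `(1+ρq)^r`, from which the weights are built. -/
def pw (ρ r q : ℝ) : ℝ := (1 + ρ * q) ^ r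

lemma pw_base {ρ q : ℝ} (hρ : 0 < ρ) (hq : 0 ≤ q) : 0 < 1 + ρ * q := by positivity

lemma pw_pos {ρ q : ℝ} (hρ : 0 < ρ) (hq : 0 ≤ q) (r : ℝ) : 0 < pw ρ r q :=
  rpow_pos_of_pos (pw_base hρ hq) r

lemma pw_mul {ρ q : ℝ} (hρ : 0 < ρ) (hq : 0 ≤ q) (r t : ℝ) : pw ρ r q * pw ρ t q = pw ρ (r + t) q :=
  (rpow_add (pw_base hρ hq) r t).symm

lemma pw_pow {ρ q : ℝ} (hρ : 0 < ρ) (hq : 0 ≤ q) (r : ℝ) (k : ℕ) : pw ρ r q ^ k = pw ρ (r * k) q := by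
  unfold pw
  rw [← rpow_natCast, ← rpow_mul (pw_base hρ hq).le]

lemma pw_le_one {ρ q r : ℝ} (hρ : 0 < ρ) (hq : 0 ≤ q) (hr : r ≤ 0) : pw ρ r q ≤ 1 :=
  rpow_le_one_of_one_le_of_nonpos (by nlinarith) hr

lemma pw_mono {ρ q r t : ℝ} (hρ : 0 < ρ) (hq : 0 ≤ q) (hr : r ≤ t) : pw ρ r q ≤ pw ρ t q :=
  rpow_le_rpow_of_exponent_le (by nlinarith) hr

lemma pw_contDiff {ρ q : ℝ} (hρ : 0 < ρ) (hq : 0 ≤ q) (r : ℝ) (m : WithTop ℕ∞) :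
    ContDiffAt ℝ m (pw ρ r) q := by
  unfold pw
  have := (pw_base hρ hq).ne'
  have h : ContDiffAt ℝ m (fun q : ℝ => 1 + ρ * q) q := by fun_prop
  exact h.rpow_const_of_ne this

lemma pw_deriv {ρ q : ℝ} (hρ : 0 < ρ) (hq : 0 ≤ q) (r : ℝ) :
    HasDerivAt (pw ρ r) (ρ * r * pw ρ (r - 1) q) q := by
  unfold pw
  have h : HasDerivAt (fun q : ℝ => 1 + ρ * q) ρ q := by
    simpa using ((hasDerivAt_id q).const_mul ρ).const_add 1
  exact (h.rpow_const (p := r) (Or.inl (pw_base hρ hq).ne'))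

lemma wrel_pw {q ρ γ : ℝ} (hq : 0 ≤ q) (hρ : 0 < ρ) (hρ1 : ρ ≤ 1 / 256) (hγ : 0 < γ)
    (hγ1 : γ ≤ 1 / 2) : WRel q ρ γ (pw ρ (-1 / 2) q) (pw ρ (-γ / 2) q) (pw 1 (-1 / 8) q) where
  hq := hq
  hρ0 := hρ
  hρ1 := hρ1
  hγ0 := hγ
  hγ1 := hγ1
  hE := pw_pos hρ hq _
  hE1 := pw_le_one hρ hq (by norm_num)
  hES := by
    rw [pw_pow hρ hq]
    have : pw ρ (-1 / 2 * (2 : ℕ)) q = (1 + ρ * q)⁻¹ := by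
      unfold pw
      rw [← rpow_neg_one]; norm_num
    rw [this]
    have := (pw_base hρ hq).ne'
    field_simp
    ring
  hT := pw_mono hρ hq (by linarith)
  hT1 := pw_le_one hρ hq (by linarith)
  hW := pw_pos one_pos hq _
  hW1 := pw_le_one one_pos hq (by norm_num)
  hWQ := by
    rw [pw_pow one_pos hq]
    have : pw 1 (-1 / 8 * (8 : ℕ)) q = (1 + q)⁻¹ := by
      unfold pw
      rw [← rpow_neg_one]; norm_num
    rw [this]
    have : 1 + q ≠ 0 := by positivity
    field_simp
    ring

variable {ρ γ τ : ℝ}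

/-- The multiplier weight `a = E(2-T)`, where `E = (1+ρq)^{-1/2}` and `T = (1+ρq)^{-γ/2}`. -/
def wa (ρ γ q : ℝ) : ℝ := pw ρ (-1 / 2) q * (2 - pw ρ (-γ / 2) q)

/-- The derivative of `wa`. -/
def wa1 (ρ γ q : ℝ) : ℝ :=
  ρ * (-pw ρ (-1 / 2) q ^ 3 + (1 + γ) / 2 * (pw ρ (-1 / 2) q ^ 3 * pw ρ (-γ / 2) q))

/-- The second derivative of `wa`. -/
def wa2 (ρ γ q : ℝ) : ℝ :=
  ρ ^ 2 * (3 / 2 * pw ρ (-1 / 2) q ^ 5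
    - (1 + γ) * (3 + γ) / 4 * (pw ρ (-1 / 2) q ^ 5 * pw ρ (-γ / 2) q))

/-- The weight `p = τ(1+q)^{-5/8}(1+ρq)^{-1/2}`; the gradient of the Carleman phase is `p(|x|²)x`. -/
def wp (ρ τ q : ℝ) : ℝ := τ * pw 1 (-1 / 8) q ^ 5 * pw ρ (-1 / 2) q

/-- The derivative of `wp`. -/
def wp1 (ρ τ q : ℝ) : ℝ :=
  τ * (-(5 / 8) * pw 1 (-1 / 8) q ^ 13 * pw ρ (-1 / 2) q
    - ρ / 2 * pw 1 (-1 / 8) q ^ 5 * pw ρ (-1 / 2) q ^ 3)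

/-- The weight `ω = a + 2qa'` of the energy term, in the form `γET + (1-γ)E³`. -/
def wom (ρ γ q : ℝ) : ℝ :=
  γ * (pw ρ (-1 / 2) q * pw ρ (-γ / 2) q) + (1 - γ) * pw ρ (-1 / 2) q ^ 3

/-- The weight `θ = ω/(q+1/τ)`, for which `θq ≤ ω`. -/
def wth (ρ γ τ q : ℝ) : ℝ := wom ρ γ q / (q + 1 / τ)

/-- The derivative of `wth`. -/
def wth1 (ρ γ τ q : ℝ) : ℝ :=
  (γ * (-(ρ / 2) * (1 + γ) * (pw ρ (-1 / 2) q ^ 3 * pw ρ (-γ / 2) q))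
    - (1 - γ) * (3 * ρ / 2 * pw ρ (-1 / 2) q ^ 5)) / (q + 1 / τ) - wom ρ γ q / (q + 1 / τ) ^ 2

lemma dE (hρ : 0 < ρ) {q : ℝ} (hq : 0 ≤ q) :
    HasDerivAt (pw ρ (-1 / 2)) (-(ρ / 2) * pw ρ (-1 / 2) q ^ 3) q := by
  refine (pw_deriv hρ hq _).congr_deriv ?_
  rw [pw_pow hρ hq]; norm_num; left; ring

lemma dT (hρ : 0 < ρ) {q : ℝ} (hq : 0 ≤ q) :
    HasDerivAt (pw ρ (-γ / 2)) (-(γ * ρ / 2) * (pw ρ (-γ / 2) q * pw ρ (-1 / 2) q ^ 2)) q := by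
  refine (pw_deriv hρ hq _).congr_deriv ?_
  rw [pw_pow hρ hq, pw_mul hρ hq]
  rw [show -γ / 2 + -1 / 2 * ((2 : ℕ) : ℝ) = -γ / 2 - 1 by push_cast; ring]; ring

lemma dW {q : ℝ} (hq : 0 ≤ q) :
    HasDerivAt (pw 1 (-1 / 8)) (-(1 / 8) * pw 1 (-1 / 8) q ^ 9) q := by
  refine (pw_deriv one_pos hq _).congr_deriv ?_
  rw [pw_pow one_pos hq]; norm_num

lemma wom_cd (hρ : 0 < ρ) {q : ℝ} (hq : 0 ≤ q) (m) : ContDiffAt ℝ m (wom ρ γ) q := by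
  have h1 := pw_contDiff hρ hq (-1 / 2) m
  have h2 := pw_contDiff hρ hq (-γ / 2) m
  unfold wom
  fun_prop

lemma wp_cd (hρ : 0 < ρ) {q : ℝ} (hq : 0 ≤ q) (m) : ContDiffAt ℝ m (wp ρ τ) q := by
  have h1 := pw_contDiff hρ hq (-1 / 2) m
  have h2 := pw_contDiff one_pos hq (-1 / 8) m
  unfold wp
  fun_prop

lemma weights_w (hρ : 0 < ρ) (hρ1 : ρ ≤ 1 / 256) (hγ : 0 < γ) (hγ1 : γ ≤ 1 / 2) (hτ : 0 < τ) :
    Weights (wa ρ γ) (wa1 ρ γ) (wa2 ρ γ) (wp ρ τ) (wp1 ρ τ) (wth ρ γ τ) (wth1 ρ γ τ) (wom ρ γ) := by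
  have hd : ∀ q : ℝ, 0 ≤ q → q + 1 / τ ≠ 0 := fun q hq => by positivity
  constructor
  · intro q hq
    have h1 := pw_contDiff hρ hq (-1 / 2) 1
    have h2 := pw_contDiff hρ hq (-γ / 2) 1
    unfold wa; fun_prop
  · intro q hq
    have h1 := pw_contDiff hρ hq (-1 / 2) 1
    have h2 := pw_contDiff hρ hq (-γ / 2) 1
    unfold wa1; fun_prop
  · exact fun q hq => wp_cd hρ hq 1
  · intro q hq
    have h1 := pw_contDiff hρ hq (-1 / 2) 0
    have h2 := pw_contDiff one_pos hq (-1 / 8) 0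
    unfold wp1; fun_prop
  · intro q hq
    have h1 := pw_contDiff hρ hq (-1 / 2) 0
    have h2 := pw_contDiff hρ hq (-γ / 2) 0
    unfold wa2; fun_prop
  · intro q hq
    have h1 := wom_cd (γ := γ) hρ hq 1
    unfold wth
    exact h1.div (by fun_prop) (hd q hq)
  · intro q hq
    have h1 := wom_cd (γ := γ) hρ hq 0
    have h2 := pw_contDiff hρ hq (-1 / 2) 0
    have h3 := pw_contDiff hρ hq (-γ / 2) 0
    unfold wth1
    have h4 : ContDiffAt ℝ 0 (fun q : ℝ => q + 1 / τ) q := by fun_prop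
    exact (ContDiffAt.div (by fun_prop) h4 (hd q hq)).sub
      (h1.div (h4.pow 2) (pow_ne_zero 2 (hd q hq)))
  · exact fun q hq => wom_cd hρ hq 0
  · intro q hq
    refine ((dE hρ hq).mul ((dT (γ := γ) hρ hq).const_sub 2)).congr_deriv ?_
    unfold wa1; ring
  · intro q hq
    refine ((((dE hρ hq).pow 3).neg.add
      ((((dE hρ hq).pow 3).mul (dT (γ := γ) hρ hq)).const_mul ((1 + γ) / 2))).const_mul ρ).congr_deriv ?_
    unfold wa2; simp; ring
  · intro q hq
    refine ((((dW hq).pow 5).const_mul τ).mul (dE hρ hq)).congr_deriv ?_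
    unfold wp1; simp; ring
  · intro q hq
    have h1 : HasDerivAt (wom ρ γ) (γ * (-(ρ / 2) * (1 + γ) * (pw ρ (-1 / 2) q ^ 3 * pw ρ (-γ / 2) q))
        - (1 - γ) * (3 * ρ / 2 * pw ρ (-1 / 2) q ^ 5)) q := by
      refine ((((dE hρ hq).mul (dT (γ := γ) hρ hq)).const_mul γ).add
        (((dE hρ hq).pow 3).const_mul (1 - γ))).congr_deriv ?_
      simp; ring
    refine (h1.div ((hasDerivAt_id q).add_const (1 / τ)) (hd q hq)).congr_deriv ?_
    unfold wth1
    have := hd q hq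
    simp only [id]
    generalize (γ * (-(ρ / 2) * (1 + γ) * (pw ρ (-1 / 2) q ^ 3 * pw ρ (-γ / 2) q))
        - (1 - γ) * (3 * ρ / 2 * pw ρ (-1 / 2) q ^ 5)) = X
    generalize q + 1 / τ = z at *
    field_simp
  · intro q hq
    have h := wrel_pw hq hρ hρ1 hγ hγ1
    unfold wa1
    have h1 : 0 < pw ρ (-1 / 2) q ^ 3 := by have := h.hE; positivity
    have h3 : (1 + γ) / 2 * (pw ρ (-1 / 2) q ^ 3 * pw ρ (-γ / 2) q) ≤ 1 * (pw ρ (-1 / 2) q ^ 3 * 1) := by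
      have := h.hT1; have := h.hT0
      gcongr; linarith
    nlinarith
  · intro q hq
    have h := wrel_pw hq hρ hρ1 hγ hγ1
    have : 0 ≤ wom ρ γ q := by
      have := h.hE; have := h.hT0; have : 0 ≤ 1 - γ := by linarith
      unfold wom; positivity
    unfold wth; positivity
  · intro q hq
    have h := wrel_pw hq hρ hρ1 hγ hγ1
    have h0 : 0 ≤ wom ρ γ q := by
      have := h.hE; have := h.hT0; have : 0 ≤ 1 - γ := by linarith
      unfold wom; positivity
    have h1 : wth ρ γ τ q * q ≤ wom ρ γ q := by
      unfold wth
      rw [div_mul_eq_mul_div, div_le_iff₀ (by positivity)]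
      have : 0 ≤ wom ρ γ q * (1 / τ) := by positivity
      nlinarith
    have h2 := h.wp_ge
    unfold wom at h1
    unfold wa wa1
    linarith
end Wts

/-- Size bounds for the radial weights, and the Carleman phase `φ` with `∇(φ(|x|²)) = p x`. -/
structure WBounds (a p θ ω φ : ℝ → ℝ) (s K : ℝ) : Prop where
  one_le_K : 1 ≤ K
  a_nonneg : ∀ q, 0 ≤ q → 0 ≤ a q
  a_le : ∀ q, 0 ≤ q → a q ≤ K
  a_sq : ∀ q, 0 ≤ q → a q ^ 2 * q ≤ K ^ 2
  apq : ∀ q, 0 ≤ q → a q * q * p q ≤ K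
  a_th : ∀ q, 0 ≤ q → a q ^ 2 ≤ K * θ q * (1 + q) ^ s
  om : ∀ q, 0 ≤ q → (1 + q) ^ (-s) ≤ K * ω q
  p_nonneg : ∀ q, 0 ≤ q → 0 ≤ p q
  dφ : ∀ q, 0 ≤ q → HasDerivAt φ (p q / 2) q
  cφ : ∀ q, 0 ≤ q → ContDiffAt ℝ 2 φ q
  one_le : ∀ q, 0 ≤ q → 1 ≤ exp (φ q)
  exp_le : ∀ q, 0 ≤ q → exp (φ q) ≤ K

section Wts2
variable {ρ γ τ q : ℝ}

/-- `(1+ρq)^{-r} ≤ ρ⁻¹ (1+q)^{-r}` for `0 ≤ r ≤ 1`. -/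
lemma pw_le_pw_one (hρ : 0 < ρ) (hρ1 : ρ ≤ 1) (hq : 0 ≤ q) {r : ℝ} (h0 : 0 ≤ r) (h1 : r ≤ 1) :
    pw ρ (-r) q ≤ ρ⁻¹ * (1 + q) ^ (-r) := by
  unfold pw
  have hQ : 0 < 1 + q := by positivity
  have e1 : (1 + ρ * q) ^ (-r) ≤ (ρ * (1 + q)) ^ (-r) :=
    rpow_le_rpow_of_nonpos (by positivity) (by nlinarith) (by linarith)
  rw [mul_rpow hρ.le hQ.le] at e1
  refine e1.trans ?_
  gcongr
  rw [← rpow_neg_one]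
  exact rpow_le_rpow_of_exponent_ge hρ hρ1 (by linarith)

/-- The Carleman phase, as a function of `q = |x|²`. -/
def wphi (ρ τ q : ℝ) : ℝ := ∫ t in (0 : ℝ)..q, wp ρ τ t / 2

lemma wp_cont (hρ : 0 < ρ) (hρ1 : ρ ≤ 1) : ContDiffOn ℝ 1 (fun q => wp ρ τ q / 2) (Ioi (-1)) := by
  intro q hq
  have hq' : -1 < q := hq
  have h1 : ContDiffAt ℝ 1 (fun q : ℝ => 1 + ρ * q) q := by fun_prop
  have h2 : ContDiffAt ℝ 1 (fun q : ℝ => 1 + 1 * q) q := by fun_prop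
  have h1' := h1.rpow_const_of_ne (p := -1 / 2) (by nlinarith)
  have h2' := h2.rpow_const_of_ne (p := -1 / 8) (by nlinarith)
  refine ContDiffAt.contDiffWithinAt ?_
  unfold wp pw
  fun_prop

lemma wphi_deriv (hρ : 0 < ρ) (hρ1 : ρ ≤ 1) (hq : -1 < q) :
    HasDerivAt (wphi ρ τ) (wp ρ τ q / 2) q := by
  have hc := (wp_cont (τ := τ) hρ hρ1).continuousOn
  refine intervalIntegral.integral_hasDerivAt_right ?_ ?_ (hc.continuousAt (Ioi_mem_nhds hq))
  · refine (hc.mono ?_).intervalIntegrable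
    intro x hx
    rw [uIcc, mem_Icc] at hx
    exact lt_of_lt_of_le (lt_min (by norm_num) hq) hx.1
  · exact ContinuousOn.stronglyMeasurableAtFilter isOpen_Ioi hc q hq

lemma wphi_cd (hρ : 0 < ρ) (hρ1 : ρ ≤ 1) (hq : -1 < q) : ContDiffAt ℝ 2 (wphi ρ τ) q := by
  have : ContDiffOn ℝ (1 + 1) (wphi ρ τ) (Ioi (-1)) := by
    rw [contDiffOn_succ_iff_deriv_of_isOpen isOpen_Ioi]
    refine ⟨fun x hx => (wphi_deriv hρ hρ1 hx).differentiableAt.differentiableWithinAt, by simp, ?_⟩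
    exact (wp_cont (τ := τ) hρ hρ1).congr fun x hx => (wphi_deriv hρ hρ1 hx).deriv
  exact (this.contDiffAt (Ioi_mem_nhds hq)).of_le (by norm_num)

lemma wp_nonneg (hρ : 0 < ρ) (hτ : 0 < τ) (hq : 0 ≤ q) : 0 ≤ wp ρ τ q := by
  have h1 := pw_pos hρ hq (-1 / 2)
  have h2 := pw_pos one_pos hq (-1 / 8)
  unfold wp; positivity

lemma wphi_nonneg (hρ : 0 < ρ) (hτ : 0 < τ) (hq : 0 ≤ q) : 0 ≤ wphi ρ τ q :=
  intervalIntegral.integral_nonneg hq fun u hu => by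
    have := wp_nonneg hρ hτ hu.1
    positivity

lemma wphi_le (hρ : 0 < ρ) (hρ1 : ρ ≤ 1) (hτ : 0 < τ) (hq : 0 ≤ q) : wphi ρ τ q ≤ 4 * τ / ρ := by
  have hd : ∀ x, 0 ≤ x → HasDerivAt (fun x => wphi ρ τ x + 4 * τ / ρ * pw 1 (-1 / 8) x)
      (wp ρ τ x / 2 + 4 * τ / ρ * (1 * (-1 / 8) * pw 1 (-1 / 8 - 1) x)) x := fun x hx =>
    (wphi_deriv hρ hρ1 (by linarith)).add ((pw_deriv one_pos hx _).const_mul _)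
  have hanti : AntitoneOn (fun x => wphi ρ τ x + 4 * τ / ρ * pw 1 (-1 / 8) x) (Ici 0) := by
    refine antitoneOn_of_deriv_nonpos (convex_Ici 0)
      (fun x hx => (hd x hx).continuousAt.continuousWithinAt)
      (fun x hx => ?_) (fun x hx => ?_)
    · rw [interior_Ici] at hx
      exact (hd x (le_of_lt hx)).differentiableAt.differentiableWithinAt
    · rw [interior_Ici] at hx
      have hx : 0 ≤ x := le_of_lt hx
      rw [(hd x hx).deriv]
      have h1 : pw ρ (-(1 / 2)) x ≤ ρ⁻¹ * (1 + x) ^ (-(1 / 2) : ℝ) :=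
        pw_le_pw_one hρ hρ1 hx (by norm_num) (by norm_num)
      have h2 : wp ρ τ x ≤ τ * ρ⁻¹ * pw 1 (-1 / 8 - 1) x := by
        have e : pw 1 (-1 / 8 - 1) x = pw 1 (-1 / 8) x ^ 5 * (1 + x) ^ (-(1 / 2) : ℝ) := by
          have : (1 + x) ^ (-(1 / 2) : ℝ) = pw 1 (-(1 / 2)) x := by unfold pw; rw [one_mul]
          rw [this, pw_pow one_pos hx, pw_mul one_pos hx]; congr 1; norm_num
        rw [e]
        unfold wp
        have h3 := pw_pos one_pos hx (-1 / 8)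
        rw [show (-1 / 2 : ℝ) = -(1 / 2) by norm_num]
        calc τ * pw 1 (-1 / 8) x ^ 5 * pw ρ (-(1 / 2)) x
            ≤ τ * pw 1 (-1 / 8) x ^ 5 * (ρ⁻¹ * (1 + x) ^ (-(1 / 2) : ℝ)) := by gcongr
          _ = _ := by ring
      have e : 4 * τ / ρ * (1 * (-1 / 8) * pw 1 (-1 / 8 - 1) x)
          = - (τ * ρ⁻¹ * pw 1 (-1 / 8 - 1) x / 2) := by
        rw [div_eq_mul_inv]; ring
      rw [e]; linarith
  have h := hanti (mem_Ici.2 le_rfl) (mem_Ici.2 hq) hq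
  have h0 : wphi ρ τ 0 = 0 := by simp [wphi]
  have h1 : pw 1 (-1 / 8) 0 = 1 := by simp [pw]
  have h2 := pw_pos one_pos hq (-1 / 8)
  simp only [h0, h1] at h
  have : 0 ≤ 4 * τ / ρ * pw 1 (-1 / 8) q := by positivity
  linarith

lemma wbounds_w (hρ : 0 < ρ) (hρ1 : ρ ≤ 1 / 256) (hγ : 0 < γ) (hγ1 : γ ≤ 1 / 2) (hτ : 5 ≤ τ) :
    ∃ K, WBounds (wa ρ γ) (wp ρ τ) (wth ρ γ τ) (wom ρ γ) (wphi ρ τ) ((1 + γ) / 2) K := by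
  have hτ0 : 0 < τ := by linarith
  have hρ1' : ρ ≤ 1 := by linarith
  set K : ℝ := 2 + 4 / ρ + 2 * τ / ρ + 4 / (γ * ρ) + 1 / γ + exp (4 * τ / ρ) with hK
  have k1 : 0 < 4 / ρ := by positivity
  have k2 : 0 < 2 * τ / ρ := by positivity
  have k3 : 0 < 4 / (γ * ρ) := by positivity
  have k4 : 0 < 1 / γ := by positivity
  have k5 : 0 < exp (4 * τ / ρ) := by positivity
  have hK0 : 1 ≤ K := by linarith
  have hom : ∀ q, 0 ≤ q → γ * pw ρ (-((1 + γ) / 2)) q ≤ wom ρ γ q := fun q hq => by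
    have := (wrel_pw hq hρ hρ1 hγ hγ1).om_ge'
    rw [pw_mul hρ hq] at this
    unfold wom
    rw [pw_mul hρ hq]
    convert this using 3
    ring
  have hEq : ∀ q, 0 ≤ q → pw ρ (-1 / 2) q ^ 2 * q ≤ 1 / ρ := fun q hq => by
    have h := wrel_pw hq hρ hρ1 hγ hγ1
    rw [le_div_iff₀ hρ]
    nlinarith [h.hES, sq_nonneg (pw ρ (-1 / 2) q)]
  have ha0 : ∀ q, 0 ≤ q → 0 ≤ wa ρ γ q := fun q hq =>
    (wrel_pw hq hρ hρ1 hγ hγ1).hE.le.trans (wrel_pw hq hρ hρ1 hγ hγ1).le_a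
  have ha2 : ∀ q, 0 ≤ q → wa ρ γ q ≤ 2 * pw ρ (-1 / 2) q := fun q hq =>
    (wrel_pw hq hρ hρ1 hγ hγ1).a_le
  have hasq : ∀ q, 0 ≤ q → wa ρ γ q ^ 2 ≤ 4 * pw ρ (-1 / 2) q ^ 2 := fun q hq => by
    have := pow_le_pow_left₀ (ha0 q hq) (ha2 q hq) 2
    linarith
  refine ⟨K, ?_⟩
  constructor
  · exact hK0
  · exact ha0
  · intro q hq
    have := (wrel_pw hq hρ hρ1 hγ hγ1).hE1
    have := ha2 q hq
    linarith
  · intro q hq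
    have h1 : wa ρ γ q ^ 2 * q ≤ 4 * (1 / ρ) := by
      have := mul_le_mul_of_nonneg_right (hasq q hq) hq
      have := hEq q hq
      linarith
    have : 4 * (1 / ρ) = 4 / ρ := by ring
    nlinarith
  · intro q hq
    have h := wrel_pw hq hρ hρ1 hγ hγ1
    have h1 : wp ρ τ q ≤ τ * pw ρ (-1 / 2) q := by
      unfold wp
      have : pw 1 (-1 / 8) q ^ 5 ≤ 1 := pow_le_one₀ h.hW.le h.hW1
      have := h.hE
      calc τ * pw 1 (-1 / 8) q ^ 5 * pw ρ (-1 / 2) q ≤ τ * 1 * pw ρ (-1 / 2) q := by gcongr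
        _ = _ := by ring
    have h2 : wa ρ γ q * q * wp ρ τ q ≤ (2 * pw ρ (-1 / 2) q) * q * (τ * pw ρ (-1 / 2) q) := by
      have := ha0 q hq; have := ha2 q hq; have := h.hE; have := wp_nonneg hρ hτ0 hq
      gcongr
    have h3 := mul_le_mul_of_nonneg_left (hEq q hq) (show 0 ≤ 2 * τ by positivity)
    have : 2 * τ * (1 / ρ) = 2 * τ / ρ := by ring
    linarith
  · intro q hq
    have h := wrel_pw hq hρ hρ1 hγ hγ1
    have hd : 0 < q + 1 / τ := by positivity
    have hη : 1 / τ ≤ 1 := by rw [div_le_one hτ0]; linarith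
    have hQ : 0 < 1 + q := by positivity
    have e1 : pw ρ (-((1 - γ) / 2)) q ≤ ρ⁻¹ * (1 + q) ^ (-((1 - γ) / 2)) :=
      pw_le_pw_one hρ hρ1' hq (by linarith) (by linarith)
    have e2 : pw ρ (-1 / 2) q ^ 2 = pw ρ (-((1 + γ) / 2)) q * pw ρ (-((1 - γ) / 2)) q := by
      rw [pw_pow hρ hq, pw_mul hρ hq]; congr 1; push_cast; ring
    have e3 : (1 + q) ^ ((1 + γ) / 2) = (1 + q) ^ (-((1 - γ) / 2)) * (1 + q) := by
      rw [← rpow_add_one hQ.ne']; congr 1; ring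
    have hp := pw_pos hρ hq (-((1 + γ) / 2))
    have hω := hom q hq
    have hX : 0 < (1 + q) ^ (-((1 - γ) / 2)) := by positivity
    have hthQ : wom ρ γ q ≤ wth ρ γ τ q * (1 + q) := by
      unfold wth
      rw [div_mul_eq_mul_div, le_div_iff₀ hd]
      have : 0 ≤ wom ρ γ q := le_trans (by positivity) hω
      exact mul_le_mul_of_nonneg_left (by linarith) this
    have hth0 : 0 ≤ wth ρ γ τ q * (1 + q) := le_trans (by positivity) (hω.trans hthQ)
    calc wa ρ γ q ^ 2 ≤ 4 * pw ρ (-1 / 2) q ^ 2 := hasq q hq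
      _ ≤ 4 * (pw ρ (-((1 + γ) / 2)) q * (ρ⁻¹ * (1 + q) ^ (-((1 - γ) / 2)))) := by
          rw [e2]; gcongr
      _ = 4 / (γ * ρ) * (γ * pw ρ (-((1 + γ) / 2)) q) * (1 + q) ^ (-((1 - γ) / 2)) := by
          field_simp
      _ ≤ K * (wth ρ γ τ q * (1 + q)) * (1 + q) ^ (-((1 - γ) / 2)) := by
          have : 4 / (γ * ρ) ≤ K := by linarith
          have := hω.trans hthQ
          gcongr
      _ = _ := by rw [e3]; ring
  · intro q hq
    have h1 : (1 + q) ^ (-((1 + γ) / 2)) ≤ pw ρ (-((1 + γ) / 2)) q :=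
      rpow_le_rpow_of_nonpos (pw_base hρ hq) (by nlinarith) (by linarith)
    have h2 := hom q hq
    have hp := pw_pos hρ hq (-((1 + γ) / 2))
    calc (1 + q) ^ (-((1 + γ) / 2)) ≤ pw ρ (-((1 + γ) / 2)) q := h1
      _ = 1 / γ * (γ * pw ρ (-((1 + γ) / 2)) q) := by field_simp
      _ ≤ K * wom ρ γ q := by
          have : 1 / γ ≤ K := by linarith
          gcongr
  · exact fun q hq => wp_nonneg hρ hτ0 hq
  · exact fun q hq => wphi_deriv hρ hρ1' (by linarith)
  · exact fun q hq => wphi_cd hρ hρ1' (by linarith)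
  · exact fun q hq => one_le_exp (wphi_nonneg hρ hτ0 hq)
  · intro q hq
    have := exp_le_exp.2 (wphi_le hρ hρ1' hτ0 hq)
    linarith
end Wts2

/-- Carleman weights adapted to all potentials with `|V| ≤ CV ⟨x⟩⁻³` and all energies `λ ≥ λ₀`. -/
lemma exists_weights {n : ℕ} (hn : 4 ≤ n) {γ lam0 CV : ℝ} (hγ : 0 < γ) (hγ1 : γ ≤ 1 / 2)
    (hl : 0 < lam0) :
    ∃ a a1 a2 p p1 θ θ1 ω φ : ℝ → ℝ, ∃ K : ℝ, Weights a a1 a2 p p1 θ θ1 ω ∧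
      WBounds a p θ ω φ ((1 + γ) / 2) K ∧
      ∀ V : Euc n → ℝ, (∀ x, V x ^ 2 ≤ CV ^ 2 * (1 + ‖x‖ ^ 2) ^ (-3 : ℝ)) → ∀ lam, lam0 ≤ lam →
      ∀ (x : Euc n) (Y w : ℝ),
      θ (‖x‖ ^ 2) / 2 * Y ^ 2 + lam / 2 * ω (‖x‖ ^ 2) * w ^ 2 ≤
        θ (‖x‖ ^ 2) * Y ^ 2
        + ((n : ℝ) - 1) / 2 * ((((n : ℝ) - 1) / 2 + 1) * θ (‖x‖ ^ 2) + 2 * ‖x‖ ^ 2 * θ1 (‖x‖ ^ 2))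
            * w ^ 2
        + 4 * p (‖x‖ ^ 2) * a (‖x‖ ^ 2) * Y ^ 2
        + 2 * a (‖x‖ ^ 2) * (p (‖x‖ ^ 2) + 2 * ‖x‖ ^ 2 * p1 (‖x‖ ^ 2) + V x) * w * Y
        + (lam * (a (‖x‖ ^ 2) + 2 * ‖x‖ ^ 2 * a1 (‖x‖ ^ 2))
          + (‖x‖ ^ 2 * p (‖x‖ ^ 2) ^ 2 * a (‖x‖ ^ 2)
            + 2 * ‖x‖ ^ 2 * ((p (‖x‖ ^ 2) ^ 2 + 2 * ‖x‖ ^ 2 * p (‖x‖ ^ 2) * p1 (‖x‖ ^ 2))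
              * a (‖x‖ ^ 2) + ‖x‖ ^ 2 * p (‖x‖ ^ 2) ^ 2 * a1 (‖x‖ ^ 2)))
          - ((n : ℝ) - 1) / 2 * (2 * n * a1 (‖x‖ ^ 2) + 4 * ‖x‖ ^ 2 * a2 (‖x‖ ^ 2))) * w ^ 2 := by
  have hN : (4 : ℝ) ≤ n := by exact_mod_cast hn
  set b : ℝ := ((n : ℝ) - 1) / 2 with hb
  have hb32 : 3 / 2 ≤ b := by rw [hb]; linarith
  obtain ⟨τ, hτ5, hτ⟩ : ∃ τ : ℝ, 5 ≤ τ ∧ 32 * CV ^ 2 ≤ lam0 * τ := by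
    refine ⟨5 + 32 * CV ^ 2 / lam0, ?_, ?_⟩
    · have : 0 ≤ 32 * CV ^ 2 / lam0 := by positivity
      linarith
    · rw [mul_add, mul_div_cancel₀ _ hl.ne']; nlinarith
  have hτ0 : 0 < τ := by linarith
  obtain ⟨μ, hμ, hμ4, h2, h3, h4, h5⟩ : ∃ μ : ℝ, 0 < μ ∧ μ ≤ 1 / 4 ∧
      256 * CV ^ 2 * μ ≤ lam0 * γ ^ 2 ∧ 25 / 2 * τ * μ ≤ lam0 * γ ∧ 6 * τ ^ 2 * μ ≤ lam0 / 8 ∧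
      3 * b * μ ≤ lam0 / 8 := by
    have hev : ∀ c d : ℝ, 0 < d → ∀ᶠ μ : ℝ in 𝓝[>] 0, c * μ ≤ d := fun c d hd => by
      have : Tendsto (fun μ : ℝ => c * μ) (𝓝[>] 0) (𝓝 (c * 0)) :=
        (Continuous.tendsto (by fun_prop) 0).mono_left nhdsWithin_le_nhds
      rw [mul_zero] at this
      exact (this.eventually_lt_const hd).mono fun _ h => h.le
    have h0 : ∀ᶠ μ : ℝ in 𝓝[>] 0, 0 < μ := eventually_mem_nhdsWithin
    obtain ⟨μ, h⟩ := (h0.and <| (hev 1 (1 / 4) (by norm_num)).and <|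
      (hev (256 * CV ^ 2) (lam0 * γ ^ 2) (by positivity)).and <|
      (hev (25 / 2 * τ) (lam0 * γ) (by positivity)).and <|
      (hev (6 * τ ^ 2) (lam0 / 8) (by positivity)).and
      (hev (3 * b) (lam0 / 8) (by positivity))).exists
    exact ⟨μ, h.1, by simpa using h.2.1, h.2.2⟩
  have m2 : μ ^ 2 ≤ μ := by nlinarith
  have m4 : μ ^ 4 ≤ μ := by nlinarith [sq_nonneg μ]
  have m4' : μ ^ 4 ≤ 1 / 256 := by
    calc μ ^ 4 ≤ (1 / 4) ^ 4 := by gcongr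
      _ = _ := by norm_num
  have hρ : 0 < μ ^ 4 := by positivity
  obtain ⟨K, hK⟩ := wbounds_w hρ m4' hγ hγ1 hτ5
  refine ⟨_, _, _, _, _, _, _, _, _, K, weights_w hρ m4' hγ hγ1 hτ0, hK, ?_⟩
  intro V hV lam hlam x Y w
  have hq : 0 ≤ ‖x‖ ^ 2 := by positivity
  refine (wrel_pw hq hρ m4' hγ hγ1).key (CV := CV) (V := V x) (N := n) (b := b) hτ5 hl hlam hμ rfl hb32 hN rfl
    ?_ hτ ?_ ?_ h4 ?_ rfl rfl rfl rfl rfl rfl rfl rfl Y w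
  · rw [pw_pow one_pos hq]
    convert hV x using 2
    unfold pw
    rw [one_mul]; congr 1; norm_num
  · refine le_trans ?_ h2; gcongr
  · refine le_trans ?_ h3; gcongr
  · refine le_trans ?_ h5; gcongr

/-! ### Conjugation by the phase -/

section Conj
variable {n : ℕ} {p p1 φ : ℝ → ℝ}

lemma diff_nsq {x : Euc n} : DifferentiableAt ℝ (fun x : Euc n => ‖x‖ ^ 2) x :=
  (contDiff_norm_sq ℝ (n := 1)).differentiable (by norm_num) x

lemma conj_pd (dφ : ∀ q, 0 ≤ q → HasDerivAt φ (p q / 2) q) {u : Euc n → ℝ} (hu : ContDiff ℝ 2 u)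
    (i : Fin n) :
    pd i (fun x => exp (φ (‖x‖ ^ 2)) * u x)
      = fun x => exp (φ (‖x‖ ^ 2)) * (p (‖x‖ ^ 2) * x i * u x + pd i u x) := by
  ext x
  have hq : 0 ≤ ‖x‖ ^ 2 := by positivity
  have hc : HasDerivAt (fun q => exp (φ q)) (exp (φ (‖x‖ ^ 2)) * (p (‖x‖ ^ 2) / 2)) (‖x‖ ^ 2) :=
    (dφ _ hq).exp
  have h1 := pd_radial i x hc
  have hd : DifferentiableAt ℝ (fun x : Euc n => exp (φ (‖x‖ ^ 2))) x :=
    hc.differentiableAt.comp (f := fun x : Euc n => ‖x‖ ^ 2) x diff_nsq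
  rw [pd_mul i x hd (hu.differentiable (by norm_num) x), h1]
  ring

lemma conj_eul (dφ : ∀ q, 0 ≤ q → HasDerivAt φ (p q / 2) q) {u : Euc n → ℝ} (hu : ContDiff ℝ 2 u)
    (x : Euc n) :
    eul (fun x => exp (φ (‖x‖ ^ 2)) * u x) x
      = exp (φ (‖x‖ ^ 2)) * (eul u x + ‖x‖ ^ 2 * p (‖x‖ ^ 2) * u x) := by
  unfold eul
  simp_rw [conj_pd dφ hu]
  have : ‖x‖ ^ 2 * p (‖x‖ ^ 2) * u x = ∑ i, x i ^ 2 * (p (‖x‖ ^ 2) * u x) := by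
    rw [← Finset.sum_mul, ← norm_sq_eq_sum]; ring
  rw [this, ← Finset.sum_add_distrib, Finset.mul_sum]
  exact Finset.sum_congr rfl fun i _ => by ring

lemma conj_lap (dφ : ∀ q, 0 ≤ q → HasDerivAt φ (p q / 2) q)
    (dp : ∀ q, 0 ≤ q → HasDerivAt p (p1 q) q)
    {u : Euc n → ℝ} (hu : ContDiff ℝ 2 u) (x : Euc n) :
    lapR (fun x => exp (φ (‖x‖ ^ 2)) * u x) x
      = exp (φ (‖x‖ ^ 2)) * (lapR u x + 2 * p (‖x‖ ^ 2) * eul u x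
        + (n * p (‖x‖ ^ 2) + 2 * ‖x‖ ^ 2 * p1 (‖x‖ ^ 2) + ‖x‖ ^ 2 * p (‖x‖ ^ 2) ^ 2) * u x) := by
  have hq : 0 ≤ ‖x‖ ^ 2 := by positivity
  have hc : HasDerivAt (fun q => exp (φ q)) (exp (φ (‖x‖ ^ 2)) * (p (‖x‖ ^ 2) / 2)) (‖x‖ ^ 2) :=
    (dφ _ hq).exp
  have hd : DifferentiableAt ℝ (fun x : Euc n => exp (φ (‖x‖ ^ 2))) x :=
    hc.differentiableAt.comp (f := fun x : Euc n => ‖x‖ ^ 2) x diff_nsq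
  have hdp : DifferentiableAt ℝ (fun x : Euc n => p (‖x‖ ^ 2)) x :=
    (dp _ hq).differentiableAt.comp (f := fun x : Euc n => ‖x‖ ^ 2) x diff_nsq
  have hu1 := hu.differentiable (by norm_num) x
  have hco : ∀ i : Fin n, DifferentiableAt ℝ (fun y : Euc n => y i) x := fun i =>
    (contDiff_coord i (m := 1)).differentiable (by norm_num) x
  have hpu : ∀ i, DifferentiableAt ℝ (pd i u) x := fun i =>
    (contDiff_pd hu (k := 1) (by norm_num) i).differentiable (by norm_num) x
  have key : ∀ i, pd i (pd i (fun x => exp (φ (‖x‖ ^ 2)) * u x)) x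
      = exp (φ (‖x‖ ^ 2)) * (pd i (pd i u) x + 2 * p (‖x‖ ^ 2) * (x i * pd i u x) + p (‖x‖ ^ 2) * u x
        + x i ^ 2 * ((2 * p1 (‖x‖ ^ 2) + p (‖x‖ ^ 2) ^ 2) * u x)) := by
    intro i
    have h1 : DifferentiableAt ℝ (fun x : Euc n => p (‖x‖ ^ 2) * x i) x := hdp.mul (hco i)
    have h2 : DifferentiableAt ℝ (fun x : Euc n => p (‖x‖ ^ 2) * x i * u x) x := h1.mul hu1
    have h3 : DifferentiableAt ℝ (fun x : Euc n => p (‖x‖ ^ 2) * x i * u x + pd i u x) x :=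
      h2.add (hpu i)
    rw [conj_pd dφ hu i,
      pd_mul i x hd h3, pd_radial i x hc,
      pd_add i x h2 (hpu i), pd_mul i x h1 hu1,
      pd_mul i x hdp (hco i), pd_radial i x (dp _ hq), pd_coord, if_pos rfl]
    ring
  unfold lapR
  simp_rw [key]
  rw [← Finset.mul_sum]
  congr 1
  simp_rw [Finset.sum_add_distrib, ← Finset.mul_sum, ← Finset.sum_mul]
  rw [← norm_sq_eq_sum]
  simp [eul]
  ring

lemma conj_contDiff (cφ : ∀ q, 0 ≤ q → ContDiffAt ℝ 2 φ q) {u : Euc n → ℝ} (hu : ContDiff ℝ 2 u) :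
    ContDiff ℝ 2 (fun x => exp (φ (‖x‖ ^ 2)) * u x) :=
  (contDiff_radial (c := fun q => exp (φ q)) fun q hq => (cφ q hq).exp).mul hu

end Conj

set_option maxHeartbeats 1000000 in
/-- Pointwise bound of the right-hand side of the Carleman inequality. -/
lemma pt_rhs {a e θ S K b q p ε Y1 Y2 u1 u2 f1 f2 g1 g2 d1 d2 un fn gn Dn : ℝ}
    (hK : 1 ≤ K) (ha : 0 ≤ a) (haK : a ≤ K) (hq : 0 ≤ q) (hp : 0 ≤ p) (haq : a ^ 2 * q ≤ K ^ 2)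
    (hapq : a * q * p ≤ K) (hth : a ^ 2 ≤ K * θ * S) (hθ : 0 ≤ θ) (hS : 0 ≤ S) (he : 1 ≤ e)
    (heK : e ≤ K) (hb : 0 ≤ b)
    (hY1 : Y1 = e * (d1 + q * p * u1) + b * (e * u1)) (hY2 : Y2 = e * (d2 + q * p * u2) + b * (e * u2))
    (hun : un ^ 2 = u1 ^ 2 + u2 ^ 2) (hun0 : 0 ≤ un) (hfn : fn ^ 2 = f1 ^ 2 + f2 ^ 2)
    (hgn : gn ^ 2 = g1 ^ 2 + g2 ^ 2) (hgn0 : 0 ≤ gn) (hDn0 : 0 ≤ Dn)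
    (hD : d1 ^ 2 + d2 ^ 2 ≤ q * Dn ^ 2) :
    2 * a * Y1 * (e * (f1 + g1 - ε * u2)) + 2 * a * Y2 * (e * (f2 + g2 + ε * u1))
      ≤ θ / 4 * (Y1 ^ 2 + Y2 ^ 2) + 4 * K ^ 3 * (S * fn ^ 2)
        + 2 * K ^ 3 * (gn * (Dn + (1 + b) * un)) + 2 * |ε| * K ^ 3 * (un * Dn) := by
  have he0 : 0 < e := by linarith
  have hK0 : 0 < K := by linarith
  -- the norm of the radial derivative
  obtain ⟨d, hd0, hd⟩ : ∃ d, 0 ≤ d ∧ d ^ 2 = d1 ^ 2 + d2 ^ 2 :=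
    ⟨√(d1 ^ 2 + d2 ^ 2), by positivity, Real.sq_sqrt (by positivity)⟩
  have had : a * d ≤ K * Dn := by
    refine abs_le_of_sq_le_sq' ?_ (by positivity) |>.2
    calc (a * d) ^ 2 = a ^ 2 * d ^ 2 := by ring
      _ ≤ a ^ 2 * (q * Dn ^ 2) := by rw [hd]; gcongr
      _ = a ^ 2 * q * Dn ^ 2 := by ring
      _ ≤ K ^ 2 * Dn ^ 2 := by gcongr
      _ = _ := by ring
  -- Cauchy-Schwarz in the plane
  have cs : ∀ x1 x2 y1 y2 x y : ℝ, x ^ 2 = x1 ^ 2 + x2 ^ 2 → y ^ 2 = y1 ^ 2 + y2 ^ 2 → 0 ≤ x → 0 ≤ y →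
      x1 * y1 + x2 * y2 ≤ x * y := by
    intro x1 x2 y1 y2 x y hx hy hx0 hy0
    refine abs_le_of_sq_le_sq' ?_ (by positivity) |>.2
    rw [mul_pow, hx, hy]
    nlinarith [sq_nonneg (x1 * y2 - x2 * y1)]
  have tf : 2 * a * Y1 * (e * f1) + 2 * a * Y2 * (e * f2)
      ≤ θ / 4 * (Y1 ^ 2 + Y2 ^ 2) + 4 * K ^ 3 * (S * fn ^ 2) := by
    have one : ∀ Y f : ℝ, 2 * a * Y * (e * f) ≤ θ / 4 * Y ^ 2 + 4 * K ^ 3 * (S * f ^ 2) := by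
      intro Y f
      have h1 : (a * e * Y * f) ^ 2 ≤ (θ / 4 * Y ^ 2) * (4 * K ^ 3 * (S * f ^ 2)) := by
        calc (a * e * Y * f) ^ 2 = a ^ 2 * e ^ 2 * (Y ^ 2 * f ^ 2) := by ring
          _ ≤ (K * θ * S) * K ^ 2 * (Y ^ 2 * f ^ 2) := by gcongr
          _ = _ := by ring
      have h2 : 0 ≤ θ / 4 * Y ^ 2 := by positivity
      have h3 : 0 ≤ 4 * K ^ 3 * (S * f ^ 2) := by positivity
      generalize θ / 4 * Y ^ 2 = A at *
      generalize 4 * K ^ 3 * (S * f ^ 2) = B at *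
      have h4 : 2 * (a * e * Y * f) ≤ A + B := by
        refine abs_le_of_sq_le_sq' ?_ (by positivity) |>.2
        nlinarith [sq_nonneg (A - B)]
      linarith
    have := one Y1 f1; have := one Y2 f2
    rw [hfn]; linarith
  have tg : 2 * a * Y1 * (e * g1) + 2 * a * Y2 * (e * g2)
      ≤ 2 * K ^ 3 * (gn * (Dn + (1 + b) * un)) := by
    have c1 := cs d1 d2 g1 g2 d gn hd hgn hd0 hgn0
    have c2 := cs u1 u2 g1 g2 un gn hun hgn hun0 hgn0
    have e1 : 2 * a * Y1 * (e * g1) + 2 * a * Y2 * (e * g2)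
        = 2 * e ^ 2 * (a * (d1 * g1 + d2 * g2) + (a * q * p + a * b) * (u1 * g1 + u2 * g2)) := by
      rw [hY1, hY2]; ring
    rw [e1]
    calc 2 * e ^ 2 * (a * (d1 * g1 + d2 * g2) + (a * q * p + a * b) * (u1 * g1 + u2 * g2))
        ≤ 2 * e ^ 2 * (a * (d * gn) + (a * q * p + a * b) * (un * gn)) := by gcongr
      _ = 2 * e ^ 2 * ((a * d) * gn + (a * q * p + a * b) * (un * gn)) := by ring
      _ ≤ 2 * K ^ 2 * ((K * Dn) * gn + (K + K * b) * (un * gn)) := by gcongr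
      _ = _ := by ring
  have te : 2 * a * Y1 * (e * (-ε * u2)) + 2 * a * Y2 * (e * (ε * u1))
      ≤ 2 * |ε| * K ^ 3 * (un * Dn) := by
    have e1 : 2 * a * Y1 * (e * (-ε * u2)) + 2 * a * Y2 * (e * (ε * u1))
        = 2 * a * e ^ 2 * (ε * (d2 * u1 - d1 * u2)) := by
      rw [hY1, hY2]; ring
    have c1 := cs d2 d1 u1 (-u2) d un (by rw [hd]; ring) (by rw [hun]; ring) hd0 hun0
    have c2 := cs d2 d1 (-u1) u2 d un (by rw [hd]; ring) (by rw [hun]; ring) hd0 hun0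
    have c3 : ε * (d2 * u1 - d1 * u2) ≤ |ε| * (d * un) := by
      calc ε * (d2 * u1 - d1 * u2) ≤ |ε * (d2 * u1 - d1 * u2)| := le_abs_self _
        _ = |ε| * |d2 * u1 - d1 * u2| := abs_mul _ _
        _ ≤ |ε| * (d * un) := by
          gcongr
          exact abs_le.2 ⟨by linarith only [c2], by linarith only [c1]⟩
    rw [e1]
    calc 2 * a * e ^ 2 * (ε * (d2 * u1 - d1 * u2)) ≤ 2 * a * e ^ 2 * (|ε| * (d * un)) := by gcongr
      _ = 2 * |ε| * e ^ 2 * (a * d) * un := by ring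
      _ ≤ 2 * |ε| * K ^ 2 * (K * Dn) * un := by gcongr
      _ = _ := by ring
  have : 2 * a * Y1 * (e * (f1 + g1 - ε * u2)) + 2 * a * Y2 * (e * (f2 + g2 + ε * u1))
      = (2 * a * Y1 * (e * f1) + 2 * a * Y2 * (e * f2)) + (2 * a * Y1 * (e * g1) + 2 * a * Y2 * (e * g2))
        + (2 * a * Y1 * (e * (-ε * u2)) + 2 * a * Y2 * (e * (ε * u1))) := by ring
  linarith only [this, tf, tg, te]

section CarlU
variable {n : ℕ} {a a1 a2 p p1 θ θ1 ω φ : ℝ → ℝ}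

lemma off_supp {u : Euc n → ℝ} {x : Euc n} (hx : x ∉ tsupport u) :
    u x = 0 ∧ eul u x = 0 ∧ gsq u x = 0 ∧ lapR u x = 0 := by
  refine ⟨image_eq_zero_of_notMem_tsupport hx, by simp [eul, pd_eq_zero hx],
    by simp [gsq, pd_eq_zero hx], ?_⟩
  unfold lapR
  refine Finset.sum_eq_zero fun i _ => pd_eq_zero (fun h => hx ?_) i
  exact closure_minimal (fun y hy => by
    by_contra h'
    exact hy (pd_eq_zero h' i)) (isClosed_tsupport _) h

lemma mkI {F u : Euc n → ℝ} (hs : HasCompactSupport u) (hF : Continuous F)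
    (h : ∀ x, x ∉ tsupport u → F x = 0) : Integrable F :=
  hF.integrable_of_hasCompactSupport (HasCompactSupport.intro hs h)

/-- The Carleman inequality for `v = e^φ u`, written in terms of `u`, together with the
integrability of both sides. -/
lemma carleman_u (hw : Weights a a1 a2 p p1 θ θ1 ω) {s K : ℝ} (hB : WBounds a p θ ω φ s K) {b : ℝ}
    (hb : b = ((n : ℝ) - 1) / 2)
    {V : Euc n → ℝ} (hVm : Measurable V) {CV : ℝ} (hVb : ∀ x, |V x| ≤ CV) (lam : ℝ)
    (key : ∀ (x : Euc n) (Y w : ℝ),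
      θ (‖x‖ ^ 2) / 2 * Y ^ 2 + lam / 2 * ω (‖x‖ ^ 2) * w ^ 2 ≤
        θ (‖x‖ ^ 2) * Y ^ 2
        + b * ((b + 1) * θ (‖x‖ ^ 2) + 2 * ‖x‖ ^ 2 * θ1 (‖x‖ ^ 2)) * w ^ 2
        + 4 * p (‖x‖ ^ 2) * a (‖x‖ ^ 2) * Y ^ 2
        + 2 * a (‖x‖ ^ 2) * (p (‖x‖ ^ 2) + 2 * ‖x‖ ^ 2 * p1 (‖x‖ ^ 2) + V x) * w * Y
        + (lam * (a (‖x‖ ^ 2) + 2 * ‖x‖ ^ 2 * a1 (‖x‖ ^ 2))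
          + (‖x‖ ^ 2 * p (‖x‖ ^ 2) ^ 2 * a (‖x‖ ^ 2)
            + 2 * ‖x‖ ^ 2 * ((p (‖x‖ ^ 2) ^ 2 + 2 * ‖x‖ ^ 2 * p (‖x‖ ^ 2) * p1 (‖x‖ ^ 2))
              * a (‖x‖ ^ 2) + ‖x‖ ^ 2 * p (‖x‖ ^ 2) ^ 2 * a1 (‖x‖ ^ 2)))
          - b * (2 * n * a1 (‖x‖ ^ 2) + 4 * ‖x‖ ^ 2 * a2 (‖x‖ ^ 2))) * w ^ 2)
    {u Y : Euc n → ℝ} (hu : ContDiff ℝ 2 u) (hs : HasCompactSupport u)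
    (hY : ∀ x, Y x = exp (φ (‖x‖ ^ 2)) * (eul u x + ‖x‖ ^ 2 * p (‖x‖ ^ 2) * u x)
      + b * (exp (φ (‖x‖ ^ 2)) * u x)) :
    Integrable (fun x => θ (‖x‖ ^ 2) / 2 * Y x ^ 2
      + lam / 2 * ω (‖x‖ ^ 2) * (exp (φ (‖x‖ ^ 2)) * u x) ^ 2) ∧
    Integrable (fun x => θ (‖x‖ ^ 2) / 4 * Y x ^ 2) ∧
    Integrable (fun x => 2 * a (‖x‖ ^ 2) * Y x * (exp (φ (‖x‖ ^ 2)) *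
        (-lapR u x + V x * u x - lam * u x))) ∧
    ∫ x, (θ (‖x‖ ^ 2) / 2 * Y x ^ 2 + lam / 2 * ω (‖x‖ ^ 2) * (exp (φ (‖x‖ ^ 2)) * u x) ^ 2)
      ≤ ∫ x, 2 * a (‖x‖ ^ 2) * Y x * (exp (φ (‖x‖ ^ 2)) *
        (-lapR u x + V x * u x - lam * u x)) := by
  have hv := conj_contDiff hB.cφ hu
  have hvs : HasCompactSupport (fun x => exp (φ (‖x‖ ^ 2)) * u x) := hs.mul_left
  have main := carleman_real hw hb hVm hVb lam key hv hvs
  simp_rw [conj_eul hB.dφ hu, conj_lap hB.dφ hw.dp hu, ← hY] at main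
  have e : ∀ x : Euc n, -(exp (φ (‖x‖ ^ 2)) * (lapR u x + 2 * p (‖x‖ ^ 2) * eul u x
        + (n * p (‖x‖ ^ 2) + 2 * ‖x‖ ^ 2 * p1 (‖x‖ ^ 2) + ‖x‖ ^ 2 * p (‖x‖ ^ 2) ^ 2) * u x))
        + 2 * p (‖x‖ ^ 2) * (exp (φ (‖x‖ ^ 2)) * (eul u x + ‖x‖ ^ 2 * p (‖x‖ ^ 2) * u x))
          + (n * p (‖x‖ ^ 2) + 2 * ‖x‖ ^ 2 * p1 (‖x‖ ^ 2)) * (exp (φ (‖x‖ ^ 2)) * u x)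
          - ‖x‖ ^ 2 * p (‖x‖ ^ 2) ^ 2 * (exp (φ (‖x‖ ^ 2)) * u x)
          + V x * (exp (φ (‖x‖ ^ 2)) * u x) - lam * (exp (φ (‖x‖ ^ 2)) * u x)
      = exp (φ (‖x‖ ^ 2)) * (-lapR u x + V x * u x - lam * u x) := fun x => by ring
  simp_rw [e] at main
  have cv := hu.continuous
  have ce : Continuous (eul u) := (contDiff_eul hu (k := 1) (by norm_num)).continuous
  have cl := cont_lapR hu
  have ca := contRad1 (n := n) hw.ca
  have cp := contRad1 (n := n) hw.cp
  have cθ := contRad1 (n := n) hw.cθ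
  have cω := contRad (n := n) hw.cω
  have cφ : Continuous (fun x : Euc n => φ (‖x‖ ^ 2)) := (contDiff_radial hB.cφ).continuous
  have cY : Continuous Y := by
    have : Y = _ := funext hY
    rw [this]
    obtain ⟨P, hP⟩ : ∃ A : Euc n → ℝ, ∀ x, p (‖x‖ ^ 2) = A x := ⟨_, fun _ => rfl⟩
    obtain ⟨Φ, hΦ⟩ : ∃ A : Euc n → ℝ, ∀ x, φ (‖x‖ ^ 2) = A x := ⟨_, fun _ => rfl⟩
    simp only [hP, hΦ] at *
    fun_prop
  have hz : ∀ x, x ∉ tsupport u → Y x = 0 := fun x hx => by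
    rw [hY, (off_supp hx).1, (off_supp hx).2.1]; ring
  obtain ⟨A, hA⟩ : ∃ A : Euc n → ℝ, ∀ x, a (‖x‖ ^ 2) = A x := ⟨_, fun _ => rfl⟩
  obtain ⟨Φ, hΦ⟩ : ∃ A : Euc n → ℝ, ∀ x, φ (‖x‖ ^ 2) = A x := ⟨_, fun _ => rfl⟩
  obtain ⟨Θ, hΘ⟩ : ∃ A : Euc n → ℝ, ∀ x, θ (‖x‖ ^ 2) = A x := ⟨_, fun _ => rfl⟩
  obtain ⟨Ω, hΩ⟩ : ∃ A : Euc n → ℝ, ∀ x, ω (‖x‖ ^ 2) = A x := ⟨_, fun _ => rfl⟩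
  simp only [hA, hΦ, hΘ, hΩ] at ca cφ cθ cω main ⊢
  refine ⟨?_, ?_, ?_, main⟩
  · exact mkI hs (by fun_prop) fun x hx => by rw [(off_supp hx).1, hz x hx]; ring
  · exact mkI hs (by fun_prop) fun x hx => by rw [hz x hx]; ring
  · have h1 : Integrable (fun x => 2 * A x * Y x * (exp (Φ x) * (-lapR u x - lam * u x))) :=
      mkI hs (by fun_prop) fun x hx => by rw [hz x hx]; ring
    have h2 : Integrable (fun x => V x * (2 * A x * Y x * (exp (Φ x) * u x))) := by
      refine Integrable.bdd_mul (c := CV) ?_ hVm.aestronglyMeasurable (ae_of_all _ hVb)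
      exact mkI hs (by fun_prop) fun x hx => by rw [hz x hx]; ring
    refine (h1.add h2).congr (ae_of_all _ fun x => ?_)
    simp only [Pi.add_apply]; ring

end CarlU

section Energy
variable {n : ℕ}

lemma gsq_nonneg (u : Euc n → ℝ) (x : Euc n) : 0 ≤ gsq u x := Finset.sum_nonneg fun _ _ => sq_nonneg _

lemma green_sq {u : Euc n → ℝ} (hu : ContDiff ℝ 2 u) (hs : HasCompactSupport u) :
    ∫ x, -lapR u x * u x = ∫ x, gsq u x := by
  rw [green hu hs (hu.of_le (by norm_num))]
  simp [gsq, sq]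

/-- Real and imaginary parts of `⟨(-Δ+V-λ-iε)u, u⟩`. -/
lemma energy {V : Euc n → ℝ} {lam ε : ℝ}
    {u1 u2 F1 F2 : Euc n → ℝ} (h1 : ContDiff ℝ 2 u1) (s1 : HasCompactSupport u1)
    (h2 : ContDiff ℝ 2 u2) (s2 : HasCompactSupport u2)
    (hF1 : ∀ x, -lapR u1 x + V x * u1 x - lam * u1 x + ε * u2 x = F1 x)
    (hF2 : ∀ x, -lapR u2 x + V x * u2 x - lam * u2 x - ε * u1 x = F2 x) :
    Integrable (fun x => u1 x * F1 x + u2 x * F2 x + (lam - V x) * (u1 x ^ 2 + u2 x ^ 2)) ∧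
    (∫ x, (u1 x * F1 x + u2 x * F2 x + (lam - V x) * (u1 x ^ 2 + u2 x ^ 2))
      = ∫ x, (gsq u1 x + gsq u2 x)) ∧
    Integrable (fun x => u2 x * F1 x - u1 x * F2 x) ∧
    ∫ x, (u2 x * F1 x - u1 x * F2 x) = ε * ∫ x, (u1 x ^ 2 + u2 x ^ 2) := by
  have c1 := h1.continuous
  have c2 := h2.continuous
  have l1 := cont_lapR h1
  have l2 := cont_lapR h2
  have g1 : Continuous (gsq u1) := (contDiff_gsq h1 (k := 1) (by norm_num)).continuous
  have g2 : Continuous (gsq u2) := (contDiff_gsq h2 (k := 1) (by norm_num)).continuous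
  have i1 : Integrable (fun x => -lapR u1 x * u1 x) :=
    mkI s1 (by fun_prop) fun x hx => by simp [(off_supp hx).1]
  have i2 : Integrable (fun x => -lapR u2 x * u2 x) :=
    mkI s2 (by fun_prop) fun x hx => by simp [(off_supp hx).1]
  have i3 : Integrable (fun x => -lapR u1 x * u2 x) :=
    mkI s2 (by fun_prop) fun x hx => by simp [(off_supp hx).1]
  have i4 : Integrable (fun x => -lapR u2 x * u1 x) :=
    mkI s1 (by fun_prop) fun x hx => by simp [(off_supp hx).1]
  have ig1 : Integrable (gsq u1) := mkI s1 g1 fun x hx => (off_supp hx).2.2.1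
  have ig2 : Integrable (gsq u2) := mkI s2 g2 fun x hx => (off_supp hx).2.2.1
  have q1 : Integrable (fun x => u1 x ^ 2) :=
    mkI s1 (by fun_prop) fun x hx => by simp [(off_supp hx).1]
  have q2 : Integrable (fun x => u2 x ^ 2) :=
    mkI s2 (by fun_prop) fun x hx => by simp [(off_supp hx).1]
  rw [← and_assoc]
  constructor
  · have e : ∀ x, u1 x * F1 x + u2 x * F2 x + (lam - V x) * (u1 x ^ 2 + u2 x ^ 2)
        = -lapR u1 x * u1 x + -lapR u2 x * u2 x := fun x => by
      rw [← hF1, ← hF2]; ring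
    simp_rw [e]
    refine ⟨i1.fun_add i2, ?_⟩
    rw [integral_add i1 i2, integral_add ig1 ig2, green_sq h1 s1, green_sq h2 s2]
  · have e : ∀ x, u2 x * F1 x - u1 x * F2 x
        = (-lapR u1 x * u2 x - -lapR u2 x * u1 x) + ε * (u1 x ^ 2 + u2 x ^ 2) := fun x => by
      rw [← hF1, ← hF2]; ring
    simp_rw [e]
    refine ⟨(isub i3 i4).fun_add ((q1.fun_add q2).const_mul ε), ?_⟩
    rw [integral_add (isub i3 i4) ((q1.fun_add q2).const_mul ε), integral_sub i3 i4,
      green h1 s2 (h2.of_le (by norm_num)), green h2 s1 (h1.of_le (by norm_num)),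
      integral_const_mul]
    simp_rw [mul_comm (pd _ u1 _)]
    ring

end Energy

/-- The final absorption step of the a priori estimate, as an inequality between numbers. Here
`X = ‖⟨x⟩⁻ˢu‖²`, `F = ‖⟨x⟩ˢf‖²`, `U = ‖u‖²`, `D = ‖∇u‖²`, `G = ‖g‖²`, `J = ∫|f||u|`, `H = ∫|g||u|`,
`M = ∫|u||∇u|` and `N = ∫|g||∇u|`. -/
lemma absorb {X F U D G J H M N K b lam lam0 CV ε κ m : ℝ} (hK : 1 ≤ K) (hb : 0 ≤ b) (hl0 : 0 < lam0)
    (hl : lam0 ≤ lam) (hCV : 0 ≤ CV) (hε : |ε| ≤ 1) (hκ : 0 < κ) (hκ1 : κ ≤ 1) (hm : 0 < m)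
    (hm2 : m ^ 2 = 1 + lam + CV) (hU : 0 ≤ U) (hG : 0 ≤ G) (hF : 0 ≤ F) (hJ : 0 ≤ J) (hH : 0 ≤ H)
    (main : lam / (2 * K) * X ≤ 4 * K ^ 3 * F + 2 * K ^ 3 * (N + (1 + b) * H) + 2 * |ε| * K ^ 3 * M)
    (hεU : |ε| * U ≤ J + H) (hD : D ≤ J + H + (lam + CV) * U)
    (hM : M ≤ m / 2 * U + 1 / (2 * m) * D)
    (hJ1 : ∀ t, 0 < t → J ≤ t / 2 * X + 1 / (2 * t) * F) (hJ2 : J ≤ F + U)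
    (hH1 : H ≤ κ⁻¹ * G + κ * U) (hH2 : H ≤ G + U) (hN : N ≤ κ⁻¹ * G + κ * D) :
    lam * X ≤ (4 * K * (4 * K ^ 3 + 4 * K ^ 7 * ((1 + lam0 + CV) / lam0))) * F
      + (4 * K * (2 * K ^ 3 * (m + 1 + b) + 4 * K ^ 3 * (2 + lam + CV))) *
        (κ⁻¹ * G + κ * (U + F)) := by
  have hK0 : 0 < K := by linarith
  have hlam : 0 < lam := by linarith
  have hε0 := abs_nonneg ε
  have hk : κ ≤ κ⁻¹ := by
    rw [le_inv_comm₀ hκ hκ]; exact hκ1.trans ((one_le_inv₀ hκ).2 hκ1)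
  have sM : |ε| * M ≤ m * (J + H) := by
    have h1 : |ε| * D ≤ m ^ 2 * (J + H) := by
      calc |ε| * D ≤ |ε| * (J + H + (lam + CV) * U) := by gcongr
        _ = |ε| * (J + H) + (lam + CV) * (|ε| * U) := by ring
        _ ≤ 1 * (J + H) + (lam + CV) * (J + H) := by gcongr
        _ = m ^ 2 * (J + H) := by rw [hm2]; ring
    calc |ε| * M ≤ |ε| * (m / 2 * U + 1 / (2 * m) * D) := by gcongr
      _ = m / 2 * (|ε| * U) + 1 / (2 * m) * (|ε| * D) := by ring
      _ ≤ m / 2 * (J + H) + 1 / (2 * m) * (m ^ 2 * (J + H)) := by gcongr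
      _ = m * (J + H) := by field_simp; ring
  have sJ : 2 * K ^ 3 * (m * J) ≤ lam / (4 * K) * X + 4 * K ^ 7 * ((1 + lam0 + CV) / lam0) * F := by
    have h1 := hJ1 (lam / (4 * K ^ 4 * m)) (by positivity)
    have h2 : m ^ 2 / lam ≤ (1 + lam0 + CV) / lam0 := by
      rw [hm2, div_le_div_iff₀ hlam hl0]; nlinarith
    calc 2 * K ^ 3 * (m * J)
        ≤ 2 * K ^ 3 * (m * (lam / (4 * K ^ 4 * m) / 2 * X + 1 / (2 * (lam / (4 * K ^ 4 * m))) * F)) := by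
          gcongr
      _ = lam / (4 * K) * X + 4 * K ^ 7 * (m ^ 2 / lam) * F := by field_simp
      _ ≤ _ := by gcongr
  have sN : N ≤ (2 + lam + CV) * (2 * (κ⁻¹ * G) + κ * (U + F)) := by
    have hD' : D ≤ F + G + (2 + lam + CV) * U := by linarith
    have h2 : κ * G ≤ κ⁻¹ * G := by gcongr
    have h3 : 0 ≤ κ⁻¹ * G := by positivity
    have h4 : 0 ≤ κ * F := by positivity
    have h5 : 0 ≤ (lam + CV) * (2 * (κ⁻¹ * G) + κ * F) := by positivity
    have h6 : κ * D ≤ κ * (F + G + (2 + lam + CV) * U) := by gcongr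
    linarith only [hN, h2, h3, h4, h5, h6]
  have sH : H ≤ κ⁻¹ * G + κ * (U + F) := by
    have : 0 ≤ κ * F := by positivity
    linarith only [this, hH1]
  set R := κ⁻¹ * G + κ * (U + F) with hR
  have hR0 : 0 ≤ κ * (U + F) := by positivity
  have sN' : N ≤ (2 + lam + CV) * (2 * R) := by
    refine sN.trans ?_
    gcongr
    rw [hR]; linarith
  have t1 : 2 * K ^ 3 * (N + (1 + b) * H) ≤ 2 * K ^ 3 * ((2 + lam + CV) * (2 * R) + (1 + b) * R) := by
    gcongr
  have t2 : 2 * |ε| * K ^ 3 * M ≤ 2 * K ^ 3 * (m * J) + 2 * K ^ 3 * (m * R) := by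
    calc 2 * |ε| * K ^ 3 * M = 2 * K ^ 3 * (|ε| * M) := by ring
      _ ≤ 2 * K ^ 3 * (m * (J + H)) := by gcongr
      _ = 2 * K ^ 3 * (m * J) + 2 * K ^ 3 * (m * H) := by ring
      _ ≤ _ := by gcongr
  have e1 : lam / (2 * K) * X = lam / (4 * K) * X + lam / (4 * K) * X := by field_simp; ring
  have fin : lam / (4 * K) * X ≤ (4 * K ^ 3 + 4 * K ^ 7 * ((1 + lam0 + CV) / lam0)) * F
      + (2 * K ^ 3 * (m + 1 + b) + 4 * K ^ 3 * (2 + lam + CV)) * R := by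
    linarith only [main, t1, t2, sJ, e1]
  calc lam * X = 4 * K * (lam / (4 * K) * X) := by field_simp
    _ ≤ 4 * K * ((4 * K ^ 3 + 4 * K ^ 7 * ((1 + lam0 + CV) / lam0)) * F
      + (2 * K ^ 3 * (m + 1 + b) + 4 * K ^ 3 * (2 + lam + CV)) * R) := by gcongr
    _ = _ := by ring

/-! ### The a priori estimate -/

section Apriori

lemma plane_cs {x1 x2 y1 y2 x y : ℝ} (hx : x ^ 2 = x1 ^ 2 + x2 ^ 2) (hy : y ^ 2 = y1 ^ 2 + y2 ^ 2)
    (hx0 : 0 ≤ x) (hy0 : 0 ≤ y) : x1 * y1 + x2 * y2 ≤ y * x := by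
  refine abs_le_of_sq_le_sq' ?_ (by positivity) |>.2
  rw [mul_pow, hx, hy]
  nlinarith [sq_nonneg (x1 * y2 - x2 * y1)]

variable {n : ℕ} {a a1 a2 p p1 θ θ1 ω φ : ℝ → ℝ}

set_option maxHeartbeats 1000000 in
/-- The a priori estimate for `(-Δ+V-λ-iε)u = f + g`, in terms of real and imaginary parts. -/
lemma apriori_real (hw : Weights a a1 a2 p p1 θ θ1 ω) {s K : ℝ} (hB : WBounds a p θ ω φ s K) {b : ℝ}
    (hb : b = ((n : ℝ) - 1) / 2) (hb0 : 0 ≤ b) (hs0 : 0 ≤ s)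
    {V : Euc n → ℝ} (hVm : Measurable V) {CV : ℝ} (hCV : 0 ≤ CV) (hVb : ∀ x, |V x| ≤ CV)
    {lam0 lam : ℝ} (hl0 : 0 < lam0) (hl : lam0 ≤ lam)
    (key : ∀ (x : Euc n) (Y w : ℝ),
      θ (‖x‖ ^ 2) / 2 * Y ^ 2 + lam / 2 * ω (‖x‖ ^ 2) * w ^ 2 ≤
        θ (‖x‖ ^ 2) * Y ^ 2
        + b * ((b + 1) * θ (‖x‖ ^ 2) + 2 * ‖x‖ ^ 2 * θ1 (‖x‖ ^ 2)) * w ^ 2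
        + 4 * p (‖x‖ ^ 2) * a (‖x‖ ^ 2) * Y ^ 2
        + 2 * a (‖x‖ ^ 2) * (p (‖x‖ ^ 2) + 2 * ‖x‖ ^ 2 * p1 (‖x‖ ^ 2) + V x) * w * Y
        + (lam * (a (‖x‖ ^ 2) + 2 * ‖x‖ ^ 2 * a1 (‖x‖ ^ 2))
          + (‖x‖ ^ 2 * p (‖x‖ ^ 2) ^ 2 * a (‖x‖ ^ 2)
            + 2 * ‖x‖ ^ 2 * ((p (‖x‖ ^ 2) ^ 2 + 2 * ‖x‖ ^ 2 * p (‖x‖ ^ 2) * p1 (‖x‖ ^ 2))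
              * a (‖x‖ ^ 2) + ‖x‖ ^ 2 * p (‖x‖ ^ 2) ^ 2 * a1 (‖x‖ ^ 2)))
          - b * (2 * n * a1 (‖x‖ ^ 2) + 4 * ‖x‖ ^ 2 * a2 (‖x‖ ^ 2))) * w ^ 2)
    {ε κ m : ℝ} (hε : |ε| ≤ 1) (hκ : 0 < κ) (hκ1 : κ ≤ 1) (hm : 0 < m) (hm2 : m ^ 2 = 1 + lam + CV)
    {u1 u2 f1 f2 g1 g2 fn gn : Euc n → ℝ} (h1 : ContDiff ℝ 2 u1) (s1 : HasCompactSupport u1)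
    (h2 : ContDiff ℝ 2 u2) (s2 : HasCompactSupport u2)
    (hF1 : ∀ x, -lapR u1 x + V x * u1 x - lam * u1 x + ε * u2 x = f1 x + g1 x)
    (hF2 : ∀ x, -lapR u2 x + V x * u2 x - lam * u2 x - ε * u1 x = f2 x + g2 x)
    (hfn0 : ∀ x, 0 ≤ fn x) (hfn : ∀ x, fn x ^ 2 = f1 x ^ 2 + f2 x ^ 2)
    (hgn0 : ∀ x, 0 ≤ gn x) (hgn : ∀ x, gn x ^ 2 = g1 x ^ 2 + g2 x ^ 2)
    (Mf : MemLp fn 2) (Mg : MemLp gn 2)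
    (If : Integrable (fun x => (1 + ‖x‖ ^ 2) ^ s * fn x ^ 2)) :
    lam * ∫ x, (1 + ‖x‖ ^ 2) ^ (-s) * (u1 x ^ 2 + u2 x ^ 2)
      ≤ (4 * K * (4 * K ^ 3 + 4 * K ^ 7 * ((1 + lam0 + CV) / lam0)))
          * (∫ x, (1 + ‖x‖ ^ 2) ^ s * fn x ^ 2)
        + (4 * K * (2 * K ^ 3 * (m + 1 + b) + 4 * K ^ 3 * (2 + lam + CV))) *
        (κ⁻¹ * (∫ x, gn x ^ 2) + κ * ((∫ x, (u1 x ^ 2 + u2 x ^ 2))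
          + ∫ x, (1 + ‖x‖ ^ 2) ^ s * fn x ^ 2)) := by
  have hK := hB.one_le_K
  have hK0 : 0 < K := by linarith
  have hlam : 0 < lam := by linarith
  obtain ⟨Y1, hY1⟩ : ∃ Y : Euc n → ℝ, ∀ x, Y x =
      exp (φ (‖x‖ ^ 2)) * (eul u1 x + ‖x‖ ^ 2 * p (‖x‖ ^ 2) * u1 x)
      + b * (exp (φ (‖x‖ ^ 2)) * u1 x) := ⟨_, fun _ => rfl⟩
  obtain ⟨Y2, hY2⟩ : ∃ Y : Euc n → ℝ, ∀ x, Y x =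
      exp (φ (‖x‖ ^ 2)) * (eul u2 x + ‖x‖ ^ 2 * p (‖x‖ ^ 2) * u2 x)
      + b * (exp (φ (‖x‖ ^ 2)) * u2 x) := ⟨_, fun _ => rfl⟩
  obtain ⟨L1, T1, R1, C1⟩ := carleman_u hw hB hb hVm hVb lam key h1 s1 hY1
  obtain ⟨L2, T2, R2, C2⟩ := carleman_u hw hB hb hVm hVb lam key h2 s2 hY2
  obtain ⟨EI1, E1, EI2, E2⟩ := energy (V := V) h1 s1 h2 s2 hF1 hF2
  clear key
  -- the Euclidean norms of `u` and of `∇u`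
  obtain ⟨un, hun⟩ : ∃ un : Euc n → ℝ, ∀ x, un x = √(u1 x ^ 2 + u2 x ^ 2) := ⟨_, fun _ => rfl⟩
  obtain ⟨Dn, hDn⟩ : ∃ Dn : Euc n → ℝ, ∀ x, Dn x = √(gsq u1 x + gsq u2 x) := ⟨_, fun _ => rfl⟩
  have un0 : ∀ x, 0 ≤ un x := fun x => by rw [hun]; positivity
  have Dn0 : ∀ x, 0 ≤ Dn x := fun x => by rw [hDn]; positivity
  have un2 : ∀ x, un x ^ 2 = u1 x ^ 2 + u2 x ^ 2 := fun x => by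
    rw [hun, Real.sq_sqrt (by positivity)]
  have Dn2 : ∀ x, Dn x ^ 2 = gsq u1 x + gsq u2 x := fun x => by
    rw [hDn, Real.sq_sqrt (add_nonneg (gsq_nonneg _ _) (gsq_nonneg _ _))]
  have c1 := h1.continuous
  have c2 := h2.continuous
  have k1 : Continuous (gsq u1) := (contDiff_gsq h1 (k := 1) (by norm_num)).continuous
  have k2 : Continuous (gsq u2) := (contDiff_gsq h2 (k := 1) (by norm_num)).continuous
  have cun : Continuous un := by
    have : un = _ := funext hun
    rw [this]; fun_prop
  have cDn : Continuous Dn := by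
    have : Dn = _ := funext hDn
    rw [this]; fun_prop
  have hcs : IsCompact (tsupport u1 ∪ tsupport u2) := s1.isCompact.union s2.isCompact
  have zun : ∀ x, x ∉ tsupport u1 ∪ tsupport u2 → un x = 0 := fun x hx => by
    rw [mem_union, not_or] at hx
    rw [hun, (off_supp hx.1).1, (off_supp hx.2).1]; simp
  have zDn : ∀ x, x ∉ tsupport u1 ∪ tsupport u2 → Dn x = 0 := fun x hx => by
    rw [mem_union, not_or] at hx
    rw [hDn, (off_supp hx.1).2.2.1, (off_supp hx.2).2.2.1]; simp
  have Mun : MemLp un 2 := cun.memLp_of_hasCompactSupport (HasCompactSupport.intro hcs zun)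
  have MDn : MemLp Dn 2 := cDn.memLp_of_hasCompactSupport (HasCompactSupport.intro hcs zDn)
  have cQ : ∀ r : ℝ, Continuous (fun x : Euc n => (1 + ‖x‖ ^ 2) ^ r) := fun r => by
    refine Continuous.rpow_const (by fun_prop) fun x => Or.inl (by positivity)
  have IX : Integrable (fun x => (1 + ‖x‖ ^ 2) ^ (-s) * un x ^ 2) :=
    ((cQ _).mul (cun.pow 2)).integrable_of_hasCompactSupport
      (HasCompactSupport.intro hcs fun x hx => by simp [zun x hx])
  have IU := Mun.integrable_sq
  have ID := MDn.integrable_sq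
  have IG := Mg.integrable_sq
  have IF := Mf.integrable_sq
  have IJ : Integrable (fun x => fn x * un x) := Mf.integrable_mul Mun
  have IH : Integrable (fun x => gn x * un x) := Mg.integrable_mul Mun
  have IM : Integrable (fun x => un x * Dn x) := Mun.integrable_mul MDn
  have IN : Integrable (fun x => gn x * Dn x) := Mg.integrable_mul MDn
  have hQ : ∀ x : Euc n, 0 < 1 + ‖x‖ ^ 2 := fun x => by positivity
  -- Carleman inequality with the error terms estimated pointwise
  have main : lam / (2 * K) * ∫ x, (1 + ‖x‖ ^ 2) ^ (-s) * un x ^ 2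
      ≤ 4 * K ^ 3 * (∫ x, (1 + ‖x‖ ^ 2) ^ s * fn x ^ 2)
        + 2 * K ^ 3 * ((∫ x, gn x * Dn x) + (1 + b) * ∫ x, gn x * un x)
        + 2 * |ε| * K ^ 3 * ∫ x, un x * Dn x := by
    have RI := ((If.const_mul (4 * K ^ 3)).add
      ((IN.add (IH.const_mul (1 + b))).const_mul (2 * K ^ 3))).add
        (IM.const_mul (2 * |ε| * K ^ 3))
    have up := integral_mono (R1.fun_add R2) ((T1.fun_add T2).fun_add RI) (fun x => by
      have hq : 0 ≤ ‖x‖ ^ 2 := sq_nonneg _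
      have e1 : -lapR u1 x + V x * u1 x - lam * u1 x = f1 x + g1 x - ε * u2 x := by
        linarith only [hF1 x]
      have e2 : -lapR u2 x + V x * u2 x - lam * u2 x = f2 x + g2 x + ε * u1 x := by
        linarith only [hF2 x]
      have := pt_rhs (ε := ε) (f1 := f1 x) (f2 := f2 x) (g1 := g1 x) (g2 := g2 x) (fn := fn x)
        (gn := gn x) (un := un x) (Dn := Dn x)
        hK (hB.a_nonneg _ hq) (hB.a_le _ hq) hq (hB.p_nonneg _ hq) (hB.a_sq _ hq)
        (hB.apq _ hq) (hB.a_th _ hq) (hw.θ_nonneg _ hq) (rpow_nonneg (hQ x).le s) (hB.one_le _ hq)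
        (hB.exp_le _ hq) hb0 (hY1 x) (hY2 x) (un2 x) (un0 x) (hfn x) (hgn x) (hgn0 x) (Dn0 x)
        (by
          rw [Dn2]
          have := eul_sq_le u1 x
          have := eul_sq_le u2 x
          linarith)
      simp only [Pi.add_apply]
      rw [e1, e2]
      linarith only [this])
    rw [integral_add R1 R2, integral_add (T1.fun_add T2) RI] at up
    have e3 : ∫ x, (4 * K ^ 3 * ((1 + ‖x‖ ^ 2) ^ s * fn x ^ 2)
        + 2 * K ^ 3 * (gn x * Dn x + (1 + b) * (gn x * un x)) + 2 * |ε| * K ^ 3 * (un x * Dn x))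
        = 4 * K ^ 3 * (∫ x, (1 + ‖x‖ ^ 2) ^ s * fn x ^ 2)
        + 2 * K ^ 3 * ((∫ x, gn x * Dn x) + (1 + b) * ∫ x, gn x * un x)
        + 2 * |ε| * K ^ 3 * ∫ x, un x * Dn x := by
      rw [integral_add ((If.const_mul (4 * K ^ 3)).fun_add
          ((IN.fun_add (IH.const_mul (1 + b))).const_mul (2 * K ^ 3))) (IM.const_mul _),
        integral_add (If.const_mul _) ((IN.fun_add (IH.const_mul (1 + b))).const_mul (2 * K ^ 3)),
        integral_const_mul, integral_const_mul, integral_const_mul,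
        integral_add IN (IH.const_mul _), integral_const_mul]
    simp only [Pi.add_apply] at up
    rw [e3] at up
    have low := integral_mono ((IX.const_mul (lam / (2 * K))).fun_add (T1.fun_add T2))
      (L1.fun_add L2) (fun x => by
      have hq : 0 ≤ ‖x‖ ^ 2 := sq_nonneg _
      have t1 : 0 ≤ θ (‖x‖ ^ 2) * Y1 x ^ 2 := mul_nonneg (hw.θ_nonneg _ hq) (sq_nonneg _)
      have t2 : 0 ≤ θ (‖x‖ ^ 2) * Y2 x ^ 2 := mul_nonneg (hw.θ_nonneg _ hq) (sq_nonneg _)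
      have t3 : lam / (2 * K) * ((1 + ‖x‖ ^ 2) ^ (-s) * un x ^ 2)
          ≤ lam / 2 * ω (‖x‖ ^ 2) * (exp (φ (‖x‖ ^ 2)) * u1 x) ^ 2
            + lam / 2 * ω (‖x‖ ^ 2) * (exp (φ (‖x‖ ^ 2)) * u2 x) ^ 2 := by
        have o := hB.om _ hq
        have o1 := hB.one_le _ hq
        have o0 : 0 ≤ K * ω (‖x‖ ^ 2) := le_trans (rpow_nonneg (hQ x).le _) o
        have o2 : 1 ≤ exp (φ (‖x‖ ^ 2)) ^ 2 := one_le_pow₀ o1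
        calc lam / (2 * K) * ((1 + ‖x‖ ^ 2) ^ (-s) * un x ^ 2)
            ≤ lam / (2 * K) * (K * ω (‖x‖ ^ 2) * un x ^ 2) := by gcongr
          _ = lam / (2 * K) * (K * ω (‖x‖ ^ 2) * (1 * un x ^ 2)) := by ring
          _ ≤ lam / (2 * K) * (K * ω (‖x‖ ^ 2) * (exp (φ (‖x‖ ^ 2)) ^ 2 * un x ^ 2)) := by gcongr
          _ = _ := by rw [un2]; field_simp
      simp only []
      linarith only [t1, t2, t3])
    rw [integral_add (IX.const_mul _) (T1.fun_add T2), integral_add L1 L2,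
      integral_const_mul] at low
    linarith only [low, up, C1, C2]
  have E1' : ∫ x, Dn x ^ 2 ≤ (∫ x, fn x * un x) + (∫ x, gn x * un x) + (lam + CV) * ∫ x, un x ^ 2 := by
    simp_rw [Dn2]
    rw [← E1, ← integral_const_mul, ← integral_add IJ IH, ← integral_add (IJ.fun_add IH) (IU.const_mul _)]
    refine integral_mono EI1 ((IJ.fun_add IH).fun_add (IU.const_mul _)) fun x => ?_
    have c1 := plane_cs (un2 x) (hfn x) (un0 x) (hfn0 x)
    have c2 := plane_cs (un2 x) (hgn x) (un0 x) (hgn0 x)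
    have c3 : (lam - V x) * (u1 x ^ 2 + u2 x ^ 2) ≤ (lam + CV) * un x ^ 2 := by
      rw [un2]
      have := (abs_le.1 (hVb x)).1
      gcongr; linarith
    simp only []
    linarith only [c1, c2, c3]
  have E2' : |ε| * ∫ x, un x ^ 2 ≤ (∫ x, fn x * un x) + (∫ x, gn x * un x) := by
    have hU0 : 0 ≤ ∫ x, un x ^ 2 := integral_nonneg fun x => sq_nonneg _
    have e : |ε| * ∫ x, un x ^ 2 = |∫ x, (u2 x * (f1 x + g1 x) - u1 x * (f2 x + g2 x))| := by
      rw [E2]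
      simp_rw [← un2]
      rw [abs_mul, abs_of_nonneg hU0]
    rw [e, ← integral_add IJ IH]
    refine (abs_integral_le_integral_abs).trans (integral_mono EI2.abs (IJ.fun_add IH) fun x => ?_)
    have d1 : un x ^ 2 = u2 x ^ 2 + (-u1 x) ^ 2 := by rw [un2]; ring
    have d2 : un x ^ 2 = (-u2 x) ^ 2 + u1 x ^ 2 := by rw [un2]; ring
    have c1 := plane_cs d1 (hfn x) (un0 x) (hfn0 x)
    have c2 := plane_cs d1 (hgn x) (un0 x) (hgn0 x)
    have c3 := plane_cs d2 (hfn x) (un0 x) (hfn0 x)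
    have c4 := plane_cs d2 (hgn x) (un0 x) (hgn0 x)
    change |(_ : ℝ)| ≤ _
    exact abs_le.2 ⟨by linarith only [c3, c4], by linarith only [c1, c2]⟩
  -- weighted arithmetic-geometric mean inequalities
  have amgm : ∀ {x y t : ℝ}, 0 < t → x * y ≤ t / 2 * y ^ 2 + 1 / (2 * t) * x ^ 2 := by
    intro x y t ht
    have : t / 2 * y ^ 2 + 1 / (2 * t) * x ^ 2 - x * y = (t * y - x) ^ 2 / (2 * t) := by
      field_simp; ring
    have : 0 ≤ (t * y - x) ^ 2 / (2 * t) := by positivity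
    linarith
  have amI : ∀ {A B : Euc n → ℝ} {t : ℝ}, 0 < t → Integrable (fun x => A x * B x) →
      Integrable (fun x => A x ^ 2) → Integrable (fun x => B x ^ 2) →
      ∫ x, A x * B x ≤ t / 2 * (∫ x, B x ^ 2) + 1 / (2 * t) * ∫ x, A x ^ 2 := by
    intro A B t ht iAB iA iB
    rw [← integral_const_mul, ← integral_const_mul, ← integral_add (iB.const_mul _) (iA.const_mul _)]
    exact integral_mono iAB ((iB.const_mul _).fun_add (iA.const_mul _)) fun x => amgm ht
  have hJ1 : ∀ t, 0 < t → ∫ x, fn x * un x ≤ t / 2 * (∫ x, (1 + ‖x‖ ^ 2) ^ (-s) * un x ^ 2)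
      + 1 / (2 * t) * ∫ x, (1 + ‖x‖ ^ 2) ^ s * fn x ^ 2 := by
    intro t ht
    have r : ∀ x : Euc n, ((1 + ‖x‖ ^ 2) ^ (s / 2)) ^ 2 = (1 + ‖x‖ ^ 2) ^ s := fun x => by
      rw [← rpow_natCast, ← rpow_mul (hQ x).le]; congr 1; push_cast; ring
    have r' : ∀ x : Euc n, ((1 + ‖x‖ ^ 2) ^ (-(s / 2))) ^ 2 = (1 + ‖x‖ ^ 2) ^ (-s) := fun x => by
      rw [← rpow_natCast, ← rpow_mul (hQ x).le]; congr 1; push_cast; ring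
    have e : ∀ x, fn x * un x = ((1 + ‖x‖ ^ 2) ^ (s / 2) * fn x) * ((1 + ‖x‖ ^ 2) ^ (-(s / 2)) * un x) :=
      fun x => by
        have : (1 + ‖x‖ ^ 2) ^ (s / 2) * (1 + ‖x‖ ^ 2) ^ (-(s / 2)) = 1 := by
          rw [← rpow_add (hQ x)]; simp
        linear_combination (-fn x * un x) * this
    have h := amI (A := fun x => (1 + ‖x‖ ^ 2) ^ (s / 2) * fn x)
      (B := fun x => (1 + ‖x‖ ^ 2) ^ (-(s / 2)) * un x) ht (by simpa only [← e] using IJ)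
      (by simpa only [mul_pow, r] using If) (by simpa only [mul_pow, r'] using IX)
    simpa only [mul_pow, r, r', ← e] using h
  have hFle : ∫ x, fn x ^ 2 ≤ ∫ x, (1 + ‖x‖ ^ 2) ^ s * fn x ^ 2 := by
    refine integral_mono IF If fun x => ?_
    have : 1 ≤ (1 + ‖x‖ ^ 2) ^ s := one_le_rpow (by nlinarith [sq_nonneg ‖x‖]) hs0
    exact le_mul_of_one_le_left (sq_nonneg _) this
  have hU : 0 ≤ ∫ x, un x ^ 2 := integral_nonneg fun x => sq_nonneg _
  have hG : 0 ≤ ∫ x, gn x ^ 2 := integral_nonneg fun x => sq_nonneg _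
  have hF' : 0 ≤ ∫ x, fn x ^ 2 := integral_nonneg fun x => sq_nonneg _
  have hDD : 0 ≤ ∫ x, Dn x ^ 2 := integral_nonneg fun x => sq_nonneg _
  have hJ2 := amI one_pos IJ IF IU
  have hH2 := amI one_pos IH IG IU
  have hH1 := amI hκ IH IG IU
  have hN := amI hκ IN IG ID
  have hMm := amI (t := m) hm (by simpa only [mul_comm] using IM) ID IU
  have e5 : 1 / (2 * κ) = κ⁻¹ / 2 := by field_simp
  rw [e5] at hH1 hN
  have hki : 0 < κ⁻¹ := by positivity
  have p1 : 0 ≤ κ * ∫ x, un x ^ 2 := by positivity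
  have p2 : 0 ≤ κ * ∫ x, Dn x ^ 2 := by positivity
  have p3 : 0 ≤ κ⁻¹ * ∫ x, gn x ^ 2 := by positivity
  simp_rw [← un2]
  refine absorb (ε := ε) hK hb0 hl0 hl hCV hε hκ hκ1 hm hm2 hU hG (hF'.trans hFle)
    (integral_nonneg fun x => mul_nonneg (hfn0 x) (un0 x))
    (integral_nonneg fun x => mul_nonneg (hgn0 x) (un0 x)) main E2' E1' ?_ hJ1 ?_ ?_ ?_ ?_
  · simp_rw [mul_comm (un _)]
    exact hMm
  · linarith only [hJ2, hFle, hU, hF']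
  · linarith only [hH1, p1, p3]
  · linarith only [hH2, hU, hG]
  · linarith only [hN, p2, p3]

end Apriori

/-! ### A core of the Schrödinger operator -/

section Core

open scoped ContDiff Laplacian

variable {n : ℕ}

lemma norm_sq_L2 (F : L2 n) : ‖F‖ ^ 2 = ∫ x, ‖F x‖ ^ 2 := by
  have h := @inner_self_eq_norm_sq ℂ (L2 n) _ _ _ F
  rw [← h, L2.inner_def, ← integral_re (L2.integrable_inner F F)]
  refine integral_congr_ae (Eventually.of_forall fun x => ?_)
  exact inner_self_eq_norm_sq (𝕜 := ℂ) (F x)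

lemma lapl_eq (φ : SchwartzMap (Euc n) ℂ) (x : Euc n) : lapl φ x = (Δ φ) x := by
  rw [SchwartzMap.laplacian_apply,
    InnerProductSpace.laplacian_eq_iteratedFDeriv_orthonormalBasis φ (EuclideanSpace.basisFun (Fin n) ℝ)]
  simp [lapl]

lemma norm_lapl_le (f : Euc n → ℂ) (x : Euc n) : ‖lapl f x‖ ≤ n * ‖iteratedFDeriv ℝ 2 f x‖ := by
  refine (norm_sum_le _ _).trans ?_
  refine (Finset.sum_le_card_nsmul _ _ ‖iteratedFDeriv ℝ 2 f x‖ fun i _ => ?_).trans (by simp)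
  refine (ContinuousMultilinearMap.le_opNorm _ _).trans ?_
  simp [Fin.prod_univ_two]

lemma schwartz_tendsto_zero (w : ℕ → SchwartzMap (Euc n) ℂ) (g : Euc n → ℝ) (hg : Integrable g)
    (hw : ∀ k x, ‖w k x‖ ^ 2 ≤ g x) (hp : ∀ x, Tendsto (fun k => w k x) atTop (𝓝 0)) :
    Tendsto (fun k => ‖(w k).toLp 2 (volume : Measure (Euc n))‖) atTop (𝓝 0) := by
  have h1 : Tendsto (fun k => ∫ x, ‖w k x‖ ^ 2) atTop (𝓝 (∫ x : Euc n, (0:ℝ))) := by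
    refine tendsto_integral_of_dominated_convergence g
      (fun k => ((w k).continuous.norm.pow 2).aestronglyMeasurable) hg
      (fun k => Eventually.of_forall fun x => ?_) (Eventually.of_forall fun x => ?_)
    · rw [Real.norm_of_nonneg (by positivity)]; exact hw k x
    · simpa using ((hp x).norm.pow 2)
  have h2 : ∀ k, ∫ x, ‖w k x‖ ^ 2 = ‖(w k).toLp 2 (volume : Measure (Euc n))‖ ^ 2 := by
    intro k
    rw [norm_sq_L2]
    refine integral_congr_ae ?_
    filter_upwards [(w k).coeFn_toLp 2 volume] with x hx
    rw [hx]
  simp only [h2, integral_zero] at h1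
  have h3 := h1.sqrt
  simpa [Real.sqrt_sq (norm_nonneg _)] using h3

lemma schwartz_sq_int (φ : SchwartzMap (Euc n) ℂ) (j : ℕ) :
    Integrable fun x => ‖iteratedFDeriv ℝ j φ x‖ ^ 2 := by
  have h := φ.integrable_pow_mul_iteratedFDeriv volume 0 j
  simp only [pow_zero, one_mul] at h
  obtain ⟨C, -, hC⟩ := φ.decay 0 j
  simp only [pow_zero, one_mul] at hC
  simp only [pow_two]
  have hc := ((φ.smooth ⊤).continuous_iteratedFDeriv (m := j) (mod_cast le_top))
  refine (h.const_mul C).mono' (hc.norm.mul hc.norm).aestronglyMeasurable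
    (Eventually.of_forall fun x => ?_)
  rw [Real.norm_of_nonneg (by positivity)]
  exact mul_le_mul_of_nonneg_right (hC x) (norm_nonneg _)

/-- Truncation: Schwartz functions are approximated by compactly supported smooth functions in the
graph norm of the Laplacian. -/
lemma exists_cutoff (φ : SchwartzMap (Euc n) ℂ) {ε : ℝ} (hε : 0 < ε) :
    ∃ v : SchwartzMap (Euc n) ℂ, HasCompactSupport v ∧
      ‖(v - φ).toLp 2 (volume : Measure (Euc n))‖ < ε ∧
      ‖(Δ v - Δ φ).toLp 2 (volume : Measure (Euc n))‖ < ε := by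
  let χ : ContDiffBump (0 : Euc n) := ⟨1, 2, one_pos, one_lt_two⟩
  have hχ : ContDiff ℝ ∞ (χ : Euc n → ℝ) := χ.contDiff
  let r : ℕ → ℝ := fun k => ((k : ℝ) + 1)⁻¹
  have hr0 : ∀ k, 0 < r k := fun k => by positivity
  have hr1 : ∀ k, r k ≤ 1 := fun k => inv_le_one_of_one_le₀ (by linarith [(Nat.cast_nonneg k : (0:ℝ) ≤ k)])
  let c : ℕ → Euc n → ℝ := fun k x => χ (r k • x)
  have hc : ∀ k, ContDiff ℝ ∞ (c k) := fun k => hχ.comp (contDiff_const_smul (r k))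
  have hcs : ∀ k, HasCompactSupport (c k) := fun k =>
    χ.hasCompactSupport.comp_homeomorph (Homeomorph.smulOfNeZero (r k) (hr0 k).ne')
  have hcg : ∀ k, (c k).HasTemperateGrowth := fun k => (hcs k).hasTemperateGrowth (hc k)
  have hB : ∀ j : ℕ, ∃ B, ∀ k x, ‖iteratedFDeriv ℝ j (c k) x‖ ≤ B := by
    intro j
    obtain ⟨B, hB⟩ := (hχ.continuous_iteratedFDeriv (m := j) (mod_cast le_top)).bounded_above_of_compact_support
      (χ.hasCompactSupport.iteratedFDeriv (𝕜 := ℝ) j)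
    refine ⟨B, fun k x => ?_⟩
    have := congrFun (iteratedFDeriv_comp_const_smul (i := j) (r k) (hχ.of_le (mod_cast le_top))) x
    rw [show c k = fun x => χ (r k • x) from rfl, this]
    simp only [norm_smul, norm_pow, Real.norm_of_nonneg (hr0 k).le]
    exact (mul_le_of_le_one_left (norm_nonneg _) (pow_le_one₀ (hr0 k).le (hr1 k))).trans (hB _)
  choose B hB using hB
  let v : ℕ → SchwartzMap (Euc n) ℂ := fun k => SchwartzMap.smulLeftCLM ℂ (c k) φ
  have hv : ∀ k, ⇑(v k) = fun x => c k x • φ x := fun k => SchwartzMap.smulLeftCLM_apply (hcg k) φ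
  -- near a given point the truncated function eventually equals the original one
  have hev : ∀ x, ∀ᶠ k in atTop, ⇑(v k) =ᶠ[𝓝 x] ⇑φ := by
    intro x
    obtain ⟨N, hN⟩ := exists_nat_gt (‖x‖)
    filter_upwards [eventually_ge_atTop N] with k hk
    have hx : x ∈ Metric.ball (0 : Euc n) ((k : ℝ) + 1) := by
      rw [mem_ball_zero_iff]
      have : (N : ℝ) ≤ k := by exact_mod_cast hk
      linarith
    filter_upwards [Metric.isOpen_ball.mem_nhds hx] with y hy
    rw [hv]
    have : c k y = 1 := by
      refine χ.one_of_mem_closedBall ?_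
      rw [mem_closedBall_zero_iff, norm_smul, Real.norm_of_nonneg (hr0 k).le]
      change r k * ‖y‖ ≤ 1
      rw [mem_ball_zero_iff] at hy
      have := hr0 k
      calc r k * ‖y‖ ≤ r k * ((k : ℝ) + 1) := by gcongr
        _ = 1 := inv_mul_cancel₀ (by positivity)
    simp [this]
  have h1 : Tendsto (fun k => ‖(v k - φ).toLp 2 (volume : Measure (Euc n))‖) atTop (𝓝 0) := by
    refine schwartz_tendsto_zero _ (fun x => (B 0 + 1) ^ 2 * ‖iteratedFDeriv ℝ 0 φ x‖ ^ 2)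
      ((schwartz_sq_int φ 0).const_mul _) (fun k x => ?_) (fun x => ?_)
    · rw [← mul_pow]
      refine pow_le_pow_left₀ (norm_nonneg _) ?_ 2
      have hb := hB 0 k x
      rw [norm_iteratedFDeriv_zero] at hb ⊢
      rw [sub_apply, hv]
      refine (norm_sub_le _ _).trans ?_
      rw [norm_smul]
      nlinarith [norm_nonneg (φ x)]
    · refine tendsto_const_nhds.congr' ?_
      filter_upwards [hev x] with k hk
      rw [sub_apply, hk.eq_of_nhds, sub_self]
  have h2 : Tendsto (fun k => ‖(Δ (v k) - Δ φ).toLp 2 (volume : Measure (Euc n))‖) atTop (𝓝 0) := by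
    refine schwartz_tendsto_zero _ (fun x => 3 * ((n * B 2) ^ 2 * ‖iteratedFDeriv ℝ 0 φ x‖ ^ 2
        + (n * (2 * B 1)) ^ 2 * ‖iteratedFDeriv ℝ 1 φ x‖ ^ 2
        + (n * (B 0 + 1)) ^ 2 * ‖iteratedFDeriv ℝ 2 φ x‖ ^ 2))
      (((((schwartz_sq_int φ 0).const_mul _).fun_add ((schwartz_sq_int φ 1).const_mul _)).fun_add
        ((schwartz_sq_int φ 2).const_mul _)).const_mul _) (fun k x => ?_) (fun x => ?_)
    · have e1 : ‖iteratedFDeriv ℝ 2 (v k) x‖ ≤ B 0 * ‖iteratedFDeriv ℝ 2 φ x‖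
          + 2 * B 1 * ‖iteratedFDeriv ℝ 1 φ x‖ + B 2 * ‖iteratedFDeriv ℝ 0 φ x‖ := by
        rw [hv]
        refine (norm_iteratedFDeriv_smul_le (hc k) (φ.smooth ⊤) x (n := 2) (WithTop.coe_le_coe.2 (le_top : (2 : ℕ∞) ≤ ⊤))).trans ?_
        simp only [Finset.sum_range_succ, Finset.sum_range_zero, Nat.choose]
        norm_num
        have q0 := hB 0 k x
        have q1 := hB 1 k x
        have q2 := hB 2 k x
        rw [norm_iteratedFDeriv_zero] at q0
        have q3 := mul_le_mul_of_nonneg_right q0 (norm_nonneg (iteratedFDeriv ℝ 2 φ x))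
        have q4 := mul_le_mul_of_nonneg_right q1 (norm_nonneg (iteratedFDeriv ℝ 1 φ x))
        have q5 := mul_le_mul_of_nonneg_right q2 (norm_nonneg (φ x))
        rw [Real.norm_eq_abs] at q3
        have f2 : ‖iteratedFDeriv ℝ (2 - 0) φ x‖ = ‖iteratedFDeriv ℝ 2 φ x‖ := rfl
        have f1 : ‖iteratedFDeriv ℝ (2 - 1) φ x‖ = ‖iteratedFDeriv ℝ 1 φ x‖ := rfl
        have f0 : ‖iteratedFDeriv ℝ (2 - 2) φ x‖ = ‖φ x‖ := norm_iteratedFDeriv_zero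
        rw [f0, f1, f2]
        simp only [norm_iteratedFDeriv_one] at q4 ⊢
        linarith
      have e2 : ‖(Δ (v k) - Δ φ) x‖ ≤ n * B 2 * ‖iteratedFDeriv ℝ 0 φ x‖
          + n * (2 * B 1) * ‖iteratedFDeriv ℝ 1 φ x‖ + n * (B 0 + 1) * ‖iteratedFDeriv ℝ 2 φ x‖ := by
        rw [sub_apply, ← lapl_eq, ← lapl_eq]
        refine (norm_sub_le _ _).trans ?_
        have a1 := norm_lapl_le (v k) x
        have a2 := norm_lapl_le φ x
        have a3 := mul_le_mul_of_nonneg_left e1 (Nat.cast_nonneg (α := ℝ) n)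
        linarith
      refine (pow_le_pow_left₀ (norm_nonneg _) e2 2).trans ?_
      rw [← mul_pow, ← mul_pow, ← mul_pow]
      have : ∀ a b c : ℝ, (a + b + c) ^ 2 ≤ 3 * (a ^ 2 + b ^ 2 + c ^ 2) := fun a b c => by
        nlinarith [sq_nonneg (a - b), sq_nonneg (b - c), sq_nonneg (a - c)]
      exact this _ _ _
    · refine tendsto_const_nhds.congr' ?_
      filter_upwards [hev x] with k hk
      rw [sub_apply, ← lapl_eq, ← lapl_eq, lapl, lapl, (Filter.EventuallyEq.iteratedFDeriv (𝕜 := ℝ) hk 2).eq_of_nhds, sub_self]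
  obtain ⟨k, hk1, hk2⟩ := ((h1.eventually (gt_mem_nhds hε)).and (h2.eventually (gt_mem_nhds hε))).exists
  refine ⟨v k, ?_, hk1, hk2⟩
  rw [hv]
  exact (hcs k).smul_right

end Core

section Core2

open scoped ContDiff Laplacian FourierTransform

variable {n : ℕ}

/-- The symbol of `(-Δ+M)⁻¹`. -/
def resSymbol (n : ℕ) (M : ℝ) (ξ : Euc n) : ℝ := (M + (2 * π) ^ 2 * ‖ξ‖ ^ 2)⁻¹

lemma resSymbol_temperate {M : ℝ} (hM : 0 < M) : (resSymbol n M).HasTemperateGrowth := by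
  have h := Function.hasTemperateGrowth_one_add_norm_sq_rpow (Euc n) (-1)
  have h2 : (fun ξ : Euc n => ((2 * π / √M) • ξ)).HasTemperateGrowth :=
    ((2 * π / √M) • (ContinuousLinearMap.id ℝ (Euc n))).hasTemperateGrowth
  have h3 := (Function.HasTemperateGrowth.const (E := Euc n) (M⁻¹)).mul (h.comp h2)
  refine (congrArg _ ?_).mp h3
  funext ξ
  simp only [resSymbol, Pi.mul_apply, Function.comp, norm_smul, Real.rpow_neg_one]
  rw [← mul_inv, norm_div, mul_pow, div_pow, Real.norm_of_nonneg (Real.sqrt_nonneg _),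
    Real.sq_sqrt hM.le, Real.norm_of_nonneg (by positivity)]
  congr 1
  field_simp

lemma mult_norm_le {M : ℝ} (hM : 0 < M) (ζ : SchwartzMap (Euc n) ℂ) :
    ‖(SchwartzMap.fourierMultiplierCLM ℂ (resSymbol n M) ζ).toLp 2 (volume : Measure (Euc n))‖
      ≤ M⁻¹ * ‖ζ.toLp 2 (volume : Measure (Euc n))‖ := by
  rw [← SchwartzMap.norm_fourier_toL2_eq, ← SchwartzMap.norm_fourier_toL2_eq ζ,
    SchwartzMap.fourierMultiplierCLM_apply, FourierTransform.fourier_fourierInv_eq]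
  refine Lp.norm_le_mul_norm_of_ae_le_mul ?_
  filter_upwards [(𝓕 ζ).coeFn_toLp 2 volume,
    (SchwartzMap.smulLeftCLM ℂ (resSymbol n M) (𝓕 ζ)).coeFn_toLp 2 volume] with x h1 h2
  rw [h1, h2, SchwartzMap.smulLeftCLM_apply_apply (resSymbol_temperate hM), norm_smul]
  refine mul_le_mul_of_nonneg_right ?_ (norm_nonneg _)
  rw [resSymbol, norm_inv]
  refine inv_anti₀ hM ?_
  rw [Real.norm_of_nonneg (by positivity)]
  have : 0 ≤ (2 * π) ^ 2 * ‖x‖ ^ 2 := by positivity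
  linarith

/-- The Fourier multiplier `resSymbol n M` is a two-sided inverse of `M - Δ` on Schwartz functions. -/
lemma mult_left_inv {M : ℝ} (hM : 0 < M) (φ : SchwartzMap (Euc n) ℂ) :
    SchwartzMap.fourierMultiplierCLM ℂ (resSymbol n M) ((M : ℝ) • φ - Δ φ) = φ ∧
    (M : ℝ) • (SchwartzMap.fourierMultiplierCLM ℂ (resSymbol n M) φ)
      - Δ (SchwartzMap.fourierMultiplierCLM ℂ (resSymbol n M) φ) = φ := by
  let sy : Euc n → ℝ := fun ξ => M + (2 * π) ^ 2 * ‖ξ‖ ^ 2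
  have hq : (fun ξ : Euc n => ‖ξ‖ ^ 2).HasTemperateGrowth := Function.hasTemperateGrowth_norm_sq _
  have hsy : sy.HasTemperateGrowth := by
    have h1 := (Function.HasTemperateGrowth.const (E := Euc n) ((2 * π) ^ 2)).mul hq
    exact (Function.HasTemperateGrowth.const (E := Euc n) M).add h1
  have hs : ∀ ζ : SchwartzMap (Euc n) ℂ, (M : ℝ) • ζ - Δ ζ
      = SchwartzMap.fourierMultiplierCLM ℂ sy ζ := by
    intro ζ
    have h2 : SchwartzMap.smulLeftCLM ℂ sy (𝓕 ζ) = M • 𝓕 ζ + ((2 * π) ^ 2) •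
        SchwartzMap.smulLeftCLM ℂ (fun ξ : Euc n => ‖ξ‖ ^ 2) (𝓕 ζ) := by
      ext ξ
      rw [SchwartzMap.smulLeftCLM_apply_apply hsy, add_apply, smul_apply, smul_apply,
        SchwartzMap.smulLeftCLM_apply_apply hq, add_smul, mul_smul]
    rw [SchwartzMap.laplacian_eq_fourierMultiplierCLM, SchwartzMap.fourierMultiplierCLM_apply,
      SchwartzMap.fourierMultiplierCLM_apply, h2, FourierTransform.fourierInv_add,
      FourierTransform.fourierInv_smul, FourierTransform.fourierInv_smul,
      FourierTransform.fourierInv_fourier_eq]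
    simp [sub_eq_add_neg]
  have hr := resSymbol_temperate (n := n) hM
  have hne : ∀ ξ : Euc n, sy ξ ≠ 0 := fun ξ => by
    have : 0 ≤ (2 * π) ^ 2 * ‖ξ‖ ^ 2 := by positivity
    have : 0 < sy ξ := by simp only [sy]; linarith
    exact this.ne'
  have e1 : resSymbol n M * sy = fun _ => 1 := by
    funext ξ; exact inv_mul_cancel₀ (hne ξ)
  have e2 : sy * resSymbol n M = fun _ => 1 := by
    funext ξ; exact mul_inv_cancel₀ (hne ξ)
  constructor
  · rw [hs, SchwartzMap.fourierMultiplierCLM_fourierMultiplierCLM_apply hr hsy, e1]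
    simp
  · rw [hs, SchwartzMap.fourierMultiplierCLM_fourierMultiplierCLM_apply hsy hr, e2]
    simp

lemma lapl_lower {M : ℝ} (hM : 0 < M) (φ : SchwartzMap (Euc n) ℂ) :
    M * ‖φ.toLp 2 (volume : Measure (Euc n))‖
      ≤ ‖((M : ℝ) • φ - Δ φ).toLp 2 (volume : Measure (Euc n))‖ := by
  have h := mult_norm_le hM (M • φ - Δ φ)
  rw [(mult_left_inv hM φ).1] at h
  calc _ ≤ M * (M⁻¹ * ‖((M : ℝ) • φ - Δ φ).toLp 2 (volume : Measure (Euc n))‖) := by gcongr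
    _ = _ := by rw [← mul_assoc, mul_inv_cancel₀ hM.ne', one_mul]

end Core2

section Core3

open scoped ContDiff Laplacian InnerProductSpace

variable {n : ℕ} {V : Euc n → ℝ} {T : L2 n →ₗ.[ℂ] L2 n}

lemma schwartz_mem (hT : IsSchrodingerOp V T) (φ : SchwartzMap (Euc n) ℂ) :
    φ.toLp 2 (volume : Measure (Euc n)) ∈ T.domain := by
  obtain ⟨u, hu, -⟩ := hT.eq_on_schwartz φ
  have : φ.toLp 2 (volume : Measure (Euc n)) = u := Lp.ext ((φ.coeFn_toLp 2 volume).trans hu.symm)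
  rw [this]; exact u.2

lemma schwartz_T (hT : IsSchrodingerOp V T) (φ : SchwartzMap (Euc n) ℂ) :
    (T ⟨φ.toLp 2 (volume : Measure (Euc n)), schwartz_mem hT φ⟩ : Euc n → ℂ) =ᵐ[volume]
      fun x => -lapl φ x + (V x : ℂ) * φ x := by
  obtain ⟨u, hu, hu2⟩ := hT.eq_on_schwartz φ
  have : (⟨φ.toLp 2 (volume : Measure (Euc n)), schwartz_mem hT φ⟩ : T.domain) = u :=
    Subtype.ext (Lp.ext ((φ.coeFn_toLp 2 volume).trans hu.symm))
  rw [this]; exact hu2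

/-- `T + M` on Schwartz functions, as a linear map into `L²`. -/
def shiftS (hT : IsSchrodingerOp V T) (M : ℝ) : SchwartzMap (Euc n) ℂ →ₗ[ℂ] L2 n where
  toFun φ := T ⟨φ.toLp 2 (volume : Measure (Euc n)), schwartz_mem hT φ⟩
    + (M : ℂ) • φ.toLp 2 (volume : Measure (Euc n))
  map_add' φ ζ := by
    have h : (φ + ζ).toLp 2 (volume : Measure (Euc n)) = φ.toLp 2 volume + ζ.toLp 2 volume := rfl
    have h2 : (⟨(φ + ζ).toLp 2 (volume : Measure (Euc n)), schwartz_mem hT (φ + ζ)⟩ : T.domain)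
      = ⟨φ.toLp 2 volume, schwartz_mem hT φ⟩ + ⟨ζ.toLp 2 volume, schwartz_mem hT ζ⟩ := rfl
    rw [h2, LinearPMap.map_add, h, smul_add]
    abel
  map_smul' c φ := by
    have h : (c • φ).toLp 2 (volume : Measure (Euc n)) = c • φ.toLp 2 volume := rfl
    have h2 : (⟨(c • φ).toLp 2 (volume : Measure (Euc n)), schwartz_mem hT (c • φ)⟩ : T.domain)
      = c • ⟨φ.toLp 2 volume, schwartz_mem hT φ⟩ := rfl
    rw [h2, LinearPMap.map_smul, h, RingHom.id_apply, smul_add, smul_comm]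

lemma shiftS_dist (hT : IsSchrodingerOp V T) {CV : ℝ} (hV : ∀ x, |V x| ≤ CV) (M : ℝ)
    (φ : SchwartzMap (Euc n) ℂ) :
    ‖shiftS hT M φ - (M • φ - Δ φ).toLp 2 (volume : Measure (Euc n))‖
      ≤ CV * ‖φ.toLp 2 (volume : Measure (Euc n))‖ := by
  refine Lp.norm_le_mul_norm_of_ae_le_mul ?_
  filter_upwards [Lp.coeFn_sub (shiftS hT M φ) ((M • φ - Δ φ).toLp 2 volume),
    Lp.coeFn_add (T ⟨φ.toLp 2 (volume : Measure (Euc n)), schwartz_mem hT φ⟩)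
      ((M : ℂ) • φ.toLp 2 (volume : Measure (Euc n))),
    Lp.coeFn_smul (M : ℂ) (φ.toLp 2 (volume : Measure (Euc n))),
    schwartz_T hT φ, φ.coeFn_toLp 2 volume, (M • φ - Δ φ).coeFn_toLp 2 volume]
    with x h1 h2 h3 h4 h5 h6
  rw [h1, Pi.sub_apply, h6]
  change ‖(T ⟨φ.toLp 2 (volume : Measure (Euc n)), schwartz_mem hT φ⟩ +
      (M : ℂ) • φ.toLp 2 (volume : Measure (Euc n)) : L2 n) x - _‖ ≤ _
  rw [h2, Pi.add_apply, h3, Pi.smul_apply, h4, h5, sub_apply, smul_apply, lapl_eq]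
  have : -(Δ φ) x + (V x : ℂ) * φ x + (M : ℂ) • φ x - (M • φ x - (Δ φ) x) = (V x : ℂ) * φ x := by
    simp; ring
  rw [this, norm_mul, Complex.norm_real]
  exact mul_le_mul_of_nonneg_right (hV x) (norm_nonneg _)

lemma shiftS_lower (hT : IsSchrodingerOp V T) {CV : ℝ} (hV : ∀ x, |V x| ≤ CV) (hCV : 0 ≤ CV)
    (φ : SchwartzMap (Euc n) ℂ) :
    ‖φ.toLp 2 (volume : Measure (Euc n))‖ ≤ ‖shiftS hT (CV + 1) φ‖ := by
  have h1 := shiftS_dist hT hV (CV + 1) φ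
  have h2 := lapl_lower (by linarith : 0 < CV + 1) φ
  have h3 := norm_sub_norm_le (((CV + 1) • φ - Δ φ).toLp 2 (volume : Measure (Euc n)))
    (shiftS hT (CV + 1) φ)
  rw [norm_sub_rev] at h3
  linarith

/-- The range of `T + CV + 1` on Schwartz functions is dense: `CV + 1 - Δ` is onto, and `V` is a
perturbation of relative bound `CV/(CV+1) < 1`. -/
lemma shiftS_orth (hT : IsSchrodingerOp V T) {CV : ℝ} (hV : ∀ x, |V x| ≤ CV) (hCV : 0 ≤ CV)
    (g : L2 n) (hg : ∀ φ, inner ℂ g (shiftS hT (CV + 1) φ) = 0) : g = 0 := by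
  have hM : 0 < CV + 1 := by linarith
  have h1 : ∀ ζ : SchwartzMap (Euc n) ℂ, ‖inner ℂ g (ζ.toLp 2 (volume : Measure (Euc n)))‖
      ≤ CV * (CV + 1)⁻¹ * ‖g‖ * ‖ζ.toLp 2 (volume : Measure (Euc n))‖ := by
    intro ζ
    obtain ⟨-, e⟩ := mult_left_inv hM ζ
    have d := shiftS_dist hT hV (CV + 1) (SchwartzMap.fourierMultiplierCLM ℂ (resSymbol n (CV + 1)) ζ)
    rw [e] at d
    have d2 := mult_norm_le hM ζ
    have : inner ℂ g (ζ.toLp 2 (volume : Measure (Euc n))) = - inner ℂ g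
        (shiftS hT (CV + 1) (SchwartzMap.fourierMultiplierCLM ℂ (resSymbol n (CV + 1)) ζ)
          - ζ.toLp 2 volume) := by
      rw [inner_sub_right, hg]; simp
    rw [this, norm_neg]
    refine (norm_inner_le_norm _ _).trans ?_
    calc _ ≤ ‖g‖ * (CV * ((CV + 1)⁻¹ * ‖ζ.toLp 2 (volume : Measure (Euc n))‖)) := by
          gcongr; exact d.trans (by gcongr)
      _ = _ := by ring
  have h2 : ∀ F : L2 n, ‖inner ℂ g F‖ ≤ CV * (CV + 1)⁻¹ * ‖g‖ * ‖F‖ := by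
    intro F
    refine (SchwartzMap.denseRange_toLpCLM (E := Euc n) (F := ℂ) (p := 2) (μ := volume)
      (by norm_num)).induction_on
      (p := fun F : L2 n => ‖inner ℂ g F‖ ≤ CV * (CV + 1)⁻¹ * ‖g‖ * ‖F‖) F ?_ (fun ζ => h1 ζ)
    exact isClosed_le (by fun_prop) (by fun_prop)
  have h3 := h2 g
  rw [inner_self_eq_norm_sq_to_K, norm_pow, RCLike.norm_ofReal, abs_norm] at h3
  by_contra hne
  have hp : 0 < ‖g‖ := norm_pos_iff.2 hne
  have h4 : CV * (CV + 1)⁻¹ < 1 := by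
    rw [← div_eq_mul_inv, div_lt_one hM]; linarith
  nlinarith [mul_pos hp hp]

lemma T_symm (hT : IsSchrodingerOp V T) (u v : T.domain) :
    inner ℂ (T u) (v : L2 n) = inner ℂ (u : L2 n) (T v) := by
  have h := LinearPMap.adjoint_isFormalAdjoint (T := T) hT.selfAdjoint.dense_domain
  have e : T.adjoint = T := hT.selfAdjoint
  rw [e] at h
  exact h u v

/-- Compactly supported smooth functions form a core of the Schrödinger operator. -/
lemma exists_core (hT : IsSchrodingerOp V T) {CV : ℝ} (hV : ∀ x, |V x| ≤ CV) (hCV : 0 ≤ CV)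
    (u : T.domain) {ε : ℝ} (hε : 0 < ε) :
    ∃ v : SchwartzMap (Euc n) ℂ, HasCompactSupport v ∧
      ‖v.toLp 2 (volume : Measure (Euc n)) - u‖ < ε ∧
      ‖T ⟨v.toLp 2 (volume : Measure (Euc n)), schwartz_mem hT v⟩ - T u‖ < ε := by
  have hd : (LinearMap.range (shiftS hT (CV + 1))).topologicalClosure = ⊤ := by
    rw [Submodule.topologicalClosure_eq_top_iff, Submodule.eq_bot_iff]
    intro g hg
    refine shiftS_orth hT hV hCV g fun φ => ?_
    exact Submodule.inner_left_of_mem_orthogonal (LinearMap.mem_range_self _ φ) hg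
  have hm : T u + ((CV + 1 : ℝ) : ℂ) • (u : L2 n) ∈
      closure ((LinearMap.range (shiftS hT (CV + 1)) : Submodule ℂ (L2 n)) : Set (L2 n)) := by
    rw [← Submodule.topologicalClosure_coe, hd]; trivial
  obtain ⟨F, hF, hFt⟩ := mem_closure_iff_seq_limit.1 hm
  choose φ hφ using hF
  have hc : CauchySeq fun k => (φ k).toLp 2 (volume : Measure (Euc n)) := by
    have hc0 := hFt.cauchySeq
    rw [Metric.cauchySeq_iff] at hc0 ⊢
    intro r hr
    obtain ⟨N, hN⟩ := hc0 r hr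
    refine ⟨N, fun i hi j hj => lt_of_le_of_lt ?_ (hN i hi j hj)⟩
    rw [dist_eq_norm, dist_eq_norm, ← hφ, ← hφ, ← map_sub]
    exact shiftS_lower hT hV hCV (φ i - φ j)
  obtain ⟨v, hv⟩ := cauchySeq_tendsto_of_complete hc
  have hTk : ∀ k, T ⟨(φ k).toLp 2 (volume : Measure (Euc n)), schwartz_mem hT (φ k)⟩
      = F k - ((CV + 1 : ℝ) : ℂ) • (φ k).toLp 2 (volume : Measure (Euc n)) := by
    intro k
    rw [← hφ]; exact (add_sub_cancel_right _ _).symm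
  have hTt : Tendsto (fun k => T ⟨(φ k).toLp 2 (volume : Measure (Euc n)), schwartz_mem hT (φ k)⟩)
      atTop (𝓝 (T u + ((CV + 1 : ℝ) : ℂ) • (u : L2 n) - ((CV + 1 : ℝ) : ℂ) • v)) := by
    simp only [hTk]
    exact hFt.sub (hv.const_smul _)
  have hg : (v, T u + ((CV + 1 : ℝ) : ℂ) • (u : L2 n) - ((CV + 1 : ℝ) : ℂ) • v) ∈ T.graph := by
    have hcl : IsClosed (T.graph : Set (L2 n × L2 n)) := hT.selfAdjoint.isClosed
    refine hcl.mem_of_tendsto (hv.prodMk_nhds hTt) (Eventually.of_forall fun k => ?_)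
    exact (LinearPMap.mem_graph_iff T).2 ⟨_, rfl, rfl⟩
  obtain ⟨y, hy1, hy2⟩ := (LinearPMap.mem_graph_iff T).1 hg
  simp only at hy1 hy2
  have hw : (u : L2 n) - v = 0 := by
    refine shiftS_orth hT hV hCV _ fun ζ => ?_
    have h1 := T_symm hT (u - y) ⟨ζ.toLp 2 (volume : Measure (Euc n)), schwartz_mem hT ζ⟩
    rw [LinearPMap.map_sub, hy2] at h1
    change inner ℂ _ (T ⟨ζ.toLp 2 (volume : Measure (Euc n)), schwartz_mem hT ζ⟩
      + ((CV + 1 : ℝ) : ℂ) • ζ.toLp 2 (volume : Measure (Euc n))) = _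
    have e : ((u - y : T.domain) : L2 n) = u - v := by rw [← hy1]; rfl
    rw [e] at h1
    rw [inner_add_right, ← h1, inner_smul_right]
    have e2 : T u - (T u + ((CV + 1 : ℝ) : ℂ) • (u : L2 n) - ((CV + 1 : ℝ) : ℂ) • v)
      = -(((CV + 1 : ℝ) : ℂ) • ((u : L2 n) - v)) := by rw [smul_sub]; abel
    rw [e2, inner_neg_left, inner_smul_left, Complex.conj_ofReal]
    exact neg_add_cancel _
  have huv : v = u := (sub_eq_zero.1 hw).symm
  subst huv
  rw [add_sub_cancel_right] at hTt
  have n1 := (tendsto_iff_norm_sub_tendsto_zero.1 hv).eventually (gt_mem_nhds (half_pos hε))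
  have n2 := (tendsto_iff_norm_sub_tendsto_zero.1 hTt).eventually (gt_mem_nhds (half_pos hε))
  obtain ⟨k, k1, k2⟩ := (n1.and n2).exists
  have hη : 0 < ε / (2 * (CV + 1)) := by positivity
  obtain ⟨w, hw0, hw1, hw2⟩ := exists_cutoff (φ k) (by positivity : 0 < ε / (2 * (2 * (CV + 1))))
  have hle : ε / (2 * (2 * (CV + 1))) ≤ ε / 2 / 2 := by
    rw [div_div]
    gcongr; linarith
  refine ⟨w, hw0, ?_, ?_⟩
  · have : ‖w.toLp 2 (volume : Measure (Euc n)) - (φ k).toLp 2 volume‖ < ε / 2 / 2 := hw1.trans_le hle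
    have t := norm_sub_le_norm_sub_add_norm_sub (w.toLp 2 (volume : Measure (Euc n)))
      ((φ k).toLp 2 volume) (u : L2 n)
    linarith
  · have d := shiftS_dist hT hV 0 (w - φ k)
    have e1 : shiftS hT 0 (w - φ k) = T ⟨w.toLp 2 (volume : Measure (Euc n)), schwartz_mem hT w⟩
        - T ⟨(φ k).toLp 2 (volume : Measure (Euc n)), schwartz_mem hT (φ k)⟩ := by
      rw [map_sub]
      simp [shiftS]
    have e2 : ‖((0 : ℝ) • (w - φ k) - Δ (w - φ k)).toLp 2 (volume : Measure (Euc n))‖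
        = ‖(Δ w - Δ (φ k)).toLp 2 (volume : Measure (Euc n))‖ := by
      have : (0 : ℝ) • (w - φ k) - Δ (w - φ k) = -(Δ w - Δ (φ k)) := by
        have : Δ (w - φ k) = Δ w - Δ (φ k) := (LineDeriv.laplacianCLM ℝ (Euc n) (SchwartzMap (Euc n) ℂ)).map_sub w (φ k)
        rw [this, zero_smul, zero_sub]
      rw [this]
      exact norm_neg ((Δ w - Δ (φ k)).toLp 2 (volume : Measure (Euc n)))
    have t := norm_sub_norm_le (shiftS hT 0 (w - φ k))
      (((0 : ℝ) • (w - φ k) - Δ (w - φ k)).toLp 2 (volume : Measure (Euc n)))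
    rw [e2, e1] at t
    rw [e1] at d
    have t2 := norm_sub_le_norm_sub_add_norm_sub
      (T ⟨w.toLp 2 (volume : Measure (Euc n)), schwartz_mem hT w⟩)
      (T ⟨(φ k).toLp 2 (volume : Measure (Euc n)), schwartz_mem hT (φ k)⟩) (T u)
    have q : CV * ‖(w - φ k).toLp 2 (volume : Measure (Euc n))‖ ≤ ε / 2 / 2 := by
      calc _ ≤ (CV + 1) * (ε / (2 * (2 * (CV + 1)))) := by gcongr; linarith
        _ = ε / 2 / 2 := by field_simp
    linarith

end Core3

/-! ### The uniform resolvent estimate -/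

section LAP

open scoped ContDiff Laplacian InnerProductSpace

variable {n : ℕ}

lemma jb_pos (x : Euc n) : 0 < jb x := Real.sqrt_pos.2 (by positivity)

lemma one_le_jb (x : Euc n) : 1 ≤ jb x := by
  rw [jb, Real.one_le_sqrt]; nlinarith [sq_nonneg ‖x‖]

lemma jb_rpow (x : Euc n) (s : ℝ) : (jb x ^ s) ^ 2 = (1 + ‖x‖ ^ 2) ^ s := by
  have h : (0 : ℝ) ≤ 1 + ‖x‖ ^ 2 := by positivity
  rw [jb, ← Real.rpow_natCast, ← Real.rpow_mul (Real.sqrt_nonneg _), mul_comm,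
    Real.rpow_mul (Real.sqrt_nonneg _)]
  norm_num [Real.sq_sqrt h]

lemma jb_rpow_le_one (x : Euc n) {s : ℝ} (hs : 0 ≤ s) : jb x ^ (-s) ≤ 1 :=
  Real.rpow_le_one_of_one_le_of_nonpos (one_le_jb x) (by linarith)

lemma measurable_jb_rpow (s : ℝ) : Measurable fun x : Euc n => jb x ^ s := by
  unfold jb; fun_prop

lemma jbA_memLp {s : ℝ} (hs : 0 ≤ s) (F : L2 n) :
    MemLp (fun x => ((jb x ^ (-s) : ℝ) : ℂ) * F x) 2 volume := by
  refine (Lp.memLp F).of_le_mul (c := 1) ?_ (Eventually.of_forall fun x => ?_)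
  · exact ((Complex.measurable_ofReal.comp (measurable_jb_rpow (-s))).aestronglyMeasurable).mul
      (Lp.aestronglyMeasurable F)
  · rw [norm_mul, Complex.norm_real, Real.norm_of_nonneg (Real.rpow_nonneg (jb_pos x).le _)]
    exact mul_le_mul_of_nonneg_right (jb_rpow_le_one x hs) (norm_nonneg _)

/-- Multiplication by `⟨x⟩^{-s}`, `s ≥ 0`, as a bounded operator on `L²`. -/
def jbA {s : ℝ} (hs : 0 ≤ s) : L2 n →L[ℂ] L2 n :=
  LinearMap.mkContinuous
    { toFun := fun F => (jbA_memLp hs F).toLp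
      map_add' := fun F G => by
        apply Lp.ext
        filter_upwards [(jbA_memLp hs (F + G)).coeFn_toLp, (jbA_memLp hs F).coeFn_toLp,
          (jbA_memLp hs G).coeFn_toLp, Lp.coeFn_add F G,
          Lp.coeFn_add (jbA_memLp hs F).toLp (jbA_memLp hs G).toLp] with x h1 h2 h3 h4 h5
        rw [h1, h5, Pi.add_apply, h2, h3, h4, Pi.add_apply, mul_add]
      map_smul' := fun c F => by
        apply Lp.ext
        filter_upwards [(jbA_memLp hs (c • F)).coeFn_toLp, (jbA_memLp hs F).coeFn_toLp,
          Lp.coeFn_smul c F, Lp.coeFn_smul c (jbA_memLp hs F).toLp] with x h1 h2 h3 h4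
        rw [RingHom.id_apply, h1, h4, Pi.smul_apply, h2, h3, Pi.smul_apply, smul_eq_mul, smul_eq_mul]
        ring }
    1 (fun F => by
      refine Lp.norm_le_mul_norm_of_ae_le_mul ?_
      filter_upwards [(jbA_memLp hs F).coeFn_toLp] with x h1
      change ‖((jbA_memLp hs F).toLp : L2 n) x‖ ≤ _
      rw [h1, norm_mul, Complex.norm_real, Real.norm_of_nonneg (Real.rpow_nonneg (jb_pos x).le _)]
      exact mul_le_mul_of_nonneg_right (jb_rpow_le_one x hs) (norm_nonneg _))

lemma jbA_coe {s : ℝ} (hs : 0 ≤ s) (F : L2 n) :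
    (jbA hs F : Euc n → ℂ) =ᵐ[volume] fun x => ((jb x ^ (-s) : ℝ) : ℂ) * F x :=
  (jbA_memLp hs F).coeFn_toLp

lemma jbA_norm_le {s : ℝ} (hs : 0 ≤ s) (F : L2 n) : ‖jbA hs F‖ ≤ ‖F‖ := by
  refine ((jbA hs).le_of_opNorm_le (LinearMap.mkContinuous_norm_le _ zero_le_one _) F).trans ?_
  rw [one_mul]

lemma jbA_symm {s : ℝ} (hs : 0 ≤ s) (F G : L2 n) : inner ℂ (jbA hs F) G = inner ℂ F (jbA hs G) := by
  rw [L2.inner_def, L2.inner_def]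
  refine integral_congr_ae ?_
  filter_upwards [jbA_coe hs F, jbA_coe hs G] with x h1 h2
  rw [h1, h2]
  simp
  ring

lemma jbA_norm_sq {s : ℝ} (hs : 0 ≤ s) (F : L2 n) :
    ‖jbA hs F‖ ^ 2 = ∫ x, (1 + ‖x‖ ^ 2) ^ (-s) * ‖F x‖ ^ 2 := by
  rw [norm_sq_L2]
  refine integral_congr_ae ?_
  filter_upwards [jbA_coe hs F] with x h1
  rw [h1, norm_mul, mul_pow, Complex.norm_real, Real.norm_of_nonneg (Real.rpow_nonneg (jb_pos x).le _),
    jb_rpow]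

lemma jbA_weight {s : ℝ} (hs : 0 ≤ s) (F : L2 n) :
    (fun x => (1 + ‖x‖ ^ 2) ^ s * ‖jbA hs F x‖ ^ 2) =ᵐ[volume] fun x => ‖F x‖ ^ 2 := by
  filter_upwards [jbA_coe hs F] with x h1
  have h : (0 : ℝ) < 1 + ‖x‖ ^ 2 := by positivity
  rw [h1, norm_mul, mul_pow, Complex.norm_real, Real.norm_of_nonneg (Real.rpow_nonneg (jb_pos x).le _),
    jb_rpow, ← mul_assoc, ← Real.rpow_add h, add_neg_cancel, Real.rpow_zero, one_mul]

lemma L2_sq_int (F : L2 n) : Integrable fun x => ‖F x‖ ^ 2 := by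
  have := (Lp.memLp F).integrable_norm_pow (by norm_num)
  simpa using this

lemma pd_clm (l : ℂ →L[ℝ] ℝ) {v : Euc n → ℂ} (hv : Differentiable ℝ v) (i : Fin n) (x : Euc n) :
    pd i (fun x => l (v x)) x = l (fderiv ℝ v x (EuclideanSpace.single i 1)) := by
  have : HasFDerivAt (fun x => l (v x)) (l.comp (fderiv ℝ v x)) x :=
    l.hasFDerivAt.comp x (hv x).hasFDerivAt
  rw [pd, this.fderiv]; rfl

lemma lapR_clm (l : ℂ →L[ℝ] ℝ) {v : Euc n → ℂ} (hv : ContDiff ℝ 2 v) (x : Euc n) :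
    lapR (fun x => l (v x)) x = l (lapl v x) := by
  have hd : Differentiable ℝ v := hv.differentiable (by norm_num)
  rw [lapR, lapl, map_sum]
  refine Finset.sum_congr rfl fun i _ => ?_
  have e : pd i (fun x => l (v x)) = fun x => l (fderiv ℝ v x (EuclideanSpace.single i 1)) :=
    funext fun x => pd_clm l hd i x
  have h1 : ContDiff ℝ 1 (fderiv ℝ v) := hv.fderiv_right (by norm_num)
  have hd2 : Differentiable ℝ (fderiv ℝ v) := h1.differentiable (by norm_num)
  have hd3 : Differentiable ℝ fun x => fderiv ℝ v x (EuclideanSpace.single i 1) := by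
    intro x; exact (hd2 x).clm_apply (differentiableAt_const _)
  rw [e, pd_clm l hd3, iteratedFDeriv_two_apply]
  congr 1
  have := ((hd2 x).hasFDerivAt.clm_apply (hasFDerivAt_const (EuclideanSpace.single i (1:ℝ)) x)).fderiv
  rw [this]
  simp

end LAP

section LAP2

open scoped Laplacian

variable {n : ℕ}

set_option maxHeartbeats 1000000 in
/-- Uniform resolvent estimate: the limiting absorption bound at high and intermediate energies. -/
lemma lap_bound (hn : 4 ≤ n) {V : Euc n → ℝ} (hVm : Measurable V) {T : L2 n →ₗ.[ℂ] L2 n}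
    (hT : IsSchrodingerOp V T) {CV : ℝ} (hCV : 0 ≤ CV)
    (hV : ∀ x, V x ^ 2 ≤ CV ^ 2 * (1 + ‖x‖ ^ 2) ^ (-3 : ℝ)) {γ lam0 : ℝ} (hγ : 0 < γ)
    (hγ1 : γ ≤ 1 / 2) (hl0 : 0 < lam0) {s : ℝ} (hs : s = (1 + γ) / 2) (hs0 : 0 ≤ s) :
    ∃ C : ℝ, 0 ≤ C ∧ ∀ lam, lam0 ≤ lam → ∀ ε : ℝ, |ε| ≤ 1 → ∀ (u : T.domain) (h : L2 n),
      T u = ((lam : ℂ) + ε * Complex.I) • (u : L2 n) + jbA hs0 h →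
      lam * ‖jbA hs0 (u : L2 n)‖ ^ 2 ≤ C * ‖h‖ ^ 2 := by
  subst hs
  have hVb : ∀ x, |V x| ≤ CV := fun x => by
    refine abs_le_of_sq_le_sq ((hV x).trans ?_) hCV
    refine mul_le_of_le_one_right (sq_nonneg _) (Real.rpow_le_one_of_one_le_of_nonpos ?_ (by norm_num))
    nlinarith [sq_nonneg ‖x‖]
  obtain ⟨a, a1, a2, p, p1, θ, θ1, ω, φ, K, hw, hB, hkey⟩ :=
    exists_weights (CV := CV) hn hγ hγ1 hl0
  have hK := hB.one_le_K
  have hN : (4 : ℝ) ≤ n := by exact_mod_cast hn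
  refine ⟨4 * K * (4 * K ^ 3 + 4 * K ^ 7 * ((1 + lam0 + CV) / lam0)), by positivity,
    fun lam hl ε hε u h hu => ?_⟩
  have hlam : 0 < lam := hl0.trans_le hl
  set C1 := 4 * K * (4 * K ^ 3 + 4 * K ^ 7 * ((1 + lam0 + CV) / lam0)) with hC1
  set z : ℂ := (lam : ℂ) + ε * Complex.I with hz
  obtain ⟨D, hD⟩ : ∃ D, D = 4 * K * (2 * K ^ 3 * (√(1 + lam + CV) + 1 + ((n : ℝ) - 1) / 2)
    + 4 * K ^ 3 * (2 + lam + CV)) := ⟨_, rfl⟩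
  -- the estimate for compactly supported smooth functions
  have step1 : ∀ κ : ℝ, 0 < κ → κ ≤ 1 → ∀ v : SchwartzMap (Euc n) ℂ, HasCompactSupport v →
      lam * ‖jbA hs0 (v.toLp 2 (volume : Measure (Euc n)))‖ ^ 2 ≤ C1 * ‖h‖ ^ 2
      + D * (κ⁻¹ * ‖T ⟨v.toLp 2 (volume : Measure (Euc n)), schwartz_mem hT v⟩
          - z • v.toLp 2 (volume : Measure (Euc n)) - jbA hs0 h‖ ^ 2
        + κ * (‖v.toLp 2 (volume : Measure (Euc n))‖ ^ 2 + ‖h‖ ^ 2)) := by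
    intro κ hκ hκ1 v hvs
    have hv2 : ContDiff ℝ 2 v := v.smooth 2
    have hF := schwartz_T hT v
    obtain ⟨f, hf⟩ : ∃ f : Euc n → ℂ, f = jbA hs0 h := ⟨_, rfl⟩
    obtain ⟨g, hg⟩ : ∃ g : Euc n → ℂ, ∀ x, g x = -lapl v x + V x * v x - z * v x - f x :=
      ⟨_, fun _ => rfl⟩
    have hgae : ((T ⟨v.toLp 2 (volume : Measure (Euc n)), schwartz_mem hT v⟩
          - z • v.toLp 2 (volume : Measure (Euc n)) - jbA hs0 h : L2 n) : Euc n → ℂ) =ᵐ[volume] g := by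
      filter_upwards [hF, v.coeFn_toLp 2 volume,
        Lp.coeFn_smul z (v.toLp 2 (volume : Measure (Euc n))),
        Lp.coeFn_sub (T ⟨v.toLp 2 (volume : Measure (Euc n)), schwartz_mem hT v⟩)
          (z • v.toLp 2 (volume : Measure (Euc n))),
        Lp.coeFn_sub (T ⟨v.toLp 2 (volume : Measure (Euc n)), schwartz_mem hT v⟩
          - z • v.toLp 2 (volume : Measure (Euc n))) (jbA hs0 h)] with x h1 h2 h3 h4 h5
      rw [h5, Pi.sub_apply, h4, Pi.sub_apply, h3, Pi.smul_apply, h1, h2, hg, hf, smul_eq_mul]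
    have Mf : MemLp (fun x => ‖f x‖) 2 := by rw [hf]; exact (Lp.memLp _).norm
    have Mg : MemLp (fun x => ‖g x‖) 2 := ((memLp_congr_ae hgae).1 (Lp.memLp _)).norm
    have hw2 := jbA_weight hs0 h
    have If : Integrable fun x => (1 + ‖x‖ ^ 2) ^ ((1 + γ) / 2) * ‖f x‖ ^ 2 := by
      rw [hf]; exact (L2_sq_int h).congr hw2.symm
    have e1 : ∫ x, (1 + ‖x‖ ^ 2) ^ ((1 + γ) / 2) * ‖f x‖ ^ 2 = ‖h‖ ^ 2 := by
      rw [hf, integral_congr_ae hw2, norm_sq_L2]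
    have e2 : ∫ x, ‖g x‖ ^ 2 = ‖T ⟨v.toLp 2 (volume : Measure (Euc n)), schwartz_mem hT v⟩
          - z • v.toLp 2 (volume : Measure (Euc n)) - jbA hs0 h‖ ^ 2 := by
      rw [norm_sq_L2]
      refine integral_congr_ae ?_
      filter_upwards [hgae] with x hx
      rw [hx]
    have hns : ∀ w : ℂ, ‖w‖ ^ 2 = w.re ^ 2 + w.im ^ 2 := fun w => by
      rw [Complex.sq_norm, Complex.normSq_apply]; ring
    have e3 : ∫ x, ((v x).re ^ 2 + (v x).im ^ 2) = ‖v.toLp 2 (volume : Measure (Euc n))‖ ^ 2 := by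
      rw [norm_sq_L2]
      refine integral_congr_ae ?_
      filter_upwards [v.coeFn_toLp 2 volume] with x hx
      rw [hx, hns]
    have e4 : ∫ x, (1 + ‖x‖ ^ 2) ^ (-((1 + γ) / 2)) * ((v x).re ^ 2 + (v x).im ^ 2)
        = ‖jbA hs0 (v.toLp 2 (volume : Measure (Euc n)))‖ ^ 2 := by
      rw [jbA_norm_sq]
      refine integral_congr_ae ?_
      filter_upwards [v.coeFn_toLp 2 volume] with x hx
      rw [hx, hns]
    have r1 : ∀ x, lapR (fun x => (v x).re) x = (lapl v x).re := fun x => lapR_clm Complex.reCLM hv2 x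
    have r2 : ∀ x, lapR (fun x => (v x).im) x = (lapl v x).im := fun x => lapR_clm Complex.imCLM hv2 x
    have hfin := apriori_real (m := √(1 + lam + CV)) (u1 := fun x => (v x).re) (u2 := fun x => (v x).im)
      (f1 := fun x => (f x).re) (f2 := fun x => (f x).im) (g1 := fun x => (g x).re)
      (g2 := fun x => (g x).im) (fn := fun x => ‖f x‖) (gn := fun x => ‖g x‖) (ε := ε)
      hw hB rfl (by linarith) hs0 hVm hCV hVb hl0 hl (hkey V hV lam hl) hε hκ hκ1
      (Real.sqrt_pos.2 (by linarith)) (Real.sq_sqrt (by linarith))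
      (Complex.reCLM.contDiff.comp hv2) (hvs.comp_left Complex.zero_re)
      (Complex.imCLM.contDiff.comp hv2) (hvs.comp_left Complex.zero_im)
      (fun x => by rw [r1, hg]; simp [hz]; ring) (fun x => by rw [r2, hg]; simp [hz]; ring)
      (fun x => norm_nonneg _) (fun x => hns _) (fun x => norm_nonneg _) (fun x => hns _) Mf Mg If
    rw [e1, e2, e3, e4, ← hD, ← hC1] at hfin
    exact hfin
  -- passage to the domain of `T`
  have step2 : ∀ κ : ℝ, 0 < κ → κ ≤ 1 → lam * ‖jbA hs0 (u : L2 n)‖ ^ 2 ≤ C1 * ‖h‖ ^ 2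
      + D * (κ * (‖(u : L2 n)‖ ^ 2 + ‖h‖ ^ 2)) := by
    intro κ hκ hκ1
    have hc : ∀ k : ℕ, ∃ v : SchwartzMap (Euc n) ℂ, HasCompactSupport v ∧
      ‖v.toLp 2 (volume : Measure (Euc n)) - u‖ < 1 / ((k : ℝ) + 1) ∧
      ‖T ⟨v.toLp 2 (volume : Measure (Euc n)), schwartz_mem hT v⟩ - T u‖ < 1 / ((k : ℝ) + 1) :=
      fun k => exists_core hT hVb hCV u (by positivity)
    choose v hv0 hv1 hv2 using hc
    have t1 : Tendsto (fun k => (v k).toLp 2 (volume : Measure (Euc n))) atTop (𝓝 (u : L2 n)) :=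
      tendsto_iff_norm_sub_tendsto_zero.2 (squeeze_zero (fun _ => norm_nonneg _)
        (fun k => (hv1 k).le) tendsto_one_div_add_atTop_nhds_zero_nat)
    have t2 : Tendsto (fun k => T ⟨(v k).toLp 2 (volume : Measure (Euc n)), schwartz_mem hT (v k)⟩)
        atTop (𝓝 (T u)) :=
      tendsto_iff_norm_sub_tendsto_zero.2 (squeeze_zero (fun _ => norm_nonneg _)
        (fun k => (hv2 k).le) tendsto_one_div_add_atTop_nhds_zero_nat)
    have l1 := (((((jbA hs0).continuous.tendsto _).comp t1).norm.pow 2).const_mul lam)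
    have l2 := ((((((t2.sub (t1.const_smul z)).sub_const (jbA hs0 h)).norm.pow 2).const_mul κ⁻¹).add
      (((t1.norm.pow 2).add_const (‖h‖ ^ 2)).const_mul κ)).const_mul D).const_add (C1 * ‖h‖ ^ 2)
    have := le_of_tendsto_of_tendsto' l1 l2 (fun k => step1 κ hκ hκ1 (v k) (hv0 k))
    rw [hu, add_sub_cancel_left, sub_self] at this
    simpa using this
  have l : Tendsto (fun κ : ℝ => C1 * ‖h‖ ^ 2 + D * (κ * (‖(u : L2 n)‖ ^ 2 + ‖h‖ ^ 2))) (𝓝[>] 0)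
      (𝓝 (C1 * ‖h‖ ^ 2 + D * (0 * (‖(u : L2 n)‖ ^ 2 + ‖h‖ ^ 2)))) :=
    (Continuous.tendsto (by fun_prop) 0).mono_left nhdsWithin_le_nhds
  rw [zero_mul, mul_zero, add_zero] at l
  refine ge_of_tendsto l ?_
  filter_upwards [Ioc_mem_nhdsGT (zero_lt_one' ℝ)] with κ hκ
  exact step2 κ hκ.1 hκ.2

end LAP2

/-! ### Functional calculus and Kato's bound -/

section Kato

variable {n : ℕ} {V : Euc n → ℝ} {T : L2 n →ₗ.[ℂ] L2 n} {fc : (ℝ → ℂ) → (L2 n →L[ℂ] L2 n)}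

/-- The symbol `y ↦ (y - z)⁻¹` of the resolvent. -/
def rz (z : ℂ) : ℝ → ℂ := fun y => ((y : ℂ) - z)⁻¹

lemma rz_measurable (z : ℂ) : Measurable (rz z) := by
  unfold rz; fun_prop

lemma sub_ne_zero_of_im {z : ℂ} (hz : z.im ≠ 0) (y : ℝ) : (y : ℂ) - z ≠ 0 := by
  intro h
  have := congrArg Complex.im h
  simp at this
  exact hz this

lemma rz_norm_le {z : ℂ} (hz : z.im ≠ 0) (y : ℝ) : ‖rz z y‖ ≤ |z.im|⁻¹ := by
  unfold rz
  rw [norm_inv]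
  refine inv_anti₀ (abs_pos.2 hz) ?_
  simpa using Complex.abs_im_le_norm ((y : ℂ) - z)

lemma rz_bdd {z : ℂ} (hz : z.im ≠ 0) : ∃ M, ∀ y, ‖rz z y‖ ≤ M := ⟨_, rz_norm_le hz⟩

lemma fc_rz (hfc : IsBorelFunctionalCalculus T fc) {z : ℂ} (hz : z.im ≠ 0) (u : L2 n) :
    ∃ v : T.domain, (v : L2 n) = fc (rz z) u ∧ T v = z • (v : L2 n) + u :=
  hfc.resolvent z hz u

lemma fc_rz_symm (hT : IsSchrodingerOp V T) (hfc : IsBorelFunctionalCalculus T fc) {z : ℂ}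
    (hz : z.im ≠ 0) (u v : L2 n) :
    inner ℂ (fc (rz z) u) v = inner ℂ u (fc (rz (starRingEnd ℂ z)) v) := by
  obtain ⟨a, ha, hTa⟩ := fc_rz hfc hz u
  obtain ⟨b, hb, hTb⟩ := fc_rz hfc (z := starRingEnd ℂ z) (by simpa using hz) v
  have h := T_symm hT a b
  rw [hTa, hTb, inner_add_left, inner_add_right, inner_smul_left, inner_smul_right] at h
  rw [← ha, ← hb]
  exact (add_left_cancel h).symm

lemma eigen_zero (hT : IsSchrodingerOp V T) {z : ℂ} (hz : z.im ≠ 0) (u : T.domain)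
    (h : T u = z • (u : L2 n)) : (u : L2 n) = 0 := by
  have h1 := T_symm hT u u
  rw [h, inner_smul_left, inner_smul_right] at h1
  by_contra hu
  have h2 : inner ℂ (u : L2 n) (u : L2 n) ≠ 0 := inner_self_ne_zero.2 hu
  have h3 := congrArg Complex.im (mul_right_cancel₀ h2 h1)
  simp at h3
  exact hz (by linarith)

lemma fc_rz_inj (hfc : IsBorelFunctionalCalculus T fc) {z : ℂ}
    (hz : z.im ≠ 0) {u : L2 n} (h : fc (rz z) u = 0) : u = 0 := by
  obtain ⟨a, ha, hTa⟩ := fc_rz hfc hz u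
  rw [h] at ha
  have ha0 : a = 0 := Subtype.ext ha
  rw [ha0] at hTa
  simpa using hTa.symm

lemma fc_comm (hfc : IsBorelFunctionalCalculus T fc) {f g : ℝ → ℂ} (hf : Measurable f)
    (hg : Measurable g) (hfb : ∃ M, ∀ x, ‖f x‖ ≤ M) (hgb : ∃ M, ∀ x, ‖g x‖ ≤ M) (u : L2 n) :
    fc f (fc g u) = fc g (fc f u) := by
  have h1 := hfc.map_mul f g hf hg hfb hgb
  have h2 := hfc.map_mul g f hg hf hgb hfb
  have h3 : (fun x => f x * g x) = fun x => g x * f x := by ext x; ring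
  rw [h3, h2] at h1
  exact (DFunLike.congr_fun h1 u).symm

/-- The laws of the calculus only give additivity; homogeneity on constants follows by comparing
the first resolvent identity for symbols with the one for operators. -/
lemma fc_const (hT : IsSchrodingerOp V T) (hfc : IsBorelFunctionalCalculus T fc) (c : ℂ)
    (u : L2 n) : fc (fun _ => c) u = c • u := by
  obtain ⟨w, hw, hz⟩ : ∃ w : ℂ, w.im ≠ 0 ∧ (w + c).im ≠ 0 := by
    refine ⟨⟨0, |c.im| + 1⟩, ?_, ?_⟩
    · have := abs_nonneg c.im
      simp; positivity
    · have := neg_abs_le c.im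
      simp only [Complex.add_im]
      exact (show (0 : ℝ) < |c.im| + 1 + c.im by linarith).ne'
  set z := w + c with hzdef
  have hcm : Measurable fun _ : ℝ => c := measurable_const
  have hcb : ∃ M, ∀ x : ℝ, ‖(fun _ : ℝ => c) x‖ ≤ M := ⟨‖c‖, fun _ => le_rfl⟩
  have hpb : ∃ M, ∀ x : ℝ, ‖rz z x * rz w x‖ ≤ M :=
    ⟨|z.im|⁻¹ * |w.im|⁻¹, fun x => by
      rw [norm_mul]
      exact mul_le_mul (rz_norm_le hz x) (rz_norm_le hw x) (norm_nonneg _) (by positivity)⟩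
  have hpm : Measurable fun x => rz z x * rz w x := (rz_measurable z).mul (rz_measurable w)
  have hcpb : ∃ M, ∀ x : ℝ, ‖c * (rz z x * rz w x)‖ ≤ M := by
    obtain ⟨M, hM⟩ := hpb
    exact ⟨‖c‖ * M, fun x => by rw [norm_mul]; gcongr; exact hM x⟩
  have hsym : rz z = fun x => rz w x + c * (rz z x * rz w x) := by
    ext x
    have h1 := sub_ne_zero_of_im hz x
    have h2 := sub_ne_zero_of_im hw x
    simp only [rz]
    field_simp
    rw [hzdef]; ring
  have hA : fc (rz z) = fc (rz w) + (fc fun _ => c).comp ((fc (rz z)).comp (fc (rz w))) := by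
    conv_lhs => rw [hsym]
    rw [hfc.map_add _ _ (rz_measurable w) (hpm.const_mul c) (rz_bdd hw) hcpb,
      hfc.map_mul _ _ hcm hpm hcb hpb,
      hfc.map_mul _ _ (rz_measurable z) (rz_measurable w) (rz_bdd hz) (rz_bdd hw)]
  have hB : ∀ v, fc (rz z) v = fc (rz w) v + c • fc (rz w) (fc (rz z) v) := by
    intro v
    obtain ⟨a, ha, hTa⟩ := fc_rz hfc hz v
    obtain ⟨b, hb, hTb⟩ := fc_rz hfc hw v
    obtain ⟨d, hd, hTd⟩ := fc_rz hfc hw (a : L2 n)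
    have h0 := eigen_zero hT hw (a - b - c • d) (by
      rw [LinearPMap.map_sub, LinearPMap.map_sub, LinearPMap.map_smul, hTa, hTb, hTd]
      push_cast
      rw [hzdef]
      module)
    push_cast at h0
    rw [hd, ha, hb] at h0
    rw [← sub_eq_zero, ← h0]
    abel
  have hC : fc (rz z) (fc (rz w) (fc (fun _ => c) u - c • u)) = 0 := by
    have h1 := DFunLike.congr_fun hA u
    simp only [add_apply, ContinuousLinearMap.comp_apply] at h1
    rw [hB u] at h1
    have h2 := add_left_cancel h1
    rw [fc_comm hfc hcm (rz_measurable z) hcb (rz_bdd hz),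
      fc_comm hfc hcm (rz_measurable w) hcb (rz_bdd hw),
      fc_comm hfc (rz_measurable w) (rz_measurable z) (rz_bdd hw) (rz_bdd hz)] at h2
    rw [map_sub, map_sub, ← h2, map_smul, map_smul, sub_self]
  exact sub_eq_zero.1 (fc_rz_inj hfc hw (fc_rz_inj hfc hz hC))

lemma fc_smul (hT : IsSchrodingerOp V T) (hfc : IsBorelFunctionalCalculus T fc) (c : ℂ)
    {f : ℝ → ℂ} (hf : Measurable f) (hfb : ∃ M, ∀ x, ‖f x‖ ≤ M) (u : L2 n) :
    fc (fun x => c * f x) u = c • fc f u := by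
  rw [hfc.map_mul (fun _ => c) f measurable_const hf ⟨‖c‖, fun _ => le_rfl⟩ hfb]
  exact fc_const hT hfc c _

/-- `F ↦ F(G) f` as a bounded linear map on bounded continuous symbols. -/
def fcL (hT : IsSchrodingerOp V T) (hfc : IsBorelFunctionalCalculus T fc) (f : L2 n) :
    BoundedContinuousFunction ℝ ℂ →L[ℂ] L2 n :=
  LinearMap.mkContinuous
    { toFun := fun F => fc F f
      map_add' := fun F G => by
        have := hfc.map_add F G F.continuous.measurable G.continuous.measurable
          ⟨_, F.norm_coe_le_norm⟩ ⟨_, G.norm_coe_le_norm⟩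
        exact DFunLike.congr_fun this f
      map_smul' := fun c F =>
        fc_smul hT hfc c F.continuous.measurable ⟨_, F.norm_coe_le_norm⟩ f } ‖f‖
    (fun F => by
      rw [mul_comm]
      exact (fc F).le_of_opNorm_le (hfc.norm_le F _ F.continuous.measurable F.norm_coe_le_norm) f)

lemma fcL_apply (hT : IsSchrodingerOp V T) (hfc : IsBorelFunctionalCalculus T fc) (f : L2 n)
    (F : BoundedContinuousFunction ℝ ℂ) : fcL hT hfc f F = fc F f := rfl

/-- Kato's smoothness bound: a bound `B` of `⟨x⟩^{-s}R(z*)⟨x⟩^{-s}` gives the bound `(B/|Im z|)^{1/2}`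
of `⟨x⟩^{-s}R(z)`, where `z*` is the complex conjugate of `z`. -/
lemma kato_bound (hT : IsSchrodingerOp V T) (hfc : IsBorelFunctionalCalculus T fc) {s : ℝ}
    (hs0 : 0 ≤ s) {B lam ε : ℝ} (hε : ε ≠ 0) (hB : 0 ≤ B)
    (hlap : ∀ (u : T.domain) (h : L2 n),
      T u = ((lam : ℂ) + ((-ε : ℝ) : ℂ) * Complex.I) • (u : L2 n) + jbA hs0 h →
      ‖jbA hs0 (u : L2 n)‖ ≤ B * ‖h‖) (w : L2 n) :
    |ε| * ‖jbA hs0 (fc (rz ((lam : ℂ) + ε * Complex.I)) w)‖ ^ 2 ≤ B * ‖w‖ ^ 2 := by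
  set z : ℂ := (lam : ℂ) + ε * Complex.I with hz
  have hzi : z.im = ε := by simp [hz]
  have hzc : starRingEnd ℂ z = (lam : ℂ) + ((-ε : ℝ) : ℂ) * Complex.I := by simp [hz]
  have hzn : z.im ≠ 0 := by rwa [hzi]
  set k := jbA hs0 (fc (rz z) w) with hk
  obtain ⟨b, hb, hTb⟩ := fc_rz hfc (z := starRingEnd ℂ z) (by simpa using hzn) (jbA hs0 k)
  have h1 : ‖k‖ ^ 2 ≤ ‖w‖ * ‖(b : L2 n)‖ := by
    have : inner ℂ k k = inner ℂ w (b : L2 n) := by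
      conv_lhs => rw [hk]
      rw [jbA_symm, fc_rz_symm hT hfc hzn, hb]
    have h2 : ‖(inner ℂ k k : ℂ)‖ = ‖k‖ ^ 2 := by
      rw [inner_self_eq_norm_sq_to_K]; simp
    rw [← h2, this]
    exact norm_inner_le_norm _ _
  have h2 : ‖jbA hs0 (b : L2 n)‖ ≤ B * ‖k‖ := hlap b k (by rw [hTb, hzc])
  have h3 : |ε| * ‖(b : L2 n)‖ ^ 2 ≤ ‖jbA hs0 (b : L2 n)‖ * ‖k‖ := by
    have hs := T_symm hT b b
    rw [hTb, inner_add_left, inner_add_right, inner_smul_left, inner_smul_right, ← jbA_symm,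
      jbA_symm, inner_self_eq_norm_sq_to_K] at hs
    have hn : ‖(inner ℂ (jbA hs0 (b : L2 n)) k : ℂ)‖ ≤ ‖jbA hs0 (b : L2 n)‖ * ‖k‖ :=
      norm_inner_le_norm _ _
    have hc : (inner ℂ k (jbA hs0 (b : L2 n)) : ℂ)
      = starRingEnd ℂ (inner ℂ (jbA hs0 (b : L2 n)) k) := (inner_conj_symm _ _).symm
    rw [hc] at hs
    have him := congrArg Complex.im hs
    have e1 : (((‖(b : L2 n)‖ : ℝ) : ℂ) ^ 2) = ((‖(b : L2 n)‖ ^ 2 : ℝ) : ℂ) := by push_cast; rfl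
    have e2 : ((RCLike.ofReal ‖(b : L2 n)‖ : ℂ)) = ((‖(b : L2 n)‖ : ℝ) : ℂ) := rfl
    rw [e2, e1] at him
    simp only [Complex.add_im, Complex.conj_conj, Complex.im_mul_ofReal, Complex.conj_im, hzi]
      at him
    have h4 : (inner ℂ (jbA hs0 (b : L2 n)) k : ℂ).im = ε * ‖(b : L2 n)‖ ^ 2 := by linarith
    have h5 := Complex.abs_im_le_norm (inner ℂ (jbA hs0 (b : L2 n)) k : ℂ)
    rw [h4, abs_mul, abs_of_nonneg (sq_nonneg ‖(b : L2 n)‖)] at h5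
    exact h5.trans hn
  have hbk : |ε| * ‖(b : L2 n)‖ ^ 2 ≤ B * ‖k‖ ^ 2 := by
    refine h3.trans ?_
    rw [sq, ← mul_assoc]
    exact mul_le_mul_of_nonneg_right h2 (norm_nonneg _)
  have hεp : 0 < |ε| := abs_pos.2 hε
  by_cases hk0 : ‖k‖ = 0
  · rw [hk0]; simp only [ne_eq, OfNat.ofNat_ne_zero, not_false_eq_true, zero_pow, mul_zero]
    positivity
  have hkp : 0 < ‖k‖ ^ 2 := by positivity
  refine le_of_mul_le_mul_right ?_ hkp
  have h6 : (‖k‖ ^ 2) ^ 2 ≤ (‖w‖ * ‖(b : L2 n)‖) ^ 2 := by gcongr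
  calc |ε| * ‖k‖ ^ 2 * ‖k‖ ^ 2 = |ε| * (‖k‖ ^ 2) ^ 2 := by ring
    _ ≤ |ε| * (‖w‖ * ‖(b : L2 n)‖) ^ 2 := by gcongr
    _ = ‖w‖ ^ 2 * (|ε| * ‖(b : L2 n)‖ ^ 2) := by ring
    _ ≤ ‖w‖ ^ 2 * (B * ‖k‖ ^ 2) := by gcongr
    _ = B * ‖w‖ ^ 2 * ‖k‖ ^ 2 := by ring

end Kato

/-! ### Fourier transform in time -/

section FourierSide

open scoped FourierTransform

lemma damped_exp_Ioi {ε w t : ℝ} (ht : t ∈ Ioi (0 : ℝ)) :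
    Complex.exp (((-ε : ℝ) + w * Complex.I) * t) =
      ((Real.exp (-ε * |t|) : ℝ) : ℂ) * Complex.exp (((w * t : ℝ) : ℂ) * Complex.I) := by
  rw [abs_of_pos ht, Complex.ofReal_exp, ← Complex.exp_add]
  congr 1; push_cast; ring

lemma damped_exp_Iic {ε w t : ℝ} (ht : t ∈ Iic (0 : ℝ)) :
    Complex.exp (((ε : ℝ) + w * Complex.I) * t) =
      ((Real.exp (-ε * |t|) : ℝ) : ℂ) * Complex.exp (((w * t : ℝ) : ℂ) * Complex.I) := by
  rw [abs_of_nonpos ht, Complex.ofReal_exp, ← Complex.exp_add]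
  congr 1; push_cast; ring

lemma damped_exp_integrable {ε : ℝ} (hε : 0 < ε) (w : ℝ) :
    Integrable (fun t : ℝ =>
      ((Real.exp (-ε * |t|) : ℝ) : ℂ) * Complex.exp (((w * t : ℝ) : ℂ) * Complex.I)) := by
  have h1 := (integrableOn_exp_mul_complex_Ioi (a := (-ε : ℝ) + w * Complex.I)
    (by simpa using hε) 0).congr_fun (fun t ht => damped_exp_Ioi ht) measurableSet_Ioi
  have h2 := (integrableOn_exp_mul_complex_Iic (a := (ε : ℝ) + w * Complex.I)
    (by simpa using hε) 0).congr_fun (fun t ht => damped_exp_Iic ht) measurableSet_Iic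
  have h3 := h2.union h1
  rwa [Iic_union_Ioi, integrableOn_univ] at h3

/-- The Fourier transform of `e^{-ε|t|}` is the Poisson kernel. -/
lemma damped_exp_integral {ε : ℝ} (hε : 0 < ε) (w : ℝ) :
    ∫ t : ℝ, ((Real.exp (-ε * |t|) : ℝ) : ℂ) * Complex.exp (((w * t : ℝ) : ℂ) * Complex.I)
      = 2 * ε * (((w : ℂ) - ε * Complex.I)⁻¹ * ((w : ℂ) + ε * Complex.I)⁻¹) := by
  have hi := damped_exp_integrable hε w
  rw [← integral_add_compl (measurableSet_Iic (a := (0 : ℝ))) hi, compl_Iic,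
    ← setIntegral_congr_fun measurableSet_Iic (fun t ht => damped_exp_Iic ht),
    ← setIntegral_congr_fun measurableSet_Ioi (fun t ht => damped_exp_Ioi ht),
    integral_exp_mul_complex_Iic (by simpa using hε),
    integral_exp_mul_complex_Ioi (by simpa using hε)]
  have e1 : (w : ℂ) - ε * Complex.I ≠ 0 := by
    intro h; have := congrArg Complex.im h; simp at this; exact hε.ne' this
  have e2 : (w : ℂ) + ε * Complex.I ≠ 0 := by
    intro h; have := congrArg Complex.im h; simp at this; exact hε.ne' this
  have f1 : ((ε : ℝ) : ℂ) + w * Complex.I = Complex.I * ((w : ℂ) - ε * Complex.I) := by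
    linear_combination (ε : ℂ) * Complex.I_sq
  have f2 : ((-ε : ℝ) : ℂ) + w * Complex.I = Complex.I * ((w : ℂ) + ε * Complex.I) := by
    push_cast; linear_combination ((-ε : ℂ)) * Complex.I_sq
  rw [f1, f2]
  simp only [Complex.ofReal_zero, mul_zero, Complex.exp_zero]
  have hI := Complex.I_ne_zero
  have hAB : (w : ℂ) + ε * Complex.I - (w - ε * Complex.I) = 2 * ε * Complex.I := by ring
  generalize (w : ℂ) + ε * Complex.I = b at *
  generalize (w : ℂ) - ε * Complex.I = a at *
  field_simp
  linear_combination hAB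

/-- Plancherel's identity for a continuous integrable function with integrable transform. -/
lemma plancherel_cont {H : Type*} [NormedAddCommGroup H] [InnerProductSpace ℂ H] [CompleteSpace H]
    {u : ℝ → H} (hc : Continuous u) (hu : Integrable u) (hF : Integrable (𝓕 u)) :
    ∫ ξ, ‖𝓕 u ξ‖ ^ 2 = ∫ t, ‖u t‖ ^ 2 := by
  have h1 := VectorFourier.integral_sesq_fourierIntegral_eq_neg_flip (innerSL ℂ (E := H))
    (L := innerₗ ℝ) (μ := volume) (ν := volume) Real.continuous_fourierChar continuous_inner hu hF
  have h2 : ∀ t, VectorFourier.fourierIntegral Real.fourierChar volume (-(innerₗ ℝ).flip) (𝓕 u) t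
      = u t := by
    intro t
    have := congrFun (hc.fourierInv_fourier_eq hu hF) t
    rw [← this]
    rw [Real.fourierInv_eq]
    simp [VectorFourier.fourierIntegral]
  simp only [h2] at h1
  have h3 : ∀ x : H, (innerSL ℂ x) x = ((‖x‖ ^ 2 : ℝ) : ℂ) := by
    intro x
    rw [innerSL_apply_apply, inner_self_eq_norm_sq_to_K]; simp
  have h4 : ∫ ξ, ((‖𝓕 u ξ‖ ^ 2 : ℝ) : ℂ) = ∫ t, ((‖u t‖ ^ 2 : ℝ) : ℂ) := by
    simp only [← h3]
    exact h1
  rw [integral_complex_ofReal, integral_complex_ofReal] at h4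
  exact_mod_cast h4

/-- The symbol `e^{ity}φ(y)` as a bounded continuous function of `y`. -/
def propSym (φ : ℝ → ℂ) (hφ : Continuous φ) (M : ℝ) (hM : ∀ y, ‖φ y‖ * (1 + y ^ 2) ≤ M) (t : ℝ) :
    BoundedContinuousFunction ℝ ℂ :=
  BoundedContinuousFunction.ofNormedAddCommGroup
    (fun y : ℝ => Complex.exp (Complex.I * t * y) * φ y) (by fun_prop) M (fun y => by
      have h1 : Complex.I * t * y = ((t * y : ℝ) : ℂ) * Complex.I := by push_cast; ring
      rw [norm_mul, h1, Complex.norm_exp_ofReal_mul_I, one_mul]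
      refine le_trans ?_ (hM y)
      exact le_mul_of_one_le_right (norm_nonneg _) (by nlinarith [sq_nonneg y]))

variable {φ : ℝ → ℂ} {hφ : Continuous φ} {M : ℝ} {hM : ∀ y, ‖φ y‖ * (1 + y ^ 2) ≤ M}

lemma propSym_apply (t y : ℝ) :
    propSym φ hφ M hM t y = Complex.exp (Complex.I * t * y) * φ y := rfl

lemma weight_nonneg (hM : ∀ y, ‖φ y‖ * (1 + y ^ 2) ≤ M) : 0 ≤ M :=
  le_trans (by positivity) (hM 0)

lemma propSym_norm (t : ℝ) : ‖propSym φ hφ M hM t‖ ≤ M :=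
  BoundedContinuousFunction.norm_ofNormedAddCommGroup_le _ (weight_nonneg hM) _

lemma propSym_lipschitz (t r : ℝ) :
    dist (propSym φ hφ M hM t) (propSym φ hφ M hM r) ≤ M * |t - r| := by
  have hM0 := weight_nonneg hM
  rw [BoundedContinuousFunction.dist_le (by positivity)]
  intro y
  rw [propSym_apply, propSym_apply, dist_eq_norm, ← sub_mul, norm_mul]
  have h1 : Complex.exp (Complex.I * t * y) - Complex.exp (Complex.I * r * y)
      = Complex.exp (Complex.I * ((r * y : ℝ) : ℂ)) *
        (Complex.exp (Complex.I * (((t - r) * y : ℝ) : ℂ)) - 1) := by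
    rw [mul_sub, ← Complex.exp_add, mul_one]
    congr 2 <;> push_cast <;> ring
  rw [h1, norm_mul, mul_comm Complex.I ((r * y : ℝ) : ℂ), Complex.norm_exp_ofReal_mul_I, one_mul]
  have h2 := Real.norm_exp_I_mul_ofReal_sub_one_le (x := (t - r) * y)
  refine (mul_le_mul_of_nonneg_right h2 (norm_nonneg _)).trans ?_
  rw [Real.norm_eq_abs, abs_mul]
  have h3 : |y| ≤ 1 + y ^ 2 := by nlinarith [sq_nonneg (|y| - 1), sq_abs y, abs_nonneg y]
  calc |t - r| * |y| * ‖φ y‖ = |t - r| * (‖φ y‖ * |y|) := by ring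
    _ ≤ |t - r| * (‖φ y‖ * (1 + y ^ 2)) := by gcongr
    _ ≤ |t - r| * M := by gcongr; exact hM y
    _ = M * |t - r| := by ring

lemma propSym_continuous : Continuous (propSym φ hφ M hM) := by
  have : LipschitzWith (Real.toNNReal M) (propSym φ hφ M hM) := by
    refine LipschitzWith.of_dist_le_mul fun t r => ?_
    rw [Real.coe_toNNReal _ (weight_nonneg hM), Real.dist_eq]
    exact propSym_lipschitz t r
  exact this.continuous

/-- The damped symbol `e^{-ε|t|}e^{ity}φ(y)`. -/
def dampSym (φ : ℝ → ℂ) (hφ : Continuous φ) (M : ℝ) (hM : ∀ y, ‖φ y‖ * (1 + y ^ 2) ≤ M)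
    (ε t : ℝ) : BoundedContinuousFunction ℝ ℂ :=
  ((Real.exp (-ε * |t|) : ℝ) : ℂ) • propSym φ hφ M hM t

lemma dampSym_continuous (ε : ℝ) : Continuous (dampSym φ hφ M hM ε) := by
  unfold dampSym
  have h : Continuous fun t : ℝ => ((Real.exp (-ε * |t|) : ℝ) : ℂ) := by fun_prop
  exact h.smul propSym_continuous

lemma damp_integrable {ε : ℝ} (hε : 0 < ε) : Integrable (fun t : ℝ => Real.exp (-ε * |t|)) := by
  have := (damped_exp_integrable hε 0).norm
  refine this.congr (Eventually.of_forall fun t => ?_)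
  simp only [norm_mul, Complex.norm_exp_ofReal_mul_I, mul_one, Complex.norm_real,
    Real.norm_of_nonneg (Real.exp_pos _).le]

lemma dampSym_integrable {ε : ℝ} (hε : 0 < ε) : Integrable (dampSym φ hφ M hM ε) := by
  refine ((damp_integrable hε).mul_const M).mono' (dampSym_continuous ε).aestronglyMeasurable
    (Eventually.of_forall fun t => ?_)
  unfold dampSym
  rw [norm_smul, Complex.norm_real, Real.norm_of_nonneg (Real.exp_pos _).le]
  gcongr
  exact propSym_norm t

/-- The Fourier transform of the damped symbol, evaluated at `y`. -/
lemma dampSym_fourier {ε : ℝ} (hε : 0 < ε) (ξ y : ℝ) :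
    (𝓕 (dampSym φ hφ M hM ε) ξ) y = 2 * ε *
      (rz (((2 * π * ξ : ℝ) : ℂ) + ε * Complex.I) y *
        (rz (((2 * π * ξ : ℝ) : ℂ) + ((-ε : ℝ) : ℂ) * Complex.I) y * φ y)) := by
  rw [Real.fourier_real_eq_integral_exp_smul]
  have hInt : Integrable (fun t : ℝ =>
      Complex.exp (((-2 * π * t * ξ : ℝ) : ℂ) * Complex.I) • dampSym φ hφ M hM ε t) := by
    have := (Real.fourierIntegral_convergent_iff (V := ℝ) (μ := volume) (f := dampSym φ hφ M hM ε)
      ξ).2 (dampSym_integrable hε)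
    refine this.congr (Eventually.of_forall fun t => ?_)
    simp only [Circle.smul_def, Real.fourierChar_apply]
    congr 2
    simp
    ring_nf
  have h1 := (BoundedContinuousFunction.evalCLM ℂ (β := ℂ) y).integral_comp_comm hInt
  rw [BoundedContinuousFunction.evalCLM_apply] at h1
  rw [← h1]
  have h2 := damped_exp_integral hε (y - 2 * π * ξ)
  have h3 : ∀ t : ℝ, (BoundedContinuousFunction.evalCLM ℂ (β := ℂ) y)
      (Complex.exp (((-2 * π * t * ξ : ℝ) : ℂ) * Complex.I) • dampSym φ hφ M hM ε t)
      = ((Real.exp (-ε * |t|) : ℝ) : ℂ) *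
        Complex.exp ((((y - 2 * π * ξ) * t : ℝ) : ℂ) * Complex.I) * φ y := by
    intro t
    rw [BoundedContinuousFunction.evalCLM_apply, BoundedContinuousFunction.coe_smul, dampSym,
      BoundedContinuousFunction.coe_smul]
    simp only [smul_eq_mul, propSym_apply]
    have h4 : Complex.exp ((((y - 2 * π * ξ) * t : ℝ) : ℂ) * Complex.I) =
      Complex.exp (((-2 * π * t * ξ : ℝ) : ℂ) * Complex.I) * Complex.exp (Complex.I * t * y) := by
      rw [← Complex.exp_add]; congr 1; push_cast; ring
    rw [h4]; ring
  simp only [h3]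
  rw [integral_mul_const, h2]
  simp only [rz]
  push_cast
  have e1 : (y : ℂ) - 2 * π * ξ - ε * Complex.I = (y : ℂ) - (2 * π * ξ + ε * Complex.I) := by ring
  have e2 : (y : ℂ) - 2 * π * ξ + ε * Complex.I = (y : ℂ) - (2 * π * ξ + -ε * Complex.I) := by ring
  rw [e1, e2]; ring

end FourierSide

/-! ### Smoothing by Plancherel in time -/

section Smoothing

open scoped FourierTransform

variable {n : ℕ} {V : Euc n → ℝ} {T : L2 n →ₗ.[ℂ] L2 n} {fc : (ℝ → ℂ) → (L2 n →L[ℂ] L2 n)}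
variable {φ : ℝ → ℂ} {hφ : Continuous φ} {M : ℝ} {hM : ∀ y, ‖φ y‖ * (1 + y ^ 2) ≤ M}

lemma fourier_clm {E F : Type*} [NormedAddCommGroup E] [NormedSpace ℂ E] [CompleteSpace E]
    [NormedAddCommGroup F] [NormedSpace ℂ F] [CompleteSpace F] (A : E →L[ℂ] F) {u : ℝ → E}
    (hu : Integrable u) (ξ : ℝ) : 𝓕 (fun t => A (u t)) ξ = A (𝓕 u ξ) := by
  rw [Real.fourier_eq, Real.fourier_eq, ← A.integral_comp_comm
    ((Real.fourierIntegral_convergent_iff (V := ℝ) (μ := volume) (f := u) ξ).2 hu)]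
  congr 1
  ext t
  simp only [Circle.smul_def, map_smul]

/-- The symbol of `K(λ)ψ`, where `K(λ) = 2ε R(λ+iε)R(λ-iε)`. -/
def kSym (φ : ℝ → ℂ) (ε lam : ℝ) : ℝ → ℂ := fun y => 2 * ε *
      (rz ((lam : ℂ) + ε * Complex.I) y *
        (rz ((lam : ℂ) + ((-ε : ℝ) : ℂ) * Complex.I) y * φ y))

lemma rz_mul_rz_norm {ε : ℝ} (lam y : ℝ) :
    ‖rz ((lam : ℂ) + ε * Complex.I) y‖ * ‖rz ((lam : ℂ) + ((-ε : ℝ) : ℂ) * Complex.I) y‖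
      = ((y - lam) ^ 2 + ε ^ 2)⁻¹ := by
  rw [← norm_mul, rz, rz, ← mul_inv]
  have : ((y : ℂ) - (lam + ε * Complex.I)) * (y - (lam + ((-ε : ℝ) : ℂ) * Complex.I))
      = (((y - lam) ^ 2 + ε ^ 2 : ℝ) : ℂ) := by
    push_cast
    linear_combination (-(ε : ℂ) ^ 2) * Complex.I_sq
  rw [this, norm_inv, Complex.norm_real, Real.norm_of_nonneg (by positivity)]

lemma kSym_norm_le (hM : ∀ y, ‖φ y‖ * (1 + y ^ 2) ≤ M) {ε : ℝ} (hε : 0 < ε) (lam y : ℝ) :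
    ‖kSym φ ε lam y‖ ≤ 4 * ε * M * (1 + (ε ^ 2)⁻¹) * (1 + lam ^ 2)⁻¹ := by
  have h0 : ‖kSym φ ε lam y‖ = 2 * ε * (((y - lam) ^ 2 + ε ^ 2)⁻¹ * ‖φ y‖) := by
    rw [← rz_mul_rz_norm]
    simp only [kSym, norm_mul, Complex.norm_real, Complex.norm_ofNat, Real.norm_of_nonneg hε.le]
    ring
  have h1 : 1 + lam ^ 2 ≤ 2 * (1 + y ^ 2) * (1 + (y - lam) ^ 2) := by
    nlinarith [sq_nonneg (y - (y - lam)), sq_nonneg (y + (y - lam)), sq_nonneg (y * (y - lam)),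
      sq_nonneg lam, sq_nonneg y]
  have hp : 0 < (y - lam) ^ 2 + ε ^ 2 := by positivity
  have h2 : 1 + (y - lam) ^ 2 ≤ (1 + (ε ^ 2)⁻¹) * ((y - lam) ^ 2 + ε ^ 2) := by
    have : (ε ^ 2)⁻¹ * ε ^ 2 = 1 := inv_mul_cancel₀ (by positivity)
    have h3 : 0 ≤ (ε ^ 2)⁻¹ * (y - lam) ^ 2 := by positivity
    nlinarith [sq_nonneg ε]
  rw [h0, ← div_eq_mul_inv, le_div_iff₀ (by positivity)]
  have hφ0 := norm_nonneg (φ y)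
  calc 2 * ε * (((y - lam) ^ 2 + ε ^ 2)⁻¹ * ‖φ y‖) * (1 + lam ^ 2)
      ≤ 2 * ε * (((y - lam) ^ 2 + ε ^ 2)⁻¹ * ‖φ y‖) * (2 * (1 + y ^ 2) * (1 + (y - lam) ^ 2)) := by
        gcongr
    _ ≤ 2 * ε * (((y - lam) ^ 2 + ε ^ 2)⁻¹ * ‖φ y‖) *
        (2 * (1 + y ^ 2) * ((1 + (ε ^ 2)⁻¹) * ((y - lam) ^ 2 + ε ^ 2))) := by gcongr
    _ = 4 * ε * (‖φ y‖ * (1 + y ^ 2)) * (1 + (ε ^ 2)⁻¹) *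
        (((y - lam) ^ 2 + ε ^ 2)⁻¹ * ((y - lam) ^ 2 + ε ^ 2)) := by ring
    _ ≤ 4 * ε * M * (1 + (ε ^ 2)⁻¹) * (((y - lam) ^ 2 + ε ^ 2)⁻¹ * ((y - lam) ^ 2 + ε ^ 2)) := by
        gcongr; exact hM y
    _ = _ := by rw [inv_mul_cancel₀ hp.ne', mul_one]

lemma dampSym_fourier_coe {ε : ℝ} (hε : 0 < ε) (ξ : ℝ) :
    ⇑(𝓕 (dampSym φ hφ M hM ε) ξ) = kSym φ ε (2 * π * ξ) := by
  ext y; exact dampSym_fourier hε ξ y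

lemma dampSym_fourier_integrable {ε : ℝ} (hε : 0 < ε) :
    Integrable (𝓕 (dampSym φ hφ M hM ε)) := by
  have hM0 := weight_nonneg hM
  have hc : Continuous (𝓕 (dampSym φ hφ M hM ε)) :=
    VectorFourier.fourierIntegral_continuous Real.continuous_fourierChar continuous_inner
      (dampSym_integrable hε)
  refine (integrable_inv_one_add_sq.const_mul (4 * ε * M * (1 + (ε ^ 2)⁻¹))).mono'
    hc.aestronglyMeasurable (Eventually.of_forall fun ξ => ?_)
  rw [BoundedContinuousFunction.norm_le (by positivity)]
  intro y
  rw [dampSym_fourier_coe hε]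
  refine (kSym_norm_le hM hε _ y).trans ?_
  have : ξ ^ 2 ≤ (2 * π * ξ) ^ 2 := by
    rw [mul_pow]
    refine le_mul_of_one_le_left (sq_nonneg _) ?_
    nlinarith [Real.pi_gt_three]
  gcongr

lemma fc_kSym (hT : IsSchrodingerOp V T) (hfc : IsBorelFunctionalCalculus T fc)
    (hφ : Continuous φ) (hM : ∀ y, ‖φ y‖ * (1 + y ^ 2) ≤ M) {ε : ℝ} (hε : 0 < ε) (lam : ℝ)
    (f : L2 n) :
    fc (kSym φ ε lam) f = ((2 * ε : ℝ) : ℂ) • fc (rz ((lam : ℂ) + ε * Complex.I))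
      (fc (rz ((lam : ℂ) + ((-ε : ℝ) : ℂ) * Complex.I)) (fc φ f)) := by
  have hi1 : ((lam : ℂ) + ε * Complex.I).im ≠ 0 := by simpa using hε.ne'
  have hi2 : ((lam : ℂ) + ((-ε : ℝ) : ℂ) * Complex.I).im ≠ 0 := by simpa using hε.ne'
  have hφb : ∃ M, ∀ y, ‖φ y‖ ≤ M := ⟨M, fun y => le_trans
    (le_mul_of_one_le_right (norm_nonneg _) (by nlinarith [sq_nonneg y])) (hM y)⟩
  have bmul : ∀ {p q : ℝ → ℂ}, (∃ M, ∀ y, ‖p y‖ ≤ M) → (∃ M, ∀ y, ‖q y‖ ≤ M) →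
      ∃ M, ∀ y, ‖p y * q y‖ ≤ M := by
    rintro p q ⟨A, hA⟩ ⟨B, hB⟩
    exact ⟨A * B, fun y => by
      rw [norm_mul]
      exact mul_le_mul (hA y) (hB y) (norm_nonneg _) ((norm_nonneg _).trans (hA y))⟩
  have hm1 := (rz_measurable ((lam : ℂ) + ((-ε : ℝ) : ℂ) * Complex.I)).mul hφ.measurable
  have hb1 := bmul (rz_bdd hi2) hφb
  have hm2 := (rz_measurable ((lam : ℂ) + ε * Complex.I)).mul hm1
  have hb2 := bmul (rz_bdd hi1) hb1
  have e : kSym φ ε lam = fun y => ((2 * ε : ℝ) : ℂ) * (rz ((lam : ℂ) + ε * Complex.I) y *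
        (rz ((lam : ℂ) + ((-ε : ℝ) : ℂ) * Complex.I) y * φ y)) := by
    ext y; simp [kSym]
  rw [e]
  refine (fc_smul hT hfc _ hm2 hb2 f).trans ?_
  congr 1
  have e1 := hfc.map_mul _ _ (rz_measurable ((lam : ℂ) + ε * Complex.I)) hm1 (rz_bdd hi1) hb1
  have e2 := hfc.map_mul _ _ (rz_measurable ((lam : ℂ) + ((-ε : ℝ) : ℂ) * Complex.I))
    hφ.measurable (rz_bdd hi2) hφb
  have e3 := DFunLike.congr_fun e1 f
  have e4 := DFunLike.congr_fun e2 f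
  simp only [ContinuousLinearMap.comp_apply] at e3 e4
  refine e3.trans ?_
  rw [← e4]
  rfl

lemma inner_kSym (hT : IsSchrodingerOp V T) (hfc : IsBorelFunctionalCalculus T fc)
    (hφ : Continuous φ) (hM : ∀ y, ‖φ y‖ * (1 + y ^ 2) ≤ M) {ε : ℝ} (hε : 0 < ε) (lam : ℝ)
    (f : L2 n) :
    inner ℂ (fc φ f) (fc (kSym φ ε lam) f) =
      ((2 * ε * ‖fc (rz ((lam : ℂ) + ((-ε : ℝ) : ℂ) * Complex.I)) (fc φ f)‖ ^ 2 : ℝ) : ℂ) := by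
  have hi2 : ((lam : ℂ) + ((-ε : ℝ) : ℂ) * Complex.I).im ≠ 0 := by simpa using hε.ne'
  rw [fc_kSym hT hfc hφ hM hε, inner_smul_right]
  have h1 := fc_rz_symm hT hfc hi2 (fc φ f)
    (fc (rz ((lam : ℂ) + ((-ε : ℝ) : ℂ) * Complex.I)) (fc φ f))
  have e : starRingEnd ℂ ((lam : ℂ) + ((-ε : ℝ) : ℂ) * Complex.I) = (lam : ℂ) + ε * Complex.I := by
    simp
  rw [e] at h1
  rw [← h1, inner_self_eq_norm_sq_to_K]
  simp

/-- By Plancherel in `t`, a pointwise bound of `‖⟨x⟩^{-s}K(λ)ψ(G)f‖²` by the spectral density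
`⟨K(λ)ψ(G)f, ψ(G)f⟩` integrates to a damped smoothing estimate. -/
lemma damped_smoothing (hT : IsSchrodingerOp V T) (hfc : IsBorelFunctionalCalculus T fc)
    (hφ : Continuous φ) (hM : ∀ y, ‖φ y‖ * (1 + y ^ 2) ≤ M) {s : ℝ} (hs0 : 0 ≤ s)
    {ε c : ℝ} (hε : 0 < ε) (f : L2 n)
    (hK : ∀ lam : ℝ, ‖jbA hs0 (fc (kSym φ ε lam) f)‖ ^ 2 ≤
      c * (2 * ε * ‖fc (rz ((lam : ℂ) + ((-ε : ℝ) : ℂ) * Complex.I)) (fc φ f)‖ ^ 2)) :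
    ∫⁻ t, ENNReal.ofReal (Real.exp (-ε * |t|) ^ 2 *
      ‖jbA hs0 (fc (propSym φ hφ M hM t) f)‖ ^ 2) ≤ ENNReal.ofReal (c * ‖fc φ f‖ ^ 2) := by
  have hM0 := weight_nonneg hM
  set L := fcL hT hfc f with hL
  set u : ℝ → L2 n := fun t => L (dampSym φ hφ M hM ε t) with hu
  have huc : Continuous u := L.continuous.comp (dampSym_continuous ε)
  have hui : Integrable u := L.integrable_comp (dampSym_integrable hε)
  have hFu : ∀ ξ, 𝓕 u ξ = fc (kSym φ ε (2 * π * ξ)) f := fun ξ => by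
    rw [hu, fourier_clm L (dampSym_integrable hε), hL, fcL_apply, dampSym_fourier_coe hε]
  have hFui : Integrable (𝓕 u) := by
    have : 𝓕 u = fun ξ => L (𝓕 (dampSym φ hφ M hM ε) ξ) := by
      ext1 ξ; exact fourier_clm L (dampSym_integrable hε) ξ
    rw [this]
    exact L.integrable_comp (dampSym_fourier_integrable hε)
  set A : L2 n →L[ℂ] L2 n := jbA hs0 with hA
  have hFA : ∀ ξ, 𝓕 (fun t => A (u t)) ξ = A (𝓕 u ξ) := fourier_clm A hui
  have hFAi : Integrable (𝓕 (fun t => A (u t))) := by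
    have : 𝓕 (fun t => A (u t)) = fun ξ => A (𝓕 u ξ) := funext hFA
    rw [this]
    exact A.integrable_comp hFui
  have hP := plancherel_cont (A.continuous.comp huc) (A.integrable_comp hui) hFAi
  have hu0 : u 0 = fc φ f := by
    rw [hu, hL]
    simp only [fcL_apply]
    congr 2
    ext y
    simp [dampSym, propSym_apply]
  have hInt : ∫ ξ, 𝓕 u ξ = fc φ f := by
    have := congrFun (huc.fourierInv_fourier_eq hui hFui) 0
    rw [Real.fourierInv_eq, hu0] at this
    exact Eq.trans (integral_congr_ae (Eventually.of_forall fun ξ => by simp)) this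
  have hdi : Integrable fun ξ => (2 * ε *
      ‖fc (rz (((2 * π * ξ : ℝ) : ℂ) + ((-ε : ℝ) : ℂ) * Complex.I)) (fc φ f)‖ ^ 2 : ℝ) := by
    have h1 := ((innerSL ℂ (fc φ f)).integrable_comp hFui).re
    refine h1.congr (Eventually.of_forall fun ξ => ?_)
    simp only [innerSL_apply_apply, hFu, inner_kSym hT hfc hφ hM hε]
    exact Complex.ofReal_re _
  have hdens : ∫ ξ, (2 * ε *
      ‖fc (rz (((2 * π * ξ : ℝ) : ℂ) + ((-ε : ℝ) : ℂ) * Complex.I)) (fc φ f)‖ ^ 2 : ℝ)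
      = ‖fc φ f‖ ^ 2 := by
    have h1 := (innerSL ℂ (fc φ f)).integral_comp_comm hFui
    rw [hInt, innerSL_apply_apply, inner_self_eq_norm_sq_to_K] at h1
    simp only [innerSL_apply_apply, hFu, inner_kSym hT hfc hφ hM hε] at h1
    rw [integral_complex_ofReal] at h1
    exact Complex.ofReal_injective (h1.trans (by push_cast; rfl))
  have hle : ∫ t, ‖A (u t)‖ ^ 2 ≤ c * ‖fc φ f‖ ^ 2 := by
    refine (le_of_eq hP.symm).trans ?_
    rw [← hdens, ← integral_const_mul]
    refine integral_mono_of_nonneg (Eventually.of_forall fun ξ => by positivity)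
      (hdi.const_mul c) (Eventually.of_forall fun ξ => ?_)
    have := hK (2 * π * ξ)
    rw [← hFu] at this
    show ‖𝓕 (fun t => A (u t)) ξ‖ ^ 2 ≤ _
    rw [hFA]
    exact this
  have hut : ∀ t, ‖A (u t)‖ = Real.exp (-ε * |t|) * ‖A (fc (propSym φ hφ M hM t) f)‖ := by
    intro t
    rw [hu]
    simp only [dampSym, map_smul, norm_smul]
    rw [Complex.norm_real, Real.norm_of_nonneg (Real.exp_pos _).le, hL, fcL_apply]
  have hAi : Integrable fun t => ‖A (u t)‖ ^ 2 := by
    have hb : ∀ t, ‖A (u t)‖ ≤ ‖A‖ * ‖L‖ * M := by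
      intro t
      calc ‖A (u t)‖ ≤ ‖A‖ * (‖L‖ * ‖dampSym φ hφ M hM ε t‖) :=
            (A.le_opNorm _).trans (by gcongr; exact L.le_opNorm _)
        _ ≤ ‖A‖ * (‖L‖ * M) := by
            gcongr
            rw [dampSym, norm_smul, Complex.norm_real, Real.norm_of_nonneg (Real.exp_pos _).le]
            refine (mul_le_of_le_one_left (norm_nonneg _) ?_).trans (propSym_norm t)
            rw [Real.exp_le_one_iff]
            have := mul_nonneg hε.le (abs_nonneg t)
            linarith
        _ = _ := by ring
    refine ((A.integrable_comp hui).norm.const_mul (‖A‖ * ‖L‖ * M)).mono'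
      ((A.continuous.comp huc).norm.pow 2).aestronglyMeasurable (Eventually.of_forall fun t => ?_)
    rw [Real.norm_of_nonneg (by positivity), sq]
    exact mul_le_mul_of_nonneg_right (hb t) (norm_nonneg _)
  have hfin := ENNReal.ofReal_le_ofReal hle
  rw [ofReal_integral_eq_lintegral_ofReal hAi (Eventually.of_forall fun t => by positivity)] at hfin
  refine le_trans (le_of_eq ?_) hfin
  congr 1
  ext t
  rw [hut, mul_pow]

end Smoothing

/-! ### Proof of the estimate -/

section Assembly

variable {n : ℕ} {V : Euc n → ℝ} {T : L2 n →ₗ.[ℂ] L2 n} {fc : (ℝ → ℂ) → (L2 n →L[ℂ] L2 n)}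
variable {φ : ℝ → ℂ} {hφ : Continuous φ} {M : ℝ} {hM : ∀ y, ‖φ y‖ * (1 + y ^ 2) ≤ M}

/-- Away from the support of the cutoff, `R(z)` acts on the range of `φ(G)` as a bounded operator
uniformly in `Im z`. -/
lemma resolvent_off_support (hfc : IsBorelFunctionalCalculus T fc)
    (hφ : Continuous φ) (hM : ∀ y, ‖φ y‖ * (1 + y ^ 2) ≤ M) {b ε lam : ℝ} (hb : 0 < b)
    (hε : 0 < ε) (hsupp : ∀ y < b, φ y = 0) (hlam : lam < b / 2) (f : L2 n) :
    ‖fc (rz ((lam : ℂ) + ε * Complex.I))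
      (fc (rz ((lam : ℂ) + ((-ε : ℝ) : ℂ) * Complex.I)) (fc φ f))‖ ≤
    2 / b * ‖fc (rz ((lam : ℂ) + ((-ε : ℝ) : ℂ) * Complex.I)) (fc φ f)‖ := by
  set z : ℂ := (lam : ℂ) + ε * Complex.I with hz
  set z' : ℂ := (lam : ℂ) + ((-ε : ℝ) : ℂ) * Complex.I with hz'
  have hi1 : z.im ≠ 0 := by simpa [hz] using hε.ne'
  have hi2 : z'.im ≠ 0 := by simpa [hz'] using hε.ne'
  have hφb : ∃ M, ∀ y, ‖φ y‖ ≤ M := ⟨M, fun y => le_trans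
    (le_mul_of_one_le_right (norm_nonneg _) (by nlinarith [sq_nonneg y])) (hM y)⟩
  have hqb : ∃ M, ∀ y, ‖rz z' y * φ y‖ ≤ M := by
    obtain ⟨B, hB⟩ := hφb
    exact ⟨|z'.im|⁻¹ * B, fun y => by
      rw [norm_mul]
      exact mul_le_mul (rz_norm_le hi2 y) (hB y) (norm_nonneg _) (by positivity)⟩
  have hqm : Measurable fun y => rz z' y * φ y := (rz_measurable z').mul hφ.measurable
  set r : ℝ → ℂ := (Ici b).indicator (rz z) with hr
  have hrm : Measurable r := (rz_measurable z).indicator measurableSet_Ici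
  have hrb : ∀ y, ‖r y‖ ≤ 2 / b := by
    intro y
    rw [hr]
    by_cases hy : y ∈ Ici b
    · rw [indicator_of_mem hy, rz, norm_inv, ← inv_div]
      refine inv_anti₀ (by positivity) ?_
      have h1 := Complex.abs_re_le_norm ((y : ℂ) - z)
      have h2 : ((y : ℂ) - z).re = y - lam := by simp [hz]
      rw [h2] at h1
      have h3 : b ≤ y := hy
      linarith [le_abs_self (y - lam)]
    · rw [indicator_of_notMem hy, norm_zero]; positivity
  have hsym : (fun y => rz z y * (rz z' y * φ y)) = fun y => r y * (rz z' y * φ y) := by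
    ext y
    by_cases hy : y ∈ Ici b
    · rw [hr, indicator_of_mem hy]
    · rw [hsupp y (not_le.1 hy)]; simp
  have e1 := hfc.map_mul _ _ (rz_measurable z) hqm (rz_bdd hi1) hqb
  have e2 := hfc.map_mul _ _ hrm hqm ⟨_, hrb⟩ hqb
  have e3 := hfc.map_mul _ _ (rz_measurable z') hφ.measurable (rz_bdd hi2) hφb
  rw [hsym, e2, e3] at e1
  have e4 := DFunLike.congr_fun e1 f
  simp only [ContinuousLinearMap.comp_apply] at e4
  rw [← e4]
  exact (fc r).le_of_opNorm_le (hfc.norm_le r _ hrm hrb) _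

/-- For `λ ≥ b/2` this is Kato's bound; for `λ < b/2` the spectral parameter stays away from the
support of the cutoff, and the factor `ε` is small. -/
lemma kSym_pointwise (hT : IsSchrodingerOp V T) (hfc : IsBorelFunctionalCalculus T fc)
    (hφ : Continuous φ) (hM : ∀ y, ‖φ y‖ * (1 + y ^ 2) ≤ M) {s : ℝ} (hs0 : 0 ≤ s)
    {b ε c B : ℝ} (hb : 0 < b) (hε : 0 < ε) (hsupp : ∀ y < b, φ y = 0) (hB : 0 ≤ B)
    (hlap : ∀ lam, b / 2 ≤ lam → ∀ (u : T.domain) (h : L2 n),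
      T u = ((lam : ℂ) + ((-ε : ℝ) : ℂ) * Complex.I) • (u : L2 n) + jbA hs0 h →
      ‖jbA hs0 (u : L2 n)‖ ≤ B * ‖h‖)
    (hc1 : 2 * B ≤ c) (hc2 : 8 * ε / b ^ 2 ≤ c) (f : L2 n) (lam : ℝ) :
    ‖jbA hs0 (fc (kSym φ ε lam) f)‖ ^ 2 ≤
      c * (2 * ε * ‖fc (rz ((lam : ℂ) + ((-ε : ℝ) : ℂ) * Complex.I)) (fc φ f)‖ ^ 2) := by
  rw [fc_kSym hT hfc hφ hM hε, map_smul, norm_smul, Complex.norm_real,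
    Real.norm_of_nonneg (by positivity), mul_pow]
  rcases lt_or_ge lam (b / 2) with hl | hl
  · have h1 := resolvent_off_support hfc hφ hM hb hε hsupp hl f
    set w := fc (rz ((lam : ℂ) + ((-ε : ℝ) : ℂ) * Complex.I)) (fc φ f)
    have h2 := (jbA_norm_le hs0 (fc (rz ((lam : ℂ) + ε * Complex.I)) w)).trans h1
    calc (2 * ε) ^ 2 * ‖jbA hs0 (fc (rz ((lam : ℂ) + ε * Complex.I)) w)‖ ^ 2
        ≤ (2 * ε) ^ 2 * (2 / b * ‖w‖) ^ 2 := by gcongr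
      _ = 8 * ε / b ^ 2 * (2 * ε * ‖w‖ ^ 2) := by field_simp; ring
      _ ≤ c * (2 * ε * ‖w‖ ^ 2) := by gcongr
  · have h1 := kato_bound hT hfc hs0 hε.ne' hB (hlap lam hl)
      (fc (rz ((lam : ℂ) + ((-ε : ℝ) : ℂ) * Complex.I)) (fc φ f))
    set w := fc (rz ((lam : ℂ) + ((-ε : ℝ) : ℂ) * Complex.I)) (fc φ f)
    rw [abs_of_pos hε] at h1
    calc (2 * ε) ^ 2 * ‖jbA hs0 (fc (rz ((lam : ℂ) + ε * Complex.I)) w)‖ ^ 2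
        = 4 * ε * (ε * ‖jbA hs0 (fc (rz ((lam : ℂ) + ε * Complex.I)) w)‖ ^ 2) := by ring
      _ ≤ 4 * ε * (B * ‖w‖ ^ 2) := by gcongr
      _ = 2 * B * (2 * ε * ‖w‖ ^ 2) := by ring
      _ ≤ c * (2 * ε * ‖w‖ ^ 2) := by gcongr

/-- Letting the damping tend to zero. -/
lemma undamp {F : ℝ → ℝ} (hF : Continuous F) {ε₀ : ℝ} (hε₀ : 0 < ε₀)
    {D : ENNReal} (h : ∀ ε, 0 < ε → ε ≤ ε₀ →
      ∫⁻ t, ENNReal.ofReal (Real.exp (-ε * |t|) ^ 2 * F t) ≤ D) :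
    ∫⁻ t, ENNReal.ofReal (F t) ≤ D := by
  set e : ℕ → ℝ := fun k => ε₀ / (k + 1) with he
  have he0 : Tendsto e atTop (𝓝 0) := by
    have := (tendsto_one_div_add_atTop_nhds_zero_nat (𝕜 := ℝ)).const_mul ε₀
    simpa [he, div_eq_mul_inv] using this
  have hm : ∀ k, Measurable fun t => ENNReal.ofReal (Real.exp (-e k * |t|) ^ 2 * F t) := by
    intro k
    have := hF.measurable
    fun_prop
  have h1 := lintegral_liminf_le (u := atTop) (μ := volume) hm
  have h2 : ∀ t, liminf (fun k => ENNReal.ofReal (Real.exp (-e k * |t|) ^ 2 * F t)) atTop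
      = ENNReal.ofReal (F t) := by
    intro t
    refine Tendsto.liminf_eq (ENNReal.tendsto_ofReal ?_)
    have hc : Continuous fun x : ℝ => Real.exp (-x * |t|) ^ 2 * F t := by fun_prop
    have := (hc.tendsto 0).comp he0
    simpa [Function.comp_def] using this
  simp only [h2] at h1
  refine h1.trans ?_
  have h3 : ∀ k, ∫⁻ t, ENNReal.ofReal (Real.exp (-e k * |t|) ^ 2 * F t) ≤ D := fun k =>
    h (e k) (by simp only [he]; positivity) (by
      simp only [he]
      exact div_le_self hε₀.le (by linarith [Nat.cast_nonneg (α := ℝ) k]))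
  calc _ ≤ liminf (fun _ : ℕ => D) atTop := liminf_le_liminf (Eventually.of_forall h3)
    _ = D := liminf_const D

lemma cutoff_support {ψ : ℝ → ℝ} (hψ : IsCutoff ψ) : ∃ a, 0 < a ∧ ∀ y < a, ψ y = 0 := by
  rcases (tsupport ψ).eq_empty_or_nonempty with h | h
  · refine ⟨1, one_pos, fun y _ => ?_⟩
    exact image_eq_zero_of_notMem_tsupport (by rw [h]; exact notMem_empty y)
  · obtain ⟨a, ha, hmin⟩ := hψ.2.1.isCompact.exists_isLeast h
    exact ⟨a, hψ.2.2 ha, fun y hy =>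
      image_eq_zero_of_notMem_tsupport fun hmem => absurd (hmin hmem) (not_le.2 hy)⟩

lemma weighted_eLpNorm_le {s s' : ℝ} (hs' : 0 ≤ s') (hss : s' ≤ s) (u : L2 n) :
    (eLpNorm (fun x => ((jb x ^ (-s) : ℝ) : ℂ) * (u : Euc n → ℂ) x) 2 volume) ^ 2 ≤
      ENNReal.ofReal (‖jbA hs' u‖ ^ 2) := by
  have h1 : eLpNorm (fun x => ((jb x ^ (-s) : ℝ) : ℂ) * (u : Euc n → ℂ) x) 2 volume
      ≤ eLpNorm (jbA hs' u : Euc n → ℂ) 2 volume := by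
    refine eLpNorm_mono_ae ?_
    filter_upwards [jbA_coe hs' u] with x hx
    rw [hx, norm_mul, norm_mul, Complex.norm_real, Complex.norm_real]
    refine mul_le_mul_of_nonneg_right ?_ (norm_nonneg _)
    rw [Real.norm_of_nonneg (Real.rpow_nonneg (jb_pos x).le _),
      Real.norm_of_nonneg (Real.rpow_nonneg (jb_pos x).le _)]
    exact Real.rpow_le_rpow_of_exponent_le (one_le_jb x) (by linarith)
  rw [ENNReal.ofReal_pow (norm_nonneg _), ofReal_norm, Lp.enorm_def]
  gcongr

end Assembly

/-- **Proposition 3.2.** For every `s > 1/2`,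
`∫_{ℝ} ‖⟨x⟩^{-s} e^{itG} ψ(h²G) f‖²_{L²} dt ≤ C h ‖f‖²_{L²}`. -/
theorem smoothing_estimate
    (n : ℕ) (hn : 4 ≤ n) (V : Euc n → ℝ) (hVmeas : Measurable V)
    (C₀ δ : ℝ) (hC₀ : 0 < C₀) (hδ : ((n : ℝ) + 2) / 2 < δ)
    (hV : ∀ x, |V x| ≤ C₀ * jb x ^ (-δ))
    (T : L2 n →ₗ.[ℂ] L2 n) (hT : IsSchrodingerOp V T)
    (fc : (ℝ → ℂ) → (L2 n →L[ℂ] L2 n)) (hfc : IsBorelFunctionalCalculus T fc)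
    (ψ : ℝ → ℝ) (hψ : IsCutoff ψ) (s : ℝ) (hs : 1 / 2 < s) :
    ∃ C : ℝ, 0 < C ∧ ∀ h : ℝ, 0 < h → h ≤ 1 → ∀ f : L2 n,
      (∫⁻ t : ℝ,
        (eLpNorm
          (fun x => (jb x ^ (-s) : ℝ) *
            (fc (fun y : ℝ => Complex.exp (Complex.I * t * y) * ((ψ (h ^ 2 * y) : ℝ) : ℂ))
              f : Euc n → ℂ) x) 2 volume) ^ 2)
      ≤ ENNReal.ofReal (C * h * ‖f‖ ^ 2) := by
  obtain ⟨a, ha, hsupp⟩ := cutoff_support hψ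
  obtain ⟨m, hm⟩ := hψ.1.continuous.bounded_above_of_compact_support hψ.2.1
  have hm0 : 0 ≤ m := (norm_nonneg _).trans (hm 0)
  -- `⟨x⟩^{-s}` decreases as `s` grows, so the exponent may be replaced by `min s (3/4)`
  set s' : ℝ := min s (3 / 4) with hs'
  have hs'1 : 1 / 2 < s' := lt_min hs (by norm_num)
  have hs'2 : s' ≤ 3 / 4 := min_le_right _ _
  have hs'3 : s' ≤ s := min_le_left _ _
  have hs0 : 0 ≤ s' := by linarith
  have hVsq : ∀ x, V x ^ 2 ≤ C₀ ^ 2 * (1 + ‖x‖ ^ 2) ^ (-3 : ℝ) := by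
    intro x
    have hN : (4 : ℝ) ≤ n := by exact_mod_cast hn
    have h1 : V x ^ 2 ≤ (C₀ * jb x ^ (-δ)) ^ 2 := by
      rw [← sq_abs]
      exact pow_le_pow_left₀ (abs_nonneg _) (hV x) 2
    rw [mul_pow, jb_rpow] at h1
    refine h1.trans (mul_le_mul_of_nonneg_left ?_ (sq_nonneg _))
    refine Real.rpow_le_rpow_of_exponent_le ?_ (by linarith)
    linarith [sq_nonneg ‖x‖]
  obtain ⟨C, hC, hlap⟩ := lap_bound hn hVmeas hT hC₀.le hVsq (γ := 2 * s' - 1) (lam0 := a / 2)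
    (by linarith) (by linarith) (by linarith) (s := s') (by ring) hs0
  set B : ℝ := √(2 * C / a) with hBdef
  have hB0 : 0 ≤ B := Real.sqrt_nonneg _
  refine ⟨(2 * B + 1) * (m ^ 2 + 1), by positivity, fun h hh hh1 f => ?_⟩
  set φ : ℝ → ℂ := fun y => ((ψ (h ^ 2 * y) : ℝ) : ℂ) with hφdef
  have hφ : Continuous φ := by
    have := hψ.1.continuous
    fun_prop
  have hh2 : 0 < h ^ 2 := by positivity
  have hφc : HasCompactSupport φ := by
    have h1 : HasCompactSupport fun y : ℝ => ψ (h ^ 2 * y) := by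
      simpa [smul_eq_mul] using hψ.2.1.comp_smul (c := h ^ 2) hh2.ne'
    exact h1.comp_left (g := fun r : ℝ => (r : ℂ)) (by simp)
  obtain ⟨M, hMb⟩ := (hφ.mul (by fun_prop : Continuous fun y : ℝ => ((1 + y ^ 2 : ℝ) : ℂ))
    ).bounded_above_of_compact_support hφc.mul_right
  have hM : ∀ y, ‖φ y‖ * (1 + y ^ 2) ≤ M := fun y => by
    have := hMb y
    have h1 : ‖((1 + y ^ 2 : ℝ) : ℂ)‖ = 1 + y ^ 2 := by
      rw [Complex.norm_real, Real.norm_of_nonneg (by positivity)]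
    rwa [Pi.mul_apply, norm_mul, h1] at this
  set b : ℝ := a / h ^ 2 with hbdef
  have hab : a ≤ b := by
    rw [hbdef, le_div_iff₀ hh2]
    exact mul_le_of_le_one_right ha.le (pow_le_one₀ hh.le hh1)
  have hb : 0 < b := ha.trans_le hab
  have hφs : ∀ y < b, φ y = 0 := by
    intro y hy
    rw [hbdef, lt_div_iff₀ hh2] at hy
    simp only [hφdef]
    rw [hsupp (h ^ 2 * y) (by linarith)]
    simp
  have hgn : ‖fc φ f‖ ≤ m * ‖f‖ := by
    refine (fc φ).le_of_opNorm_le (hfc.norm_le φ m hφ.measurable fun y => ?_) f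
    simp only [hφdef, Complex.norm_real]
    exact hm _
  have hmain : ∀ ε, 0 < ε → ε ≤ min 1 (a ^ 2 * h / 8) →
      ∫⁻ t, ENNReal.ofReal (Real.exp (-ε * |t|) ^ 2 *
        ‖jbA hs0 (fc (propSym φ hφ M hM t) f)‖ ^ 2) ≤
      ENNReal.ofReal ((2 * B + 1) * (m ^ 2 + 1) * h * ‖f‖ ^ 2) := by
    intro ε hε hε1
    have hε2 : ε ≤ 1 := hε1.trans (min_le_left _ _)
    have hε3 : ε ≤ a ^ 2 * h / 8 := hε1.trans (min_le_right _ _)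
    refine (damped_smoothing hT hfc hφ hM hs0 hε f (c := (2 * B + 1) * h)
      (kSym_pointwise hT hfc hφ hM hs0 hb hε hφs (B := B * h) (by positivity) ?_ ?_ ?_ f)).trans ?_
    · intro lam hl u k hu
      have h1 := hlap lam ((by linarith : a / 2 ≤ b / 2).trans hl) (-ε)
        (by rw [abs_neg, abs_of_pos hε]; exact hε2) u k hu
      refine abs_le_of_sq_le_sq' ?_ (by positivity) |>.2
      have h2 : b / 2 * ‖jbA hs0 (u : L2 n)‖ ^ 2 ≤ C * ‖k‖ ^ 2 :=
        (mul_le_mul_of_nonneg_right hl (sq_nonneg _)).trans h1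
      have hBsq : B ^ 2 = 2 * C / a := Real.sq_sqrt (by positivity)
      rw [mul_pow, mul_pow, hBsq]
      have h3 : 2 * C / a * h ^ 2 * ‖k‖ ^ 2 = (C * ‖k‖ ^ 2) / (b / 2) := by
        rw [hbdef]; field_simp
      rw [h3, le_div_iff₀ (by positivity)]
      linarith
    · nlinarith
    · rw [div_le_iff₀ (by positivity)]
      have h4 : a ^ 2 ≤ b ^ 2 := by gcongr
      calc 8 * ε ≤ h * a ^ 2 := by linarith
        _ ≤ h * b ^ 2 := by gcongr
        _ ≤ (2 * B + 1) * h * b ^ 2 := by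
          gcongr
          nlinarith
    · refine ENNReal.ofReal_le_ofReal ?_
      have h5 : ‖fc φ f‖ ^ 2 ≤ (m ^ 2 + 1) * ‖f‖ ^ 2 := by
        refine (pow_le_pow_left₀ (norm_nonneg _) hgn 2).trans ?_
        rw [mul_pow]
        gcongr
        linarith
      calc (2 * B + 1) * h * ‖fc φ f‖ ^ 2 ≤ (2 * B + 1) * h * ((m ^ 2 + 1) * ‖f‖ ^ 2) := by gcongr
        _ = _ := by ring
  have hFc : Continuous fun t => ‖jbA hs0 (fc (propSym φ hφ M hM t) f)‖ ^ 2 :=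
    ((jbA hs0).continuous.comp
      ((fcL hT hfc f).continuous.comp propSym_continuous)).norm.pow 2
  refine le_trans (lintegral_mono fun t => ?_)
    (undamp hFc (lt_min one_pos (by positivity)) hmain)
  exact weighted_eLpNorm_le hs0 hs'3 _
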